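/- arXiv:1707.09550 — 2 statements merged into one kernel-verified Lean document; each statement's English description precedes it below -/
import Mathlib

section
/- Let j ≥ 3 be an integer and consider the (2j+1)-st order dispersive equation ∂_t u + γ₀∂_x^{2j+1}u + γ₁∂_x^{2j−1}u + ⋯ + γ_{j−1}∂_x³u + γ_j∂_x u = N(∂_x³u,∂_x²u,∂_xu,u) on the torus, where γ₀,…,γ_j ∈ ℝ and γ₀ ≠ 0. Let φ ∈ H^{13}(𝕋) be real-valued with φ ∉ C^∞(𝕋) and P_N(φ) < 0. Then for every T > 0 there does not exist any real-valued solution u ∈ C([0,T]; H^{13}(𝕋)) (solving the equation in the sense of distributions) on [0,T]×𝕋 with u(0,·) = φ. -/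
/- (2j+1)-st order dispersive equations on the torus: non-existence of H^{13} solutions
   forward in time when P_N(φ) < 0 and φ is not smooth. -/

namespace FifthOrderStmt5

/-- Fourier coefficient of a `2π`-periodic function `f : ℝ → ℝ`:
`f̂(k) = (1/2π) ∫_0^{2π} f(x) e^{-ikx} dx`. -/
noncomputable def fc (f : ℝ → ℝ) (k : ℤ) : ℂ :=
  (Complex.ofReal (2 * Real.pi))⁻¹ *
    ∫ x in (0:ℝ)..(2 * Real.pi), (f x : ℂ) * Complex.exp (-Complex.I * (k : ℂ) * (x : ℂ))

/-- Sobolev norm `‖f‖_{H^s} = (Σ_k (1+k²)^s |f̂(k)|²)^{1/2}`. -/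
noncomputable def hsNorm (s : ℕ) (f : ℝ → ℝ) : ℝ :=
  Real.sqrt (∑' k : ℤ, (1 + (k : ℝ) ^ 2) ^ s * ‖fc f k‖ ^ 2)

/-- `f` belongs to `H^s(𝕋)` (continuous representative, `2π`-periodic, finite `H^s` norm). -/
def MemHs (s : ℕ) (f : ℝ → ℝ) : Prop :=
  Continuous f ∧ Function.Periodic f (2 * Real.pi) ∧
    Summable (fun k : ℤ => (1 + (k : ℝ) ^ 2) ^ s * ‖fc f k‖ ^ 2)

/-- The nonlinearity `N(∂_x³f, ∂_x²f, ∂_xf, f) = Σ_j λ_j (∂_x³f)^{a_j}(∂_x²f)^{b_j}(∂_xf)^{c_j}f^{d_j}`. -/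
noncomputable def Nfun (j0 : ℕ) (lam : Fin j0 → ℝ) (a b c d : Fin j0 → ℕ)
    (f : ℝ → ℝ) (x : ℝ) : ℝ :=
  ∑ j : Fin j0, lam j * (iteratedDeriv 3 f x) ^ (a j) * (iteratedDeriv 2 f x) ^ (b j) *
    (deriv f x) ^ (c j) * (f x) ^ (d j)

/-- The functional `P_N(f) = Σ_j (λ_j b_j / 2π) ∫_𝕋 (∂_x³f)^{a_j}(∂_x²f)^{b_j-1}(∂_xf)^{c_j}f^{d_j} dx`. -/
noncomputable def PN (j0 : ℕ) (lam : Fin j0 → ℝ) (a b c d : Fin j0 → ℕ) (f : ℝ → ℝ) : ℝ :=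
  ∑ j : Fin j0, (lam j * (b j : ℝ) / (2 * Real.pi)) *
    ∫ x in (0:ℝ)..(2 * Real.pi),
      (iteratedDeriv 3 f x) ^ (a j) * (iteratedDeriv 2 f x) ^ (b j - 1) *
        (deriv f x) ^ (c j) * (f x) ^ (d j)

/-- `u` is a (distributional) solution of the `(2j+1)`-st order dispersive equation
`∂_t u + γ₀∂_x^{2j+1}u + γ₁∂_x^{2j-1}u + ⋯ + γ_{j-1}∂_x³u + γ_j∂_x u = N(∂_x³u,∂_x²u,∂_xu,u)`
on `[T₁,T₂] × 𝕋` (all spatial derivatives in the linear part have odd order, so integration by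
parts puts a `+` sign on each term applied to the test function). -/
def IsSolutionH (jj : ℕ) (γ : ℕ → ℝ) (j0 : ℕ) (lam : Fin j0 → ℝ) (a b c d : Fin j0 → ℕ)
    (T1 T2 : ℝ) (u : ℝ → ℝ → ℝ) : Prop :=
  (∀ t ∈ Set.Icc T1 T2, ContDiff ℝ 3 (u t) ∧ Function.Periodic (u t) (2 * Real.pi)) ∧
  ∀ ψ : ℝ → ℝ → ℝ, ContDiff ℝ (⊤ : ℕ∞) (Function.uncurry ψ) →
    (∀ t : ℝ, Function.Periodic (ψ t) (2 * Real.pi)) →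
    (∀ t : ℝ, t ∉ Set.Ioo T1 T2 → ∀ x : ℝ, ψ t x = 0) →
    (∫ t in T1..T2, ∫ x in (0:ℝ)..(2 * Real.pi),
      (u t x * (deriv (fun τ : ℝ => ψ τ x) t
        + ∑ i ∈ Finset.range (jj + 1), γ i * iteratedDeriv (2 * (jj - i) + 1) (ψ t) x)
      + Nfun j0 lam a b c d (u t) x * ψ t x)) = 0

/-- `t ↦ u(t)` is continuous from `A` into `H^s(𝕋)`. -/
def ContInHs (s : ℕ) (A : Set ℝ) (u : ℝ → ℝ → ℝ) : Prop :=
  ∀ t₀ ∈ A, ∀ ε > 0, ∃ δ > 0, ∀ t ∈ A, |t - t₀| < δ →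
    hsNorm s (fun x => u t x - u t₀ x) < ε
/-! Suppose that the Fourier modes of the solution are `w_k = O(|k|^{-s})`. Expanding the
nonlinearity around the truncation of `u` to frequencies up to `|k|^{1/2}` gives

  `w_k' = -i q_k w_k + κ_k w_k + ∑ g_m w_{k-m} + O(|k|^{1-s})`, the sum over `0 < |m| ≲ |k|^{1/2}`,

where `q` is the dispersion relation: the quadratic Taylor remainder is small because both of its
factors live at frequencies above `|k|^{1/2}`. As the odd-order parts of `κ_k` are imaginary and its
second-order part is close to `-k² P_N(u)`, we have `Re κ_k ≥ σ k²` with `σ > 0` while `P_N(u) < 0`: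
the equation is parabolic backwards in time. Since `j ≥ 3`, the phases `q_k` and `q_{k-m}` are
`≳ |k|^{2j}` apart while `g_m = O(|k|³)`, so a normal form transformation removes the sum.
Integrating backwards over a time interval of fixed length then improves the decay to
`w_k = O(|k|^{-s-1})` on a slightly shorter time interval. Iterating, `u(0)` is smooth. -/

section Polynomial

open MvPolynomial

variable {ι K R : Type*}

section Algebra

variable [CommSemiring K] [CommSemiring R] [Algebra K R]

theorem aeval_pderiv_mul_X_mul [DecidableEq ι] (p : MvPolynomial ι K) (i l : ι) (a b : ι → R) :
    aeval a (pderiv l (p * X i)) * b l =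
      aeval a (pderiv l p) * b l * a i + if l = i then aeval a p * b i else 0 := by
  rw [Derivation.leibniz, pderiv_X]
  obtain rfl | hl := eq_or_ne l i
  · simp only [Pi.single_eq_same, smul_eq_mul, mul_one, map_add, map_mul, aeval_X, if_true]
    ring
  · simp only [Pi.single_apply, hl.symm, smul_eq_mul, mul_zero, zero_add, map_mul, aeval_X, hl,
      if_false, add_zero]
    ring

theorem exists_taylor_two [Fintype ι] (P : MvPolynomial ι K) :
    ∃ Q : ι → ι → MvPolynomial (ι ⊕ ι) K,
      ∀ (S : Type*) [CommSemiring S] [Algebra K S] (a b : ι → S),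
        aeval (a + b) P = aeval a P + ∑ l, aeval a (pderiv l P) * b l +
          ∑ l, ∑ l', b l * b l' * aeval (Sum.elim a b) (Q l l') := by
  classical
  induction P using MvPolynomial.induction_on with
  | C c => exact ⟨0, fun S _ _ a b => by simp⟩
  | add p q hp hq =>
    obtain ⟨Q₁, h₁⟩ := hp
    obtain ⟨Q₂, h₂⟩ := hq
    refine ⟨Q₁ + Q₂, fun S _ _ a b => ?_⟩
    simp only [map_add, h₁, h₂, Pi.add_apply, add_mul, mul_add, Finset.sum_add_distrib]
    ring
  | mul_X p i hp =>
    obtain ⟨Q, h⟩ := hp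
    refine ⟨fun l l' => (if l' = i then rename Sum.inl (pderiv l p) else 0) +
      Q l l' * (X (Sum.inl i) + X (Sum.inr i)), fun S _ _ a b => ?_⟩
    have hremainder (l l' : ι) : b l * b l' * aeval (Sum.elim a b)
        ((if l' = i then rename Sum.inl (pderiv l p) else 0) +
          Q l l' * (X (Sum.inl i) + X (Sum.inr i))) =
        (if l' = i then aeval a (pderiv l p) * b l * b i else 0) +
          b l * b l' * aeval (Sum.elim a b) (Q l l') * (a i + b i) := by
      obtain rfl | hl := eq_or_ne l' i
      · simp only [if_true, map_add, map_mul, aeval_rename, aeval_X, Sum.elim_comp_inl,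
          Sum.elim_inl, Sum.elim_inr]
        ring
      · simp only [hl, if_false, map_add, map_mul, aeval_X, Sum.elim_inl, Sum.elim_inr, map_zero]
        ring
    simp only [aeval_pderiv_mul_X_mul, hremainder, Finset.sum_add_distrib, Finset.sum_ite_eq',
      Finset.mem_univ, if_true, ← Finset.sum_mul, map_mul, aeval_X, h S a b, Pi.add_apply]
    ring

theorem star_aeval [StarRing K] [TrivialStar K] [StarRing R] [StarModule K R]
    (P : MvPolynomial ι K) {v : ι → R} (hv : ∀ l, star (v l) = v l) :
    star (aeval v P) = aeval v P := by
  induction P using MvPolynomial.induction_on with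
  | C c => rw [aeval_C, ← algebraMap_star_comm, star_trivial]
  | add p q hp hq => rw [map_add, star_add, hp, hq]
  | mul_X p i hp => rw [map_mul, star_mul, aeval_X, hp, hv, mul_comm]

theorem continuous_aeval [TopologicalSpace R] [IsTopologicalSemiring R] (P : MvPolynomial ι K) :
    Continuous fun v : ι → R => aeval v P := by
  simp only [aeval_def, eval₂_eq]
  fun_prop

end Algebra

theorem hasDerivAt_aeval [Fintype ι] [NontriviallyNormedField K] [NormedCommRing R]
    [NormedAlgebra K R] (P : MvPolynomial ι K) {v : K → ι → R} {v' : ι → R} {t : K}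
    (hv : ∀ l, HasDerivAt (fun τ => v τ l) (v' l) t) :
    HasDerivAt (fun τ => aeval (v τ) P) (∑ l, aeval (v t) (pderiv l P) * v' l) t := by
  classical
  induction P using MvPolynomial.induction_on with
  | C c => simpa using hasDerivAt_const t (algebraMap K R c)
  | add p q hp hq =>
    simp only [map_add, add_mul, Finset.sum_add_distrib]
    exact hp.add hq
  | mul_X p i hp =>
    simp only [aeval_pderiv_mul_X_mul, Finset.sum_add_distrib, Finset.sum_ite_eq',
      Finset.mem_univ, if_true, ← Finset.sum_mul, map_mul, aeval_X]
    exact hp.mul (hv i)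

end Polynomial

section FourierCoefficients

variable {T : ℝ} [hT : Fact (0 < T)]

theorem integrable_fourier_smul (f : C(AddCircle T, ℂ)) (k : ℤ) :
    MeasureTheory.Integrable (fun x => fourier (-k) x • f x) AddCircle.haarAddCircle := by
  have h : Continuous fun x => fourier (-k) x • f x := by fun_prop
  exact h.integrable_of_hasCompactSupport (HasCompactSupport.of_compactSpace _)

/-- The `k`-th Fourier coefficient, as a continuous linear functional on continuous functions. -/
noncomputable def coef (k : ℤ) : C(AddCircle T, ℂ) →L[ℂ] ℂ :=
  LinearMap.mkContinuous
    { toFun := fun f => fourierCoeff f k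
      map_add' := fun f g => by
        simp only [fourierCoeff, ContinuousMap.add_apply, smul_add]
        exact MeasureTheory.integral_add (integrable_fourier_smul f k) (integrable_fourier_smul g k)
      map_smul' := fun c f => fourierCoeff.const_smul f c k } 1
    (fun f => by
      refine (MeasureTheory.norm_integral_le_of_norm_le_const (C := ‖f‖)
        (Filter.Eventually.of_forall fun x => ?_)).trans (by simp)
      rw [norm_smul, fourier_apply, Circle.norm_coe, one_mul]
      exact f.norm_coe_le_norm x)

theorem coef_apply (k : ℤ) (f : C(AddCircle T, ℂ)) : coef k f = fourierCoeff f k := rfl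

theorem coef_fourier (k m : ℤ) :
    coef k (fourier m : C(AddCircle T, ℂ)) = if k = m then 1 else 0 := by
  rw [coef_apply, fourierCoeff_fourier, Pi.single_apply]

theorem coef_algebraMap (k : ℤ) (c : ℝ) :
    coef k (algebraMap ℝ C(AddCircle T, ℂ) c) = if k = 0 then (c : ℂ) else 0 := by
  have h : algebraMap ℝ C(AddCircle T, ℂ) c = (c : ℂ) • (fourier 0 : C(AddCircle T, ℂ)) := by
    ext x; simp
  rw [h, map_smul, coef_fourier, smul_eq_mul, mul_ite, mul_one, mul_zero]

theorem coef_fourier_mul (k m : ℤ) (g : C(AddCircle T, ℂ)) :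
    coef k (fourier m * g) = coef (k - m) g := by
  simp only [coef_apply, fourierCoeff, ContinuousMap.mul_apply, smul_eq_mul, ← mul_assoc,
    ← fourier_add]
  ring_nf

theorem coef_star (k : ℤ) (f : C(AddCircle T, ℂ)) :
    coef k (star f) = starRingEnd ℂ (coef (-k) f) := by
  simp only [coef_apply, fourierCoeff, neg_neg, smul_eq_mul, ← integral_conj, map_mul,
    ← fourier_neg, ContinuousMap.star_apply]
  rfl

theorem coef_zero_im {f : C(AddCircle T, ℂ)} (hf : star f = f) : (coef 0 f).im = 0 := by
  have h := coef_star 0 f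
  rw [hf, neg_zero] at h
  exact Complex.conj_eq_iff_im.mp h.symm

theorem hasSum_coef_smul_fourier {f : C(AddCircle T, ℂ)} (hf : Summable fun m => ‖coef m f‖) :
    HasSum (fun m => coef m f • (fourier m : C(AddCircle T, ℂ))) f :=
  hasSum_fourier_series_of_summable hf.of_norm

theorem hasSum_coef_mul {f : C(AddCircle T, ℂ)} (hf : Summable fun m => ‖coef m f‖)
    (g : C(AddCircle T, ℂ)) (k : ℤ) :
    HasSum (fun m => coef m f * coef (k - m) g) (coef k (f * g)) := by
  have h := ((hasSum_coef_smul_fourier hf).mul_right g).mapL (coef k)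
  simpa [smul_mul_assoc, coef_fourier_mul] using h

theorem norm_le_tsum_norm_coef {f : C(AddCircle T, ℂ)} (hf : Summable fun m => ‖coef m f‖) :
    ‖f‖ ≤ ∑' m, ‖coef m f‖ := by
  have hterm (m : ℤ) : ‖coef m f • (fourier m : C(AddCircle T, ℂ))‖ = ‖coef m f‖ := by
    rw [norm_smul, fourier_norm, mul_one]
  have h := norm_tsum_le_tsum_norm (f := fun m => coef m f • (fourier m : C(AddCircle T, ℂ)))
    (by simpa only [hterm] using hf)
  simpa only [hterm, (hasSum_coef_smul_fourier hf).tsum_eq] using h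

end FourierCoefficients

theorem hasSum_convolution {G : Type*} [AddGroup G] {a b : G → ℝ} (ha : Summable a)
    (hb : Summable b) (ha0 : 0 ≤ a) (hb0 : 0 ≤ b) :
    HasSum (fun k => ∑' m, a m * b (k - m)) ((∑' m, a m) * ∑' m, b m) := by
  have hsummable : Summable fun p : G × G => a p.1 * b p.2 := ha.mul_of_nonneg hb ha0 hb0
  have hprod : HasSum (fun p : G × G => a p.1 * b p.2) ((∑' m, a m) * ∑' m, b m) := by
    rw [ha.tsum_mul_tsum hb hsummable]
    exact hsummable.hasSum
  let e : G × G ≃ G × G :=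
    { toFun := fun p => (p.2, p.1 - p.2)
      invFun := fun p => (p.2 + p.1, p.1)
      left_inv := fun p => by simp
      right_inv := fun p => by simp }
  have hshear : HasSum (fun p : G × G => a p.2 * b (p.1 - p.2)) ((∑' m, a m) * ∑' m, b m) :=
    e.hasSum_iff.mpr hprod
  exact hshear.prod_fiberwise fun k => (hshear.summable.prod_factor k).hasSum

theorem one_add_pow_mul_le {r : ℕ} {A B x y z F G : ℝ} (hx : 0 ≤ x) (hF : 0 ≤ F) (hG : 0 ≤ G)
    (hA : (1 + y) ^ r * F ≤ A) (hB : (1 + z) ^ r * G ≤ B) (hA0 : 0 ≤ A) (hB0 : 0 ≤ B)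
    (hxyz : x ≤ y + z) : (1 + x) ^ r * (F * G) ≤ 2 ^ r * (A * G + B * F) := by
  wlog hyz : z ≤ y generalizing y z F G A B
  · rw [mul_comm F, add_comm (A * G)]
    exact this hG hF hB hA hB0 hA0 (by linarith) (by linarith)
  have hpow : (1 + x) ^ r ≤ 2 ^ r * (1 + y) ^ r := by
    rw [← mul_pow]
    gcongr
    linarith
  calc _ ≤ 2 ^ r * (1 + y) ^ r * (F * G) := by gcongr
    _ = 2 ^ r * (((1 + y) ^ r * F) * G) := by ring
    _ ≤ 2 ^ r * (A * G) := by gcongr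
    _ ≤ _ := by
      gcongr
      exact le_add_of_nonneg_right (by positivity)

/-- The sequence `w` is at most `A (1 + |k|) ^ (-r)`. -/
def DecayBound (r : ℕ) (A : ℝ) (w : ℤ → ℂ) : Prop :=
  ∀ k : ℤ, (1 + |(k : ℝ)|) ^ r * ‖w k‖ ≤ A

namespace DecayBound

variable {r r' : ℕ} {A : ℝ} {v w : ℤ → ℂ}

theorem nonneg (hw : DecayBound r A w) : 0 ≤ A :=
  le_trans (by positivity) (hw 0)

theorem of_norm_le (hw : DecayBound r A w) (h : ∀ k, ‖v k‖ ≤ ‖w k‖) : DecayBound r A v :=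
  fun k => (mul_le_mul_of_nonneg_left (h k) (by positivity)).trans (hw k)

theorem of_le (hw : DecayBound r A w) (hr : r' ≤ r) : DecayBound r' A w := fun k =>
  (mul_le_mul_of_nonneg_right (pow_le_pow_right₀ (by linarith [abs_nonneg (k : ℝ)]) hr)
    (norm_nonneg _)).trans (hw k)

end DecayBound

theorem summable_inv_one_add_abs_sq : Summable fun k : ℤ => ((1 + |(k : ℝ)|) ^ 2)⁻¹ := by
  refine Summable.of_norm_bounded_eventually
    (g := fun k : ℤ => |(k : ℝ)| ^ (-2 : ℝ)) (Real.summable_abs_int_rpow (by norm_num)) ?_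
  filter_upwards [(Set.finite_singleton (0 : ℤ)).compl_mem_cofinite] with k hk
  have hk0 : 0 < |(k : ℝ)| := abs_pos.mpr (mod_cast hk)
  rw [Real.norm_of_nonneg (by positivity), Real.rpow_neg hk0.le, Real.rpow_two]
  gcongr
  linarith

/-- The sum of `(1 + |k|) ^ (-2)` over the integers. -/
noncomputable def weightSum : ℝ := ∑' k : ℤ, ((1 + |(k : ℝ)|) ^ 2)⁻¹

theorem weightSum_nonneg : 0 ≤ weightSum := tsum_nonneg fun _ => by positivity

namespace DecayBound

variable {A : ℝ} {w : ℤ → ℂ}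

theorem norm_le_mul_inv (hw : DecayBound 2 A w) (k : ℤ) :
    ‖w k‖ ≤ A * ((1 + |(k : ℝ)|) ^ 2)⁻¹ := by
  rw [← div_eq_mul_inv, le_div_iff₀ (by positivity), mul_comm]
  exact hw k

theorem summable_norm (hw : DecayBound 2 A w) : Summable fun k => ‖w k‖ :=
  Summable.of_nonneg_of_le (fun _ => norm_nonneg _) hw.norm_le_mul_inv
    (summable_inv_one_add_abs_sq.mul_left A)

theorem tsum_norm_le (hw : DecayBound 2 A w) : ∑' k, ‖w k‖ ≤ A * weightSum := by
  rw [weightSum, ← tsum_mul_left]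
  exact hw.summable_norm.tsum_le_tsum hw.norm_le_mul_inv (summable_inv_one_add_abs_sq.mul_left A)

end DecayBound

section Tame

variable {T : ℝ} [hT : Fact (0 < T)]

/-- `f` has absolutely summable Fourier coefficients, with sum at most `α`, which decay like
`A (1 + |k|) ^ (-r)`. Products obey tame estimates in these two constants: `A` only ever meets
`α`. -/
structure Tame (r : ℕ) (A α : ℝ) (f : C(AddCircle T, ℂ)) : Prop where
  summable : Summable fun m => ‖coef m f‖
  tsum_le : ∑' m, ‖coef m f‖ ≤ α
  decayBound : DecayBound r A (coef · f)

namespace Tame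

variable {r r' : ℕ} {A B α β : ℝ} {f g : C(AddCircle T, ℂ)}

theorem nonneg_left (hf : Tame r A α f) : 0 ≤ A := hf.decayBound.nonneg

theorem nonneg_right (hf : Tame r A α f) : 0 ≤ α :=
  (tsum_nonneg fun _ => norm_nonneg _).trans hf.tsum_le

theorem of_norm_coef_le (hf : Tame r A α f) (h : ∀ k, ‖coef k g‖ ≤ ‖coef k f‖) : Tame r A α g :=
  have hs := Summable.of_nonneg_of_le (fun _ => norm_nonneg _) h hf.summable
  ⟨hs, (hs.tsum_le_tsum h hf.summable).trans hf.tsum_le, hf.decayBound.of_norm_le h⟩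

theorem of_le (hf : Tame r A α f) (hr : r' ≤ r) : Tame r' A α f :=
  ⟨hf.summable, hf.tsum_le, hf.decayBound.of_le hr⟩

theorem of_decayBound (hf : DecayBound r A (coef · f)) (hf₂ : DecayBound 2 B (coef · f)) :
    Tame r A (B * weightSum) f :=
  ⟨hf₂.summable_norm, hf₂.tsum_norm_le, hf⟩

theorem norm_le (hf : Tame r A α f) : ‖f‖ ≤ α :=
  (norm_le_tsum_norm_coef hf.summable).trans hf.tsum_le

theorem sum_norm_coef_le (hf : Tame r A α f) (s : Finset ℤ) : ∑ m ∈ s, ‖coef m f‖ ≤ α :=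
  (hf.summable.sum_le_tsum s fun _ _ => norm_nonneg _).trans hf.tsum_le

theorem norm_coef_le (hf : Tame r A α f) (k : ℤ) : ‖coef k f‖ ≤ α := by
  simpa only [Finset.sum_singleton] using hf.sum_norm_coef_le {k}

theorem add (hf : Tame r A α f) (hg : Tame r B β g) : Tame r (A + B) (α + β) (f + g) := by
  have h (k : ℤ) : ‖coef k (f + g)‖ ≤ ‖coef k f‖ + ‖coef k g‖ := by
    rw [map_add]
    exact norm_add_le _ _
  have hs := Summable.of_nonneg_of_le (fun _ => norm_nonneg _) h (hf.summable.add hg.summable)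
  refine ⟨hs, ?_, fun k => ?_⟩
  · refine (hs.tsum_le_tsum h (hf.summable.add hg.summable)).trans ?_
    rw [hf.summable.tsum_add hg.summable]
    exact add_le_add hf.tsum_le hg.tsum_le
  · refine (mul_le_mul_of_nonneg_left (h k) (by positivity)).trans ?_
    rw [mul_add]
    exact add_le_add (hf.decayBound k) (hg.decayBound k)

theorem summable_norm_coef_mul (hf : Tame r A α f) (hg : Tame r B β g) (k : ℤ) :
    Summable fun m => ‖coef m f‖ * ‖coef (k - m) g‖ :=
  Summable.of_nonneg_of_le (fun _ => by positivity)
    (fun m => mul_le_mul_of_nonneg_left (hg.norm_coef_le _) (norm_nonneg _))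
    (hf.summable.mul_right β)

theorem norm_coef_mul_le (hf : Tame r A α f) (hg : Tame r B β g) (k : ℤ) :
    ‖coef k (f * g)‖ ≤ ∑' m, ‖coef m f‖ * ‖coef (k - m) g‖ := by
  have hs : Summable fun m => ‖coef m f * coef (k - m) g‖ := by
    simpa only [norm_mul] using hf.summable_norm_coef_mul hg k
  simpa only [(hasSum_coef_mul hf.summable g k).tsum_eq, norm_mul] using norm_tsum_le_tsum_norm hs

theorem weight_mul_norm_coef_le (hf : Tame r A α f) (hg : Tame r B β g) (k m : ℤ) :
    (1 + |(k : ℝ)|) ^ r * (‖coef m f‖ * ‖coef (k - m) g‖) ≤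
      2 ^ r * (A * ‖coef (k - m) g‖ + B * ‖coef m f‖) := by
  refine one_add_pow_mul_le (abs_nonneg _) (norm_nonneg _) (norm_nonneg _) (hf.decayBound m)
    (hg.decayBound (k - m)) hf.nonneg_left hg.nonneg_left ?_
  simpa using abs_add_le (m : ℝ) ((k - m : ℤ) : ℝ)

theorem decayBound_mul (hf : Tame r A α f) (hg : Tame r B β g) :
    DecayBound r (2 ^ r * (A * β + B * α)) (coef · (f * g)) := fun k => by
  have hA := hf.nonneg_left
  have hB := hg.nonneg_left
  have hs := hf.summable_norm_coef_mul hg k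
  have hf' := hf.summable.mul_left B
  have hg' : Summable fun m => A * ‖coef (k - m) g‖ :=
    ((Equiv.subLeft k).summable_iff.mpr hg.summable).mul_left A
  have hshift : ∑' m, ‖coef (k - m) g‖ = ∑' m, ‖coef m g‖ :=
    (Equiv.subLeft k).tsum_eq fun m => ‖coef m g‖
  calc _ ≤ (1 + |(k : ℝ)|) ^ r * ∑' m, ‖coef m f‖ * ‖coef (k - m) g‖ := by
          gcongr
          exact hf.norm_coef_mul_le hg k
    _ = ∑' m, (1 + |(k : ℝ)|) ^ r * (‖coef m f‖ * ‖coef (k - m) g‖) := tsum_mul_left.symm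
    _ ≤ ∑' m, 2 ^ r * (A * ‖coef (k - m) g‖ + B * ‖coef m f‖) :=
          (hs.mul_left _).tsum_le_tsum (hf.weight_mul_norm_coef_le hg k)
            ((hg'.add hf').mul_left _)
    _ = 2 ^ r * (A * (∑' m, ‖coef m g‖) + B * ∑' m, ‖coef m f‖) := by
          rw [tsum_mul_left, hg'.tsum_add hf', tsum_mul_left, tsum_mul_left, hshift]
    _ ≤ _ := by
          gcongr
          exacts [hg.tsum_le, hf.tsum_le]

theorem mul (hf : Tame r A α f) (hg : Tame r B β g) :
    Tame r (2 ^ r * (A * β + B * α)) (α * β) (f * g) := by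
  have hconv := hasSum_convolution hf.summable hg.summable (fun _ => norm_nonneg _)
    fun _ => norm_nonneg _
  have hle := hf.norm_coef_mul_le hg
  have hs := Summable.of_nonneg_of_le (fun _ => norm_nonneg _) hle hconv.summable
  refine ⟨hs, ?_, hf.decayBound_mul hg⟩
  calc _ ≤ _ := hs.tsum_le_tsum hle hconv.summable
    _ = _ := hconv.tsum_eq
    _ ≤ _ := mul_le_mul hf.tsum_le hg.tsum_le (tsum_nonneg fun _ => norm_nonneg _) hf.nonneg_right

theorem of_algebraMap (c : ℝ) : Tame r |c| |c| (algebraMap ℝ C(AddCircle T, ℂ) c) := by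
  have h (k : ℤ) : ‖coef k (algebraMap ℝ C(AddCircle T, ℂ) c)‖ =
      if k = 0 then |c| else 0 := by
    rw [coef_algebraMap, apply_ite norm, Complex.norm_real, Real.norm_eq_abs, norm_zero]
  have hs : HasSum (fun k : ℤ => ‖coef k (algebraMap ℝ C(AddCircle T, ℂ) c)‖) |c| := by
    simpa only [h] using hasSum_ite_eq (0 : ℤ) |c|
  refine ⟨hs.summable, hs.tsum_eq.le, fun k => ?_⟩
  rw [h]
  split_ifs with hk <;> simp [hk]

theorem exists_aeval {ι : Type*} (P : MvPolynomial ι ℝ) (r : ℕ) (A α : ℝ) :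
    ∃ A' α', ∀ v : ι → C(AddCircle T, ℂ), (∀ i, Tame r A α (v i)) →
      Tame r A' α' (MvPolynomial.aeval v P) := by
  induction P using MvPolynomial.induction_on with
  | C c => exact ⟨|c|, |c|, fun v _ => by rw [MvPolynomial.aeval_C]; exact of_algebraMap c⟩
  | add p q hp hq =>
    obtain ⟨A₁, α₁, h₁⟩ := hp
    obtain ⟨A₂, α₂, h₂⟩ := hq
    exact ⟨A₁ + A₂, α₁ + α₂, fun v hv => by rw [map_add]; exact (h₁ v hv).add (h₂ v hv)⟩
  | mul_X p i hp =>
    obtain ⟨A₁, α₁, h₁⟩ := hp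
    refine ⟨2 ^ r * (A₁ * α + A * α₁), α₁ * α, fun v hv => ?_⟩
    rw [map_mul, MvPolynomial.aeval_X]
    exact (h₁ v hv).mul (hv i)

theorem decayBound_mul_mul {h : C(AddCircle T, ℂ)} {ε : ℝ} (hε : 0 ≤ ε) (hε1 : ε ≤ 1)
    (hf : Tame r A (ε * α) f) (hg : Tame r A (ε * α) g) (hh : Tame r B β h) :
    DecayBound r (ε * (2 ^ r * (2 ^ r * (A * α + A * α) * β + B * α ^ 2)))
      (coef · (f * g * h)) := fun k => by
  have hB := hh.nonneg_left
  refine (((hf.mul hg).mul hh).decayBound k).trans ?_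
  calc _ = ε * (2 ^ r * (2 ^ r * (A * α + A * α) * β + B * (ε * α ^ 2))) := by ring
    _ ≤ _ := by
      gcongr
      exact mul_le_of_le_one_left (sq_nonneg α) hε1

end Tame

/-- The Fourier coefficients of `f` vanish at frequencies above `N`. -/
def BandLimited (N : ℕ) (f : C(AddCircle T, ℂ)) : Prop := ∀ m : ℤ, N < |m| → coef m f = 0

namespace BandLimited

variable {N N' : ℕ} {f g : C(AddCircle T, ℂ)}

theorem mono (hf : BandLimited N f) (h : N ≤ N') : BandLimited N' f :=
  fun m hm => hf m (lt_of_le_of_lt (mod_cast h) hm)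

theorem add (hf : BandLimited N f) (hg : BandLimited N g) : BandLimited N (f + g) :=
  fun m hm => by rw [map_add, hf m hm, hg m hm, add_zero]

theorem eq_zero_of_notMem (hf : BandLimited N f) {m : ℤ} (hm : m ∉ Finset.Icc (-(N : ℤ)) N) :
    coef m f = 0 :=
  hf m (not_le.mp fun h => hm (Finset.mem_Icc.mpr (abs_le.mp h)))

theorem coef_mul (hf : BandLimited N f) (g : C(AddCircle T, ℂ)) (k : ℤ) :
    coef k (f * g) = ∑ m ∈ Finset.Icc (-(N : ℤ)) N, coef m f * coef (k - m) g := by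
  have hs : Summable fun m => ‖coef m f‖ :=
    summable_of_ne_finset_zero (s := Finset.Icc (-(N : ℤ)) N) fun m hm => by
      rw [hf.eq_zero_of_notMem hm, norm_zero]
  rw [← (hasSum_coef_mul hs g k).tsum_eq]
  exact tsum_eq_sum fun m hm => by rw [hf.eq_zero_of_notMem hm, zero_mul]

theorem mul (hf : BandLimited N f) (hg : BandLimited N' g) : BandLimited (N + N') (f * g) := by
  intro k hk
  rw [hf.coef_mul]
  refine Finset.sum_eq_zero fun m hm => ?_
  have hm' := abs_le.mpr (Finset.mem_Icc.mp hm)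
  have hkm := abs_sub_abs_le_abs_sub k m
  rw [hg (k - m) (by push_cast at hk; linarith), mul_zero]

theorem exists_aeval {ι : Type*} (P : MvPolynomial ι ℝ) :
    ∃ D, ∀ (M : ℕ) (v : ι → C(AddCircle T, ℂ)), (∀ i, BandLimited M (v i)) →
      BandLimited (D * M) (MvPolynomial.aeval v P) := by
  induction P using MvPolynomial.induction_on with
  | C c =>
    refine ⟨0, fun M v _ m hm => ?_⟩
    rw [MvPolynomial.aeval_C, coef_algebraMap, if_neg]
    rintro rfl
    simp at hm
  | add p q hp hq =>
    obtain ⟨D₁, h₁⟩ := hp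
    obtain ⟨D₂, h₂⟩ := hq
    refine ⟨D₁ + D₂, fun M v hv => ?_⟩
    rw [map_add, add_mul]
    exact ((h₁ M v hv).mono (Nat.le_add_right _ _)).add ((h₂ M v hv).mono (Nat.le_add_left _ _))
  | mul_X p i hp =>
    obtain ⟨D, h⟩ := hp
    refine ⟨D + 1, fun M v hv => ?_⟩
    rw [map_mul, MvPolynomial.aeval_X, add_mul, one_mul]
    exact (h M v hv).mul (hv i)

end BandLimited

/-- Sharp truncation to frequencies at most `M`. -/
noncomputable def cut (M : ℕ) (f : C(AddCircle T, ℂ)) : C(AddCircle T, ℂ) :=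
  ∑ m ∈ Finset.Icc (-(M : ℤ)) M, coef m f • (fourier m : C(AddCircle T, ℂ))

section Cut

variable (M : ℕ) (f : C(AddCircle T, ℂ))

theorem coef_cut (k : ℤ) : coef k (cut M f) = if |k| ≤ M then coef k f else 0 := by
  simp only [cut, map_sum, map_smul, coef_fourier, smul_eq_mul, mul_ite, mul_one, mul_zero,
    Finset.sum_ite_eq, Finset.mem_Icc, abs_le]

theorem coef_sub_cut (k : ℤ) : coef k (f - cut M f) = if |k| ≤ M then 0 else coef k f := by
  rw [map_sub, coef_cut]
  split_ifs <;> simp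

theorem bandLimited_cut : BandLimited M (cut M f) := fun m hm => by
  rw [coef_cut, if_neg (not_le.mpr hm)]

theorem norm_coef_cut_le (k : ℤ) : ‖coef k (cut M f)‖ ≤ ‖coef k f‖ := by
  rw [coef_cut]
  split_ifs <;> simp

theorem norm_coef_sub_cut_le (k : ℤ) : ‖coef k (f - cut M f)‖ ≤ ‖coef k f‖ := by
  rw [coef_sub_cut]
  split_ifs <;> simp

theorem star_cut : star (cut M f) = cut M (star f) := by
  have hterm (m : ℤ) : star (coef m f • (fourier m : C(AddCircle T, ℂ))) =
      coef (-m) (star f) • (fourier (-m) : C(AddCircle T, ℂ)) := by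
    rw [coef_star, neg_neg]
    ext x
    simp [-fourier_apply, fourier_neg]
  rw [cut, cut, star_sum]
  refine Finset.sum_equiv (Equiv.neg ℤ) (fun m => ?_) fun m _ => hterm m
  simp only [Finset.mem_Icc, Equiv.neg_apply]
  omega

end Cut

theorem Tame.sub_cut {n r : ℕ} (hr : n + 2 ≤ r) {A : ℝ} {f : C(AddCircle T, ℂ)}
    (hf : DecayBound r A (coef · f)) (M : ℕ) :
    Tame r A (A / (1 + M) ^ n * weightSum) (f - cut M f) := by
  refine Tame.of_decayBound (hf.of_norm_le (norm_coef_sub_cut_le M f)) fun k => ?_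
  have hA := hf.nonneg
  simp only [coef_sub_cut]
  split_ifs with hk
  · rw [norm_zero, mul_zero]
    positivity
  · have hMk : (M : ℝ) ≤ |(k : ℝ)| := mod_cast (not_le.mp hk).le
    rw [le_div_iff₀ (by positivity)]
    calc _ ≤ (1 + |(k : ℝ)|) ^ 2 * ‖coef k f‖ * (1 + |(k : ℝ)|) ^ n := by gcongr
      _ = (1 + |(k : ℝ)|) ^ (n + 2) * ‖coef k f‖ := by ring
      _ ≤ A := hf.of_le hr k

theorem BandLimited.coef_mul_sub_cut {N M : ℕ} {f g : C(AddCircle T, ℂ)} (hg : BandLimited N g)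
    {k : ℤ} (hk : N + M < |k|) : coef k (g * (f - cut M f)) =
      ∑ m ∈ Finset.Icc (-(N : ℤ)) N, coef m g * coef (k - m) f := by
  rw [hg.coef_mul]
  refine Finset.sum_congr rfl fun m hm => ?_
  have hm' := abs_le.mpr (Finset.mem_Icc.mp hm)
  have hkm := abs_sub_abs_le_abs_sub k m
  rw [coef_sub_cut, if_neg (by linarith)]

end Tame

section Paralinearization

open MvPolynomial

variable {T : ℝ} [hT : Fact (0 < T)] {ι : Type*}

/-- The low-frequency coefficient which multiplies the high frequencies of the `l`-th argument in
the paralinearization of `P(f)`. -/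
noncomputable def paraCoeff (P : MvPolynomial ι ℝ) (M : ℕ) (f : ι → C(AddCircle T, ℂ)) (l : ι) :
    C(AddCircle T, ℂ) :=
  aeval (fun i => cut M (f i)) (pderiv l P)

variable [Fintype ι] (P : MvPolynomial ι ℝ)

theorem exists_coef_aeval_sub_sum_paraCoeff_eq :
    ∃ (D : ℕ) (Q : ι → ι → MvPolynomial (ι ⊕ ι) ℝ), ∀ (f : ι → C(AddCircle T, ℂ)) (M : ℕ) (k : ℤ),
      (D + 1) * M < |k| →
      coef k (aeval f P) - ∑ m ∈ Finset.Icc (-((D * M : ℕ) : ℤ)) (D * M : ℕ),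
          ∑ l, coef m (paraCoeff P M f l) * coef (k - m) (f l) =
        ∑ l, ∑ l', coef k ((f l - cut M (f l)) * (f l' - cut M (f l')) *
          aeval (Sum.elim (fun i => cut M (f i)) fun i => f i - cut M (f i)) (Q l l')) := by
  obtain ⟨Q, hQ⟩ := exists_taylor_two P
  obtain ⟨D₀, hD₀⟩ := BandLimited.exists_aeval (T := T) P
  choose D₁ hD₁ using fun l => BandLimited.exists_aeval (T := T) (pderiv l P)
  refine ⟨D₀ + ∑ l, D₁ l, Q, fun f M k hk => ?_⟩
  have hband := fun i => bandLimited_cut M (f i)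
  have hlow : coef k (aeval (fun i => cut M (f i)) P) = 0 := by
    refine hD₀ M _ hband k (lt_of_le_of_lt ?_ hk)
    norm_cast
    gcongr
    omega
  have hpara (l : ι) : BandLimited ((D₀ + ∑ l, D₁ l) * M) (paraCoeff P M f l) :=
    (hD₁ l M _ hband).mono (Nat.mul_le_mul_right _
      ((Finset.single_le_sum (fun _ _ => Nat.zero_le _) (Finset.mem_univ l)).trans
        (Nat.le_add_left _ _)))
  have hlinear (l : ι) := (hpara l).coef_mul_sub_cut (f := f l) (k := k) (M := M)
    (by push_cast at hk ⊢; linarith)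
  have htaylor := congrArg (coef k)
    (hQ _ (fun i => cut M (f i)) fun i => f i - cut M (f i))
  rw [show ((fun i => cut M (f i)) + fun i => f i - cut M (f i)) = f by ext1 i; simp, map_add,
    map_add, hlow, zero_add, map_sum, map_sum] at htaylor
  rw [htaylor, Finset.sum_comm, ← Finset.sum_congr rfl fun l _ => hlinear l]
  simp only [paraCoeff, map_sum, add_sub_cancel_left]

theorem exists_paralinearization {n r : ℕ} (hr : n + 2 ≤ r) (A : ℝ) :
    ∃ (D : ℕ) (C : ℝ), 0 ≤ C ∧ ∀ f : ι → C(AddCircle T, ℂ),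
      (∀ l, DecayBound r A (coef · (f l))) → ∀ (M : ℕ) (k : ℤ), (D + 1) * M < |k| →
      (1 + |(k : ℝ)|) ^ r * ‖coef k (aeval f P) -
        ∑ m ∈ Finset.Icc (-((D * M : ℕ) : ℤ)) (D * M : ℕ),
          ∑ l, coef m (paraCoeff P M f l) * coef (k - m) (f l)‖ ≤ C / (1 + M) ^ n := by
  obtain ⟨D, Q, hQ⟩ := exists_coef_aeval_sub_sum_paraCoeff_eq (T := T) P
  choose B β hB using fun l l' => Tame.exists_aeval (T := T) (Q l l') r A (A * weightSum)
  let C (l l' : ι) : ℝ := 2 ^ r * (2 ^ r * (A * (A * weightSum) + A * (A * weightSum)) * β l l' +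
    B l l' * (A * weightSum) ^ 2)
  refine ⟨D, ∑ l, ∑ l', |C l l'|, by positivity, fun f hf M k hk => ?_⟩
  set ε : ℝ := ((1 + M) ^ n)⁻¹ with hε
  have hε0 : 0 ≤ ε := by positivity
  have hε1 : ε ≤ 1 := inv_le_one_of_one_le₀ (one_le_pow₀ (by linarith [M.cast_nonneg (α := ℝ)]))
  have htame (i : ι) : Tame r A (A * weightSum) (f i) :=
    Tame.of_decayBound (hf i) ((hf i).of_le (by omega))
  have hhigh (i : ι) : Tame r A (ε * (A * weightSum)) (f i - cut M (f i)) := by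
    convert Tame.sub_cut hr (hf i) M using 1
    ring
  have hremainder (l l' : ι) := Tame.decayBound_mul_mul hε0 hε1 (hhigh l) (hhigh l')
    (hB l l' (Sum.elim (fun i => cut M (f i)) fun i => f i - cut M (f i)) (by
      rintro (i | i)
      · exact (htame i).of_norm_coef_le (norm_coef_cut_le M (f i))
      · exact (htame i).of_norm_coef_le (norm_coef_sub_cut_le M (f i)))) k
  rw [hQ f M k hk, div_eq_mul_inv, ← hε, mul_comm _ ε, Finset.mul_sum]
  simp only [Finset.mul_sum]
  refine (mul_le_mul_of_nonneg_left ((norm_sum_le _ _).trans (Finset.sum_le_sum fun l _ =>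
    norm_sum_le _ _)) (by positivity)).trans ?_
  simp only [Finset.mul_sum]
  refine Finset.sum_le_sum fun l _ => Finset.sum_le_sum fun l' _ => ?_
  exact (hremainder l l').trans (mul_le_mul_of_nonneg_left (le_abs_self _) hε0)

end Paralinearization

section BackwardGronwall

theorem le_exp_mul_of_mul_le_deriv {y y' : ℝ → ℝ} {σ a b : ℝ} (hab : a ≤ b)
    (hc : ContinuousOn y (Set.Icc a b)) (hd : ∀ t ∈ Set.Ioo a b, HasDerivAt y (y' t) t)
    (hy : ∀ t ∈ Set.Ioo a b, σ * y t ≤ y' t) : y a ≤ Real.exp (-(σ * (b - a))) * y b := by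
  have hexp (t : ℝ) :
      HasDerivAt (fun t => Real.exp (-(σ * t))) (Real.exp (-(σ * t)) * -(σ * 1)) t :=
    ((hasDerivAt_id' t).const_mul σ).neg.exp
  have hmono : MonotoneOn (fun t => Real.exp (-(σ * t)) * y t) (Set.Icc a b) := by
    refine monotoneOn_of_hasDerivWithinAt_nonneg (convex_Icc a b)
      (f' := fun t => Real.exp (-(σ * t)) * -(σ * 1) * y t + Real.exp (-(σ * t)) * y' t)
      (ContinuousOn.mul (by fun_prop) hc) (fun t ht => ?_) fun t ht => ?_
    · rw [interior_Icc] at ht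
      exact ((hexp t).mul (hd t ht)).hasDerivWithinAt
    · rw [interior_Icc] at ht
      calc 0 ≤ Real.exp (-(σ * t)) * (y' t - σ * y t) :=
            mul_nonneg (Real.exp_pos _).le (sub_nonneg.mpr (hy t ht))
        _ = _ := by ring
  have hle := hmono (Set.left_mem_Icc.mpr hab) (Set.right_mem_Icc.mpr hab) hab
  have hsplit : Real.exp (-(σ * b)) = Real.exp (-(σ * a)) * Real.exp (-(σ * (b - a))) := by
    rw [← Real.exp_add]
    ring_nf
  dsimp only at hle
  rwa [hsplit, mul_assoc, mul_le_mul_iff_right₀ (Real.exp_pos _)] at hle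

theorem norm_sq_le_of_le_inner_deriv {E : Type*} [NormedAddCommGroup E] [InnerProductSpace ℝ E]
    {h h' : ℝ → E} {σ R a b : ℝ} (hσ : 0 < σ) (hab : a < b) (hc : ContinuousOn h (Set.Icc a b))
    (hd : ∀ t ∈ Set.Ioo a b, HasDerivAt h (h' t) t)
    (hh' : ∀ t ∈ Set.Ioo a b, σ * ‖h t‖ ^ 2 - R * ‖h t‖ ≤ inner ℝ (h t) (h' t)) :
    ‖h a‖ ^ 2 ≤ ‖h b‖ ^ 2 / (σ * (b - a)) + R ^ 2 / σ ^ 2 := by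
  have hgronwall := le_exp_mul_of_mul_le_deriv (y := fun t => ‖h t‖ ^ 2 - R ^ 2 / σ ^ 2) (σ := σ)
    hab.le ((hc.norm.pow 2).sub continuousOn_const) (fun t ht => (hd t ht).norm_sq.sub_const _)
    fun t ht => by
      have hsq : 0 ≤ (σ * ‖h t‖ - R) ^ 2 / σ := by positivity
      calc _ = σ * ‖h t‖ ^ 2 - R ^ 2 / σ := by field_simp
        _ ≤ σ * ‖h t‖ ^ 2 - R ^ 2 / σ + (σ * ‖h t‖ - R) ^ 2 / σ := le_add_of_nonneg_right hsq
        _ = 2 * (σ * ‖h t‖ ^ 2 - R * ‖h t‖) := by field_simp; ring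
        _ ≤ _ := by linarith [hh' t ht]
  have hexp : Real.exp (-(σ * (b - a))) ≤ (σ * (b - a))⁻¹ := by
    rw [Real.exp_neg]
    gcongr
    linarith [Real.add_one_le_exp (σ * (b - a))]
  rw [← sub_le_iff_le_add]
  calc _ ≤ Real.exp (-(σ * (b - a))) * (‖h b‖ ^ 2 - R ^ 2 / σ ^ 2) := hgronwall
    _ ≤ Real.exp (-(σ * (b - a))) * ‖h b‖ ^ 2 := by
      gcongr
      exact sub_le_self _ (by positivity)
    _ ≤ (σ * (b - a))⁻¹ * ‖h b‖ ^ 2 := by gcongr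
    _ = _ := inv_mul_eq_div _ _

theorem inner_mul_self_complex (z w : ℂ) : inner ℝ w (z * w) = z.re * ‖w‖ ^ 2 := by
  rw [Complex.sq_norm, Complex.inner, Complex.normSq_apply]
  simp only [Complex.mul_re, Complex.mul_im, Complex.conj_re, Complex.conj_im]
  ring

theorem norm_sq_le_of_backward_parabolic {h κ e : ℝ → ℂ} {σ R a b : ℝ} (hσ : 0 < σ) (hab : a < b)
    (hc : ContinuousOn h (Set.Icc a b))
    (hd : ∀ t ∈ Set.Ioo a b, HasDerivAt h (κ t * h t + e t) t)
    (hκ : ∀ t ∈ Set.Ioo a b, σ ≤ (κ t).re) (he : ∀ t ∈ Set.Ioo a b, ‖e t‖ ≤ R) :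
    ‖h a‖ ^ 2 ≤ ‖h b‖ ^ 2 / (σ * (b - a)) + R ^ 2 / σ ^ 2 := by
  refine norm_sq_le_of_le_inner_deriv hσ hab hc hd fun t ht => ?_
  have hκt := mul_le_mul_of_nonneg_right (hκ t ht) (sq_nonneg ‖h t‖)
  have het : -(R * ‖h t‖) ≤ inner ℝ (h t) (e t) :=
    calc _ ≤ -(‖h t‖ * ‖e t‖) := by
          rw [mul_comm, neg_le_neg_iff]
          gcongr
          exact he t ht
      _ ≤ _ := neg_le_of_abs_le (abs_real_inner_le_norm _ _)
  rw [inner_add_right, inner_mul_self_complex]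
  linarith

end BackwardGronwall

section NormalForm

/-- The normal form correction of the mode `w k`: added to `w k`, it removes the nonresonant
interactions `g m * w (k - m)`, `m ∈ s`, from an evolution whose linear part is
`w k ↦ -i q k w k`. -/
noncomputable def normalForm (q : ℤ → ℝ) (g w : ℤ → ℂ) (s : Finset ℤ) (k : ℤ) : ℂ :=
  ∑ m ∈ s, Complex.I * g m / (q k - q (k - m) : ℝ) * w (k - m)

theorem norm_normalForm_le {q : ℤ → ℝ} {g w : ℤ → ℂ} {s : Finset ℤ} {k : ℤ} {G Y d : ℝ}
    (hd : 0 < d) (hY : 0 ≤ Y) (hg : ∑ m ∈ s, ‖g m‖ ≤ G) (hq : ∀ m ∈ s, d ≤ |q k - q (k - m)|)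
    (hw : ∀ m ∈ s, ‖w (k - m)‖ ≤ Y) : ‖normalForm q g w s k‖ ≤ G * Y / d := by
  calc _ ≤ ∑ m ∈ s, ‖Complex.I * g m / (q k - q (k - m) : ℝ) * w (k - m)‖ := norm_sum_le _ _
    _ ≤ ∑ m ∈ s, ‖g m‖ * (Y / d) := by
        refine Finset.sum_le_sum fun m hm => ?_
        rw [norm_mul, norm_div, norm_mul, Complex.norm_I, one_mul, Complex.norm_real,
          Real.norm_eq_abs, div_mul_eq_mul_div, mul_div_assoc]
        gcongr
        exacts [hw m hm, hq m hm]
    _ = (∑ m ∈ s, ‖g m‖) * (Y / d) := by rw [Finset.sum_mul]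
    _ ≤ G * (Y / d) := by gcongr
    _ = _ := by ring

variable {q : ℤ → ℝ} {w g : ℝ → ℤ → ℂ} {s : Finset ℤ} {k : ℤ}

theorem hasDerivAt_normalForm {g' N : ℤ → ℂ} {t : ℝ}
    (hw : ∀ n, HasDerivAt (fun τ => w τ n) (-Complex.I * q n * w t n + N n) t)
    (hg : ∀ m ∈ s, HasDerivAt (fun τ => g τ m) (g' m) t) (hq : ∀ m ∈ s, q k - q (k - m) ≠ 0) :
    HasDerivAt (fun τ => normalForm q (g τ) (w τ) s k)
      (-Complex.I * q k * normalForm q (g t) (w t) s k - ∑ m ∈ s, g t m * w t (k - m) +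
        normalForm q g' (w t) s k + normalForm q (g t) N s k) t := by
  have h : HasDerivAt (fun τ => normalForm q (g τ) (w τ) s k)
      (∑ m ∈ s, (Complex.I * g' m / (q k - q (k - m) : ℝ) * w t (k - m) +
        Complex.I * g t m / (q k - q (k - m) : ℝ) *
          (-Complex.I * q (k - m) * w t (k - m) + N (k - m)))) t :=
    HasDerivAt.fun_sum fun m hm => (((hg m hm).const_mul _).div_const _).mul (hw (k - m))
  refine h.congr_deriv ?_
  simp only [normalForm, Finset.mul_sum, ← Finset.sum_sub_distrib, ← Finset.sum_add_distrib]
  refine Finset.sum_congr rfl fun m hm => ?_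
  have hne : ((q k - q (k - m) : ℝ) : ℂ) ≠ 0 := mod_cast hq m hm
  have hqk : ((q (k - m) : ℝ) : ℂ) = q k - ((q k - q (k - m) : ℝ) : ℂ) := by push_cast; ring
  rw [hqk]
  generalize ((q k - q (k - m) : ℝ) : ℂ) = Δ at *
  field_simp
  linear_combination (g t m * w t (k - m) * Δ) * Complex.I_sq

theorem hasDerivAt_add_normalForm {g' N : ℤ → ℂ} {t : ℝ} (κ : ℂ)
    (hw : ∀ n, HasDerivAt (fun τ => w τ n) (-Complex.I * q n * w t n + N n) t)
    (hg : ∀ m ∈ s, HasDerivAt (fun τ => g τ m) (g' m) t) (hq : ∀ m ∈ s, q k - q (k - m) ≠ 0) :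
    HasDerivAt (fun τ => w τ k + normalForm q (g τ) (w τ) s k)
      ((-Complex.I * q k + κ) * (w t k + normalForm q (g t) (w t) s k) +
        (N k - κ * w t k - ∑ m ∈ s, g t m * w t (k - m) - κ * normalForm q (g t) (w t) s k +
          normalForm q g' (w t) s k + normalForm q (g t) N s k)) t :=
  ((hw k).fun_add (hasDerivAt_normalForm hw hg hq)).congr_deriv (by ring)

theorem continuousOn_normalForm {I : Set ℝ} (hw : ∀ n, ContinuousOn (fun t => w t n) I)
    (hg : ∀ m, ContinuousOn (fun t => g t m) I) :
    ContinuousOn (fun t => normalForm q (g t) (w t) s k) I :=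
  continuousOn_finsetSum s fun m _ =>
    ((continuousOn_const.mul (hg m)).div_const _).mul (hw (k - m))

/-- On the time interval `[a, b]` the modes `w` solve `∂ₜ w n = -i q n w n + N n`, and the
nonlinearity is paralinear at the frequency `k`: `N k` equals
`κ w k + ∑ m ∈ s, g m * w (k - m)` up to a lower-order remainder, where `κ` is parabolic backwards
in time. The scale is `x ∼ |k|`, the size of `w` near `k` is `ρ`, and `n` is the number of powers
of `x` separating `q k` from `q (k - m)`. -/
structure ParalinearMode (n : ℕ) (q : ℤ → ℝ) (w N g : ℝ → ℤ → ℂ) (κ : ℝ → ℂ) (s : Finset ℤ)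
    (k : ℤ) (a b σ c A x ρ : ℝ) : Prop where
  one_le_scale : 1 ≤ x
  size_pos : 0 < ρ
  continuousOn : ∀ l, ContinuousOn (fun t => w t l) (Set.Icc a b)
  continuousOn_coeff : ∀ m, ContinuousOn (fun t => g t m) (Set.Icc a b)
  hasDerivAt : ∀ t ∈ Set.Ioo a b, ∀ l,
    HasDerivAt (fun τ => w τ l) (-Complex.I * q l * w t l + N t l) t
  hasDerivAt_coeff : ∀ t ∈ Set.Ioo a b, ∃ g' : ℤ → ℂ,
    (∀ m ∈ s, HasDerivAt (fun τ => g τ m) (g' m) t) ∧ ∑ m ∈ s, ‖g' m‖ ≤ A * x ^ (n + 1)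
  nonresonant : ∀ m ∈ s, c * x ^ n ≤ |q k - q (k - m)|
  parabolic : ∀ t ∈ Set.Icc a b, σ * x ^ 2 ≤ (κ t).re
  norm_symbol_le : ∀ t ∈ Set.Icc a b, ‖κ t‖ ≤ A * x ^ 3
  sum_norm_coeff_le : ∀ t ∈ Set.Icc a b, ∑ m ∈ s, ‖g t m‖ ≤ A * x ^ 3
  norm_mode_le : ∀ t ∈ Set.Icc a b, ‖w t k‖ ≤ A * ρ
  norm_near_mode_le : ∀ t ∈ Set.Icc a b, ∀ m ∈ s, ‖w t (k - m)‖ ≤ A * ρ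
  norm_nonlin_le : ∀ t ∈ Set.Icc a b, ∀ m ∈ s, ‖N t (k - m)‖ ≤ A * x ^ 3 * ρ
  norm_remainder_le : ∀ t ∈ Set.Icc a b,
    ‖N t k - κ t * w t k - ∑ m ∈ s, g t m * w t (k - m)‖ ≤ A * (x * ρ)

namespace ParalinearMode

variable {N : ℝ → ℤ → ℂ} {κ : ℝ → ℂ} {n : ℕ} {a b σ c A x ρ : ℝ}

theorem nonneg (h : ParalinearMode n q w N g κ s k a b σ c A x ρ) (hab : a < b) : 0 ≤ A :=
  nonneg_of_mul_nonneg_left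
    ((norm_nonneg _).trans (h.norm_mode_le a (Set.left_mem_Icc.mpr hab.le))) h.size_pos

theorem norm_normalForm_le (h : ParalinearMode n q w N g κ s k a b σ c A x ρ) (hn : 6 ≤ n)
    (hc : 0 < c) (hab : a < b) {t : ℝ} (ht : t ∈ Set.Icc a b) :
    ‖normalForm q (g t) (w t) s k‖ ≤ A ^ 2 / c * ρ / x ^ 3 := by
  have hx := zero_lt_one.trans_le h.one_le_scale
  have hx6 : x ^ 6 ≤ x ^ n := pow_le_pow_right₀ h.one_le_scale hn
  have hA := h.nonneg hab
  have hρ := h.size_pos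
  calc _ ≤ A * x ^ 3 * (A * ρ) / (c * x ^ n) :=
        FifthOrderStmt5.norm_normalForm_le (by positivity) (by positivity)
          (h.sum_norm_coeff_le t ht) h.nonresonant (h.norm_near_mode_le t ht)
    _ ≤ A * x ^ 3 * (A * ρ) / (c * x ^ 6) := by gcongr
    _ = _ := by field_simp

theorem norm_normalForm_le_size (h : ParalinearMode n q w N g κ s k a b σ c A x ρ) (hn : 6 ≤ n)
    (hc : 0 < c) (hab : a < b) {t : ℝ} (ht : t ∈ Set.Icc a b) :
    ‖normalForm q (g t) (w t) s k‖ ≤ A ^ 2 / c * ρ := by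
  have hρ := h.size_pos
  exact (h.norm_normalForm_le hn hc hab ht).trans
    (div_le_self (by positivity) (one_le_pow₀ h.one_le_scale))

theorem norm_error_le (h : ParalinearMode n q w N g κ s k a b σ c A x ρ) (hn : 6 ≤ n)
    (hc : 0 < c) (hab : a < b) {t : ℝ} (ht : t ∈ Set.Icc a b) {g' : ℤ → ℂ}
    (hg' : ∑ m ∈ s, ‖g' m‖ ≤ A * x ^ (n + 1)) :
    ‖N t k - κ t * w t k - ∑ m ∈ s, g t m * w t (k - m) - κ t * normalForm q (g t) (w t) s k +
        normalForm q g' (w t) s k + normalForm q (g t) (N t) s k‖ ≤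
      (A + A ^ 3 / c + 2 * (A ^ 2 / c)) * (x * ρ) := by
  have hx := zero_lt_one.trans_le h.one_le_scale
  have hx6 : x ^ 6 ≤ x ^ n := pow_le_pow_right₀ h.one_le_scale hn
  have hρx : ρ ≤ x * ρ := le_mul_of_one_le_left h.size_pos.le h.one_le_scale
  have hA := h.nonneg hab
  have hρ := h.size_pos
  have hsymbol : ‖κ t * normalForm q (g t) (w t) s k‖ ≤ A ^ 3 / c * (x * ρ) := by
    rw [norm_mul]
    calc _ ≤ A * x ^ 3 * (A ^ 2 / c * ρ / x ^ 3) := by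
          gcongr
          exacts [h.norm_symbol_le t ht, h.norm_normalForm_le hn hc hab ht]
      _ = A ^ 3 / c * ρ := by field_simp
      _ ≤ _ := by gcongr
  have hderiv : ‖normalForm q g' (w t) s k‖ ≤ A ^ 2 / c * (x * ρ) := by
    calc _ ≤ A * x ^ (n + 1) * (A * ρ) / (c * x ^ n) :=
          FifthOrderStmt5.norm_normalForm_le (by positivity) (by positivity) hg' h.nonresonant
            (h.norm_near_mode_le t ht)
      _ = _ := by
          field_simp
          ring
  have hnonlin : ‖normalForm q (g t) (N t) s k‖ ≤ A ^ 2 / c * (x * ρ) := by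
    calc _ ≤ A * x ^ 3 * (A * x ^ 3 * ρ) / (c * x ^ n) :=
          FifthOrderStmt5.norm_normalForm_le (by positivity) (by positivity)
            (h.sum_norm_coeff_le t ht) h.nonresonant (h.norm_nonlin_le t ht)
      _ ≤ A * x ^ 3 * (A * x ^ 3 * ρ) / (c * x ^ 6) := by gcongr
      _ = A ^ 2 / c * ρ := by field_simp
      _ ≤ _ := by gcongr
  refine (norm_add_le_of_le (norm_add_le_of_le (norm_sub_le_of_le (h.norm_remainder_le t ht)
    hsymbol) hderiv) hnonlin).trans_eq ?_
  ring

theorem exists_norm_le (hn : 6 ≤ n) {δ : ℝ} (hσ : 0 < σ) (hc : 0 < c) (hδ : 0 < δ) (A : ℝ) :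
    ∃ C, ∀ (q : ℤ → ℝ) (w N g : ℝ → ℤ → ℂ) (κ : ℝ → ℂ) (s : Finset ℤ) (k : ℤ) (a b x ρ : ℝ),
      ParalinearMode n q w N g κ s k a b σ c A x ρ → δ ≤ b - a → ‖w a k‖ ≤ C * ρ / x := by
  set B := A ^ 2 / c
  set E := A + A ^ 3 / c + 2 * (A ^ 2 / c)
  refine ⟨√((A + B) ^ 2 / (σ * δ) + E ^ 2 / σ ^ 2) + B, ?_⟩
  intro q w N g κ s k a b x ρ h hδab
  have hab : a < b := by linarith
  have ha : a ∈ Set.Icc a b := Set.left_mem_Icc.mpr hab.le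
  have hb : b ∈ Set.Icc a b := Set.right_mem_Icc.mpr hab.le
  have hx := zero_lt_one.trans_le h.one_le_scale
  have hρ := h.size_pos
  have hq (m : ℤ) (hm : m ∈ s) : q k - q (k - m) ≠ 0 :=
    abs_pos.mp (lt_of_lt_of_le (by positivity) (h.nonresonant m hm))
  choose! g' hg' hg'sum using h.hasDerivAt_coeff
  have hgronwall := norm_sq_le_of_backward_parabolic (σ := σ * x ^ 2)
    (h := fun t => w t k + normalForm q (g t) (w t) s k) (by positivity) hab
    ((h.continuousOn k).fun_add (continuousOn_normalForm h.continuousOn h.continuousOn_coeff))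
    (fun t ht => hasDerivAt_add_normalForm (κ t) (h.hasDerivAt t ht) (hg' t ht) hq)
    (fun t ht => by simpa using h.parabolic t (Set.Ioo_subset_Icc_self ht))
    (fun t ht => h.norm_error_le hn hc hab (Set.Ioo_subset_Icc_self ht) (hg'sum t ht))
  have hend : ‖w b k + normalForm q (g b) (w b) s k‖ ≤ A * ρ + B * ρ :=
    norm_add_le_of_le (h.norm_mode_le b hb) (h.norm_normalForm_le_size hn hc hab hb)
  have hstart : ‖w a k + normalForm q (g a) (w a) s k‖ ≤
      √((A + B) ^ 2 / (σ * δ) + E ^ 2 / σ ^ 2) * ρ / x := by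
    refine (pow_le_pow_iff_left₀ (norm_nonneg _) (by positivity) two_ne_zero).mp ?_
    rw [div_pow, mul_pow, Real.sq_sqrt (by positivity)]
    calc _ ≤ _ := hgronwall
      _ ≤ (A * ρ + B * ρ) ^ 2 / (σ * x ^ 2 * δ) + (E * (x * ρ)) ^ 2 / (σ * x ^ 2) ^ 2 := by gcongr
      _ = _ := by field_simp
  have hcorrection : ‖normalForm q (g a) (w a) s k‖ ≤ B * ρ / x :=
    (h.norm_normalForm_le hn hc hab ha).trans (by
      gcongr
      exact le_self_pow₀ h.one_le_scale (by norm_num))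
  calc ‖w a k‖ = ‖w a k + normalForm q (g a) (w a) s k - normalForm q (g a) (w a) s k‖ := by
        rw [add_sub_cancel_right]
    _ ≤ _ := norm_sub_le_of_le hstart hcorrection
    _ = _ := by ring

end ParalinearMode

end NormalForm

section Frequencies

theorem le_mul_inv_of_weight_mul_le {r : ℕ} {x y a A : ℝ} (hx : 0 < x) (hy : x / 2 ≤ y)
    (ha : 0 ≤ a) (h : (1 + y) ^ r * a ≤ A) : a ≤ 2 ^ r * A * (x ^ r)⁻¹ := by
  rw [← div_eq_mul_inv, le_div_iff₀ (by positivity)]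
  calc a * x ^ r = 2 ^ r * ((x / 2) ^ r * a) := by
        rw [div_pow]
        field_simp
    _ ≤ 2 ^ r * ((1 + y) ^ r * a) := by
        gcongr
        linarith
    _ ≤ _ := by gcongr

theorem one_add_pow_mul_cube_le {n : ℕ} (hn : 5 ≤ n) {M x : ℝ} (hM : 1 ≤ M) (hMx : M ^ 2 ≤ x) :
    (1 + M) ^ (n + 1) * (2 * x) ^ 3 ≤ 2 ^ (n + 4) * x ^ (n + 1) := by
  have hx : 0 ≤ x := (sq_nonneg M).trans hMx
  obtain ⟨p, rfl⟩ := Nat.exists_eq_add_of_le' (show 2 ≤ n by omega)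
  calc _ ≤ (2 * M) ^ (p + 2 + 1) * (2 * x) ^ 3 := by
        gcongr
        linarith
    _ = 2 ^ (p + 2 + 4) * (M ^ (p + 2 + 1) * x ^ 3) := by ring
    _ ≤ 2 ^ (p + 2 + 4) * ((M ^ 2) ^ p * x ^ 3) := by
        rw [← pow_mul]
        gcongr ?_ * (?_ * _)
        exact pow_le_pow_right₀ hM (by omega)
    _ ≤ 2 ^ (p + 2 + 4) * (x ^ p * x ^ 3) := by gcongr
    _ = _ := by ring

theorem half_abs_le_abs_sub {k m : ℤ} (hm : 2 * |(m : ℝ)| ≤ |(k : ℝ)|) :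
    |(k : ℝ)| / 2 ≤ |((k - m : ℤ) : ℝ)| := by
  push_cast
  linarith [abs_sub_abs_le_abs_sub (k : ℝ) m]

theorem abs_sub_le_two_mul_abs {k m : ℤ} (hm : 2 * |(m : ℝ)| ≤ |(k : ℝ)|) :
    |((k - m : ℤ) : ℝ)| ≤ 2 * |(k : ℝ)| := by
  push_cast
  linarith [abs_sub (k : ℝ) m, abs_nonneg (m : ℝ)]

/-- The nonzero frequencies of size at most `N`. -/
noncomputable def nearFreq (N : ℕ) : Finset ℤ := (Finset.Icc (-(N : ℤ)) N).erase 0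

theorem two_mul_abs_le_of_mem_nearFreq {D M : ℕ} {k m : ℤ} (hD : 2 * D ≤ M)
    (hMk : (M : ℝ) ^ 2 ≤ |(k : ℝ)|) (hm : m ∈ nearFreq (D * M)) :
    2 * |(m : ℝ)| ≤ |(k : ℝ)| := by
  rw [nearFreq, Finset.mem_erase, Finset.mem_Icc, ← abs_le] at hm
  calc 2 * |(m : ℝ)| ≤ 2 * (D * M) := by
        gcongr
        exact mod_cast hm.2
    _ = 2 * D * M := by ring
    _ ≤ M * M := by
        gcongr
        exact mod_cast hD
    _ ≤ _ := by rwa [← sq]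

end Frequencies

section Symbol

variable {T : ℝ} [hT : Fact (0 < T)] {d : ℕ}

/-- The coefficient with which the differential operator `∑ l, e l * ∂ₓ ^ l` maps the frequency
`k - m` to the frequency `k`. -/
noncomputable def symbol (e : Fin (d + 1) → C(AddCircle T, ℂ)) (k m : ℤ) : ℂ :=
  ∑ l, coef m (e l) * (Complex.I * (k - m : ℤ)) ^ (l : ℕ)

theorem norm_I_mul_pow_le {m : ℤ} {y : ℝ} (hy : 1 ≤ y) (hm : |(m : ℝ)| ≤ y) (l : Fin (d + 1)) :
    ‖(Complex.I * m) ^ (l : ℕ)‖ ≤ y ^ d := by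
  rw [norm_pow, norm_mul, Complex.norm_I, one_mul, Complex.norm_intCast]
  calc _ ≤ y ^ (l : ℕ) := by gcongr
    _ ≤ _ := pow_le_pow_right₀ hy (Nat.lt_succ_iff.mp l.isLt)

theorem sum_norm_symbol_le {e : Fin (d + 1) → C(AddCircle T, ℂ)} {α y : ℝ} {s : Finset ℤ} {k : ℤ}
    (hy : 1 ≤ y) (he : ∀ l, ∑ m ∈ s, ‖coef m (e l)‖ ≤ α)
    (hs : ∀ m ∈ s, |((k - m : ℤ) : ℝ)| ≤ y) : ∑ m ∈ s, ‖symbol e k m‖ ≤ (d + 1) * α * y ^ d :=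
  calc _ ≤ ∑ m ∈ s, ∑ l, ‖coef m (e l)‖ * y ^ d := by
        refine Finset.sum_le_sum fun m hm => norm_sum_le_of_le _ fun l _ => ?_
        rw [norm_mul]
        gcongr
        exact norm_I_mul_pow_le hy (hs m hm) l
    _ = ∑ l, (∑ m ∈ s, ‖coef m (e l)‖) * y ^ d := by
        rw [Finset.sum_comm]
        simp only [Finset.sum_mul]
    _ ≤ ∑ _l : Fin (d + 1), α * y ^ d := by
        gcongr with l
        exact he l
    _ = _ := by
        rw [Finset.sum_const, Finset.card_univ, Fintype.card_fin, nsmul_eq_mul]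
        push_cast
        ring

theorem symbol_zero_re {e : Fin 4 → C(AddCircle T, ℂ)} (he : ∀ l, star (e l) = e l) (k : ℤ) :
    (symbol e k 0).re = (coef 0 (e 0)).re - (k : ℝ) ^ 2 * (coef 0 (e 2)).re := by
  have hreal (l : Fin 4) : coef 0 (e l) = ((coef 0 (e l)).re : ℂ) :=
    Complex.ext rfl (coef_zero_im (he l))
  have hsymbol : symbol e k 0 =
      (((coef 0 (e 0)).re - (k : ℝ) ^ 2 * (coef 0 (e 2)).re : ℝ) : ℂ) +
        (((coef 0 (e 1)).re * k - (coef 0 (e 3)).re * k ^ 3 : ℝ) : ℂ) * Complex.I := by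
    rw [symbol, Fin.sum_univ_four, hreal 0, hreal 1, hreal 2, hreal 3]
    simp only [Fin.val_zero, Fin.val_one, Fin.val_two, show ((3 : Fin 4) : ℕ) = 3 from rfl,
      sub_zero, mul_pow, Complex.I_sq, Complex.I_pow_three, Complex.ofReal_re]
    push_cast
    ring
  rw [hsymbol, Complex.add_re, Complex.ofReal_re, Complex.re_ofReal_mul, Complex.I_re, mul_zero,
    add_zero]

end Symbol

section Flow

open MvPolynomial Filter

/-- The phase `q` grows at most like `|k| ^ (n + 1)`, and separates `k` from the frequencies
`k - m`, with `m` nonzero and small with respect to `k`, by `|k| ^ n`. -/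
structure Dispersive (n : ℕ) (q : ℤ → ℝ) : Prop where
  exists_nonresonant : ∃ c > 0, ∃ K : ℝ, ∀ k m : ℤ, K ≤ |(k : ℝ)| → m ≠ 0 →
    2 * |(m : ℝ)| ≤ |(k : ℝ)| → c * |(k : ℝ)| ^ n ≤ |q k - q (k - m)|
  exists_abs_le : ∃ C, ∀ k : ℤ, |q k| ≤ C * (1 + |(k : ℝ)|) ^ (n + 1)

variable {T : ℝ} [hT : Fact (0 < T)]

/-- A real solution on `[0, τ]` of an evolution equation with phase `q` and nonlinearity `P`, seen
through its Fourier coefficients `w`. Here `V t l` is the `l`-th space derivative at time `t`, and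
the field `parabolic` says that the mean of `∂P/∂(∂ₓ²u)` is negative, uniformly near the
solution. -/
structure Flow (q : ℤ → ℝ) (P : MvPolynomial (Fin 4) ℝ) (w : ℝ → ℤ → ℂ)
    (V : ℝ → Fin 4 → C(AddCircle T, ℂ)) (τ : ℝ) : Prop where
  coef_eq : ∀ t ∈ Set.Icc 0 τ, ∀ l k, coef k (V t l) = (Complex.I * k) ^ (l : ℕ) * w t k
  star_eq : ∀ t ∈ Set.Icc 0 τ, ∀ l, star (V t l) = V t l
  continuousOn : ∀ k, ContinuousOn (fun t => w t k) (Set.Icc 0 τ)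
  hasDerivAt : ∀ t ∈ Set.Ioo 0 τ, ∀ k,
    HasDerivAt (fun s => w s k) (-Complex.I * q k * w t k + coef k (aeval (V t) P)) t
  parabolic : ∃ ε > 0, ∃ c > 0, ∀ t ∈ Set.Icc 0 τ, ∀ v : Fin 4 → C(AddCircle T, ℂ),
    (∀ l, ‖v l - V t l‖ < ε) → (coef 0 (aeval v (pderiv 2 P))).re ≤ -c

namespace Flow

variable {n r : ℕ} {q : ℤ → ℝ} {P : MvPolynomial (Fin 4) ℝ} {w : ℝ → ℤ → ℂ}
  {V : ℝ → Fin 4 → C(AddCircle T, ℂ)} {τ t A : ℝ}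

theorem mono {τ' : ℝ} (h : Flow q P w V τ) (hτ : τ' ≤ τ) : Flow q P w V τ' := by
  have hI : Set.Icc 0 τ' ⊆ Set.Icc 0 τ := Set.Icc_subset_Icc_right hτ
  obtain ⟨ε, hε, c, hc, hp⟩ := h.parabolic
  exact ⟨fun t ht => h.coef_eq t (hI ht), fun t ht => h.star_eq t (hI ht),
    fun k => (h.continuousOn k).mono hI,
    fun t ht => h.hasDerivAt t (Set.Ioo_subset_Ioo_right hτ ht),
    ε, hε, c, hc, fun t ht => hp t (hI ht)⟩

theorem decayBound (h : Flow q P w V τ) (ht : t ∈ Set.Icc 0 τ) (hw : DecayBound (r + 3) A (w t))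
    (l : Fin 4) : DecayBound r A (coef · (V t l)) := fun k => by
  simp only [h.coef_eq t ht, norm_mul]
  calc _ ≤ (1 + |(k : ℝ)|) ^ r * ((1 + |(k : ℝ)|) ^ 3 * ‖w t k‖) := by
        gcongr
        exact norm_I_mul_pow_le (by linarith [abs_nonneg (k : ℝ)]) (by linarith) l
    _ = (1 + |(k : ℝ)|) ^ (r + 3) * ‖w t k‖ := by ring
    _ ≤ A := hw k

theorem tame (h : Flow q P w V τ) (ht : t ∈ Set.Icc 0 τ) (hr : 2 ≤ r)
    (hw : DecayBound (r + 3) A (w t)) (l : Fin 4) : Tame r A (A * weightSum) (V t l) :=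
  Tame.of_decayBound (h.decayBound ht hw l) ((h.decayBound ht hw l).of_le hr)

theorem tame_cut (h : Flow q P w V τ) (ht : t ∈ Set.Icc 0 τ) (hr : 2 ≤ r)
    (hw : DecayBound (r + 3) A (w t)) (M : ℕ) (l : Fin 4) :
    Tame r A (A * weightSum) (cut M (V t l)) :=
  (h.tame ht hr hw l).of_norm_coef_le (norm_coef_cut_le M _)

theorem star_paraCoeff (h : Flow q P w V τ) (ht : t ∈ Set.Icc 0 τ) (M : ℕ) (l : Fin 4) :
    star (paraCoeff P M (V t) l) = paraCoeff P M (V t) l :=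
  star_aeval _ fun i => by rw [star_cut, h.star_eq t ht]

theorem continuousOn_cut (h : Flow q P w V τ) (M : ℕ) (l : Fin 4) :
    ContinuousOn (fun s => cut M (V s l)) (Set.Icc 0 τ) :=
  continuousOn_finsetSum _ fun m _ => ContinuousOn.fun_smul
    ((continuousOn_const.mul (h.continuousOn m)).congr fun s hs => h.coef_eq s hs l m)
    continuousOn_const

theorem continuousOn_symbol (h : Flow q P w V τ) (M : ℕ) (k m : ℤ) :
    ContinuousOn (fun t => symbol (paraCoeff P M (V t)) k m) (Set.Icc 0 τ) :=
  continuousOn_finsetSum _ fun l _ => ContinuousOn.mul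
    ((coef m).continuous.comp_continuousOn ((continuous_aeval (pderiv l P)).comp_continuousOn
      (continuousOn_pi.mpr fun i => h.continuousOn_cut M i))) continuousOn_const

theorem hasDerivAt_cut (h : Flow q P w V τ) (M : ℕ) (l : Fin 4) (ht : t ∈ Set.Ioo 0 τ) :
    HasDerivAt (fun s => cut M (V s l)) (∑ m ∈ Finset.Icc (-(M : ℤ)) M, ((Complex.I * m) ^ (l : ℕ) *
      (-Complex.I * q m * w t m + coef m (aeval (V t) P))) •
        (fourier m : C(AddCircle T, ℂ))) t := by
  refine HasDerivAt.fun_sum fun m _ => HasDerivAt.smul_const ?_ _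
  refine ((h.hasDerivAt t ht m).const_mul _).congr_of_eventuallyEq ?_
  filter_upwards [Ioo_mem_nhds ht.1 ht.2] with s hs
  exact h.coef_eq s (Set.Ioo_subset_Icc_self hs) l m

theorem exists_decayBound_nonlin (h : Flow q P w V τ) (hr : 2 ≤ r)
    (hw : ∀ t ∈ Set.Icc 0 τ, DecayBound (r + 3) A (w t)) :
    ∃ B, ∀ t ∈ Set.Icc 0 τ, DecayBound r B (coef · (aeval (V t) P)) := by
  obtain ⟨B, _, hB⟩ := Tame.exists_aeval (T := T) P r A (A * weightSum)
  exact ⟨B, fun t ht => (hB _ (h.tame ht hr (hw t ht))).decayBound⟩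

theorem norm_timeDeriv_le (hr : 5 ≤ r) {B C : ℝ} {k : ℤ} {N : ℤ → ℂ} {v : ℤ → ℂ}
    (hC : |q k| ≤ C * (1 + |(k : ℝ)|) ^ (n + 1)) (hv : DecayBound (r + 3) A v)
    (hN : DecayBound r B N) (l : Fin 4) :
    (1 + |(k : ℝ)|) ^ 2 * ‖(Complex.I * k) ^ (l : ℕ) * (-Complex.I * q k * v k + N k)‖ ≤
      (C * A + B) * (1 + |(k : ℝ)|) ^ (n + 1) := by
  set y := 1 + |(k : ℝ)|
  have hy1 : 1 ≤ y := by linarith [abs_nonneg (k : ℝ)]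
  have hC0 : 0 ≤ C := nonneg_of_mul_nonneg_left ((abs_nonneg _).trans hC) (by positivity)
  have hlin : ‖-Complex.I * q k * v k‖ ≤ C * y ^ (n + 1) * ‖v k‖ := by
    rw [norm_mul, norm_mul, norm_neg, Complex.norm_I, one_mul, Complex.norm_real]
    gcongr
    exact hC
  calc _ ≤ y ^ 2 * (y ^ 3 * (C * y ^ (n + 1) * ‖v k‖ + ‖N k‖)) := by
        rw [norm_mul]
        gcongr
        exacts [norm_I_mul_pow_le hy1 (by linarith) l, norm_add_le_of_le hlin le_rfl]
    _ = C * y ^ (n + 1) * (y ^ 5 * ‖v k‖) + 1 * (y ^ 5 * ‖N k‖) := by ring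
    _ ≤ C * y ^ (n + 1) * A + y ^ (n + 1) * B := by
        gcongr
        exacts [hv.of_le (by omega) k, one_le_pow₀ hy1, hN.of_le hr k]
    _ = _ := by ring

theorem exists_hasDerivAt_cut (h : Flow q P w V τ) (hq : Dispersive n q) (hr : 5 ≤ r)
    (hw : ∀ t ∈ Set.Icc 0 τ, DecayBound (r + 3) A (w t)) :
    ∃ C, ∀ t ∈ Set.Ioo 0 τ, ∀ M : ℕ, ∃ d : Fin 4 → C(AddCircle T, ℂ), ∀ l,
      HasDerivAt (fun s => cut M (V s l)) (d l) t ∧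
      DecayBound 2 (C * (1 + M) ^ (n + 1)) (coef · (d l)) := by
  obtain ⟨C, hC⟩ := hq.exists_abs_le
  obtain ⟨B, hB⟩ := h.exists_decayBound_nonlin (by omega) hw
  refine ⟨|C * A + B|, fun t ht M => ⟨_, fun l => ⟨h.hasDerivAt_cut M l ht, fun k => ?_⟩⟩⟩
  have ht' := Set.Ioo_subset_Icc_self ht
  simp only [map_sum, map_smul, coef_fourier, smul_eq_mul, mul_ite, mul_one, mul_zero,
    Finset.sum_ite_eq, Finset.mem_Icc, ← abs_le]
  split_ifs with hk
  · refine (norm_timeDeriv_le hr (hC k) (hw t ht') (hB t ht') l).trans ?_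
    gcongr
    exacts [le_abs_self _, mod_cast hk]
  · rw [norm_zero, mul_zero]
    positivity

theorem exists_sum_norm_coef_paraCoeff_le (P : MvPolynomial (Fin 4) ℝ) (r : ℕ) (A α : ℝ) :
    ∃ α', ∀ (M : ℕ) (v : Fin 4 → C(AddCircle T, ℂ)), (∀ i, Tame r A α (cut M (v i))) →
      ∀ l (s : Finset ℤ), ∑ m ∈ s, ‖coef m (paraCoeff P M v l)‖ ≤ α' := by
  choose A' α' h using fun l => Tame.exists_aeval (T := T) (pderiv l P) r A α
  refine ⟨∑ l, |α' l|, fun M v hv l s => ?_⟩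
  calc _ ≤ α' l := (h l _ hv).sum_norm_coef_le s
    _ ≤ |α' l| := le_abs_self _
    _ ≤ _ := Finset.single_le_sum (fun l _ => abs_nonneg (α' l)) (Finset.mem_univ l)

theorem exists_sum_norm_coef_pderiv_pderiv_le (P : MvPolynomial (Fin 4) ℝ) (r : ℕ) (A α : ℝ) :
    ∃ α', ∀ v d : Fin 4 → C(AddCircle T, ℂ), (∀ i, Tame r A α (v i)) →
      ∀ B β, (∀ i, Tame r B β (d i)) → ∀ l (s : Finset ℤ),
        ∑ m ∈ s, ‖coef m (∑ i, aeval v (pderiv i (pderiv l P)) * d i)‖ ≤ α' * β := by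
  choose A' α' h using fun l i => Tame.exists_aeval (T := T) (pderiv i (pderiv l P)) r A α
  refine ⟨∑ l, ∑ i, |α' l i|, fun v d hv B β hd l s => ?_⟩
  have hβ : 0 ≤ β := (hd 0).nonneg_right
  calc _ ≤ ∑ m ∈ s, ∑ i, ‖coef m (aeval v (pderiv i (pderiv l P)) * d i)‖ := by
        gcongr with m
        rw [map_sum]
        exact norm_sum_le _ _
    _ = ∑ i, ∑ m ∈ s, ‖coef m (aeval v (pderiv i (pderiv l P)) * d i)‖ := Finset.sum_comm
    _ ≤ ∑ i, |α' l i| * β := by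
        gcongr with i
        exact (((h l i v hv).mul (hd i)).sum_norm_coef_le s).trans (by gcongr; exact le_abs_self _)
    _ = (∑ i, |α' l i|) * β := by rw [Finset.sum_mul]
    _ ≤ _ := mul_le_mul_of_nonneg_right (Finset.single_le_sum (f := fun l => ∑ i, |α' l i|)
        (fun l _ => Finset.sum_nonneg fun i _ => abs_nonneg _) (Finset.mem_univ l)) hβ

theorem exists_sum_norm_symbol_le (h : Flow q P w V τ) (hr : 2 ≤ r)
    (hw : ∀ t ∈ Set.Icc 0 τ, DecayBound (r + 3) A (w t)) :
    ∃ C, ∀ t ∈ Set.Icc 0 τ, ∀ (M : ℕ) (k : ℤ) (s : Finset ℤ), 1 ≤ |(k : ℝ)| →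
      (∀ m ∈ s, 2 * |(m : ℝ)| ≤ |(k : ℝ)|) →
        ∑ m ∈ s, ‖symbol (paraCoeff P M (V t)) k m‖ ≤ C * |(k : ℝ)| ^ 3 := by
  obtain ⟨α, hα⟩ := exists_sum_norm_coef_paraCoeff_le (T := T) P r A (A * weightSum)
  refine ⟨4 * α * 2 ^ 3, fun t ht M k s hk hs => ?_⟩
  refine (sum_norm_symbol_le (by linarith)
    (fun l => hα M _ (h.tame_cut ht hr (hw t ht) M) l s)
    fun m hm => abs_sub_le_two_mul_abs (hs m hm)).trans_eq ?_
  push_cast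
  ring

theorem exists_hasDerivAt_symbol (h : Flow q P w V τ) (hn : 5 ≤ n) (hq : Dispersive n q)
    (hr : 5 ≤ r) (hw : ∀ t ∈ Set.Icc 0 τ, DecayBound (r + 3) A (w t)) :
    ∃ C, ∀ t ∈ Set.Ioo 0 τ, ∀ (M : ℕ) (k : ℤ) (s : Finset ℤ), 1 ≤ M → (M : ℝ) ^ 2 ≤ |(k : ℝ)| →
      (∀ m ∈ s, 2 * |(m : ℝ)| ≤ |(k : ℝ)|) → ∃ g' : ℤ → ℂ,
        (∀ m, HasDerivAt (fun t => symbol (paraCoeff P M (V t)) k m) (g' m) t) ∧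
        ∑ m ∈ s, ‖g' m‖ ≤ C * |(k : ℝ)| ^ (n + 1) := by
  obtain ⟨α, hα⟩ := exists_sum_norm_coef_pderiv_pderiv_le (T := T) P 2 A (A * weightSum)
  obtain ⟨G, hG⟩ := h.exists_hasDerivAt_cut hq hr hw
  refine ⟨|4 * α * G * weightSum| * 2 ^ (n + 4), fun t ht M k s hM hMk hs => ?_⟩
  have hM1 : (1 : ℝ) ≤ M := mod_cast hM
  have hk1 : 1 ≤ |(k : ℝ)| := (one_le_pow₀ hM1).trans hMk
  obtain ⟨d, hd⟩ := hG t ht M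
  have ht' := Set.Ioo_subset_Icc_self ht
  refine ⟨symbol (fun l => ∑ i, aeval (fun i => cut M (V t i)) (pderiv i (pderiv l P)) * d i) k,
    fun m => HasDerivAt.fun_sum fun l _ => HasDerivAt.mul_const ?_ _, ?_⟩
  · exact ((coef m).restrictScalars ℝ).hasFDerivAt.comp_hasDerivAt t
      (hasDerivAt_aeval _ fun i => (hd i).1)
  · calc _ ≤ _ := sum_norm_symbol_le (by linarith) (fun l => hα _ d
            (fun i => (h.tame_cut ht' (by omega) (hw t ht') M i).of_le (by omega)) _ _
            (fun i => Tame.of_decayBound (hd i).2 (hd i).2) l s)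
          fun m hm => abs_sub_le_two_mul_abs (hs m hm)
      _ = 4 * α * G * weightSum * ((1 + M) ^ (n + 1) * (2 * |(k : ℝ)|) ^ 3) := by
          push_cast
          ring
      _ ≤ |4 * α * G * weightSum| * (2 ^ (n + 4) * |(k : ℝ)| ^ (n + 1)) := by
          gcongr ?_ * ?_
          exacts [le_abs_self _, one_add_pow_mul_cube_le hn hM1 hMk]
      _ = _ := by ring

theorem eventually_coef_zero_paraCoeff_two_le (h : Flow q P w V τ) (hr : 3 ≤ r)
    (hw : ∀ t ∈ Set.Icc 0 τ, DecayBound (r + 3) A (w t)) :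
    ∃ c > 0, ∀ᶠ M : ℕ in atTop, ∀ t ∈ Set.Icc 0 τ,
      (coef 0 (paraCoeff P M (V t) 2)).re ≤ -c := by
  obtain ⟨ε, hε, c, hc, hparabolic⟩ := h.parabolic
  have hlim : Tendsto (fun M : ℕ => A / (1 + (M : ℝ)) ^ 1 * weightSum) atTop (nhds 0) := by
    have h := (tendsto_const_nhds (x := A)).div_atTop
      (tendsto_atTop_add_const_left atTop (1 : ℝ) tendsto_natCast_atTop_atTop)
    simpa using h.mul_const weightSum
  refine ⟨c, hc, (hlim.eventually (gt_mem_nhds hε)).mono fun M hM t ht => ?_⟩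
  refine hparabolic t ht _ fun l => ?_
  rw [norm_sub_rev]
  exact ((Tame.sub_cut hr (h.decayBound ht (hw t ht) l) M).norm_le).trans_lt hM

theorem eventually_le_symbol_zero_re (h : Flow q P w V τ) (hr : 3 ≤ r)
    (hw : ∀ t ∈ Set.Icc 0 τ, DecayBound (r + 3) A (w t)) :
    ∃ σ > 0, ∀ᶠ M : ℕ in atTop, ∀ t ∈ Set.Icc 0 τ, ∀ k : ℤ, (M : ℝ) ≤ |(k : ℝ)| →
      σ * |(k : ℝ)| ^ 2 ≤ (symbol (paraCoeff P M (V t)) k 0).re := by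
  obtain ⟨c, hc, hmean⟩ := h.eventually_coef_zero_paraCoeff_two_le hr hw
  obtain ⟨α, hα⟩ := exists_sum_norm_coef_paraCoeff_le (T := T) P r A (A * weightSum)
  refine ⟨c / 2, by positivity, ?_⟩
  filter_upwards [hmean, eventually_ge_atTop 1,
    tendsto_natCast_atTop_atTop.eventually_ge_atTop (2 * α / c)] with M hM hM1 hMα t ht k hk
  have hzero : -α ≤ (coef 0 (paraCoeff P M (V t) 0)).re := by
    have h0 := hα M _ (h.tame_cut ht (by omega) (hw t ht) M) 0 {0}
    rw [Finset.sum_singleton] at h0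
    exact neg_le_of_abs_le ((Complex.abs_re_le_norm _).trans h0)
  have hk1 : 1 ≤ |(k : ℝ)| := le_trans (mod_cast hM1) hk
  have hαk : 2 * α ≤ |(k : ℝ)| ^ 2 * c := (div_le_iff₀ hc).mp
    ((hMα.trans hk).trans (le_self_pow₀ hk1 two_ne_zero))
  rw [symbol_zero_re (h.star_paraCoeff ht M), ← sq_abs (k : ℝ)]
  have hsecond := mul_le_mul_of_nonneg_left (hM t ht) (sq_nonneg |(k : ℝ)|)
  linarith

theorem exists_norm_paralinear_remainder_le (h : Flow q P w V τ) (hr : n + 2 ≤ r)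
    (hw : ∀ t ∈ Set.Icc 0 τ, DecayBound (r + 3) A (w t)) :
    ∃ (D : ℕ) (C : ℝ), 0 ≤ C ∧ ∀ t ∈ Set.Icc 0 τ, ∀ (M : ℕ) (k : ℤ), (D + 1) * M < |k| →
      (1 + |(k : ℝ)|) ^ r * ‖coef k (aeval (V t) P) - symbol (paraCoeff P M (V t)) k 0 * w t k -
        ∑ m ∈ nearFreq (D * M), symbol (paraCoeff P M (V t)) k m * w t (k - m)‖ ≤
          C / (1 + M) ^ n := by
  obtain ⟨D, C, hC0, hC⟩ := exists_paralinearization (T := T) P hr A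
  refine ⟨D, C, hC0, fun t ht M k hk => ?_⟩
  have hterm (m : ℤ) : ∑ l, coef m (paraCoeff P M (V t) l) * coef (k - m) (V t l) =
      symbol (paraCoeff P M (V t)) k m * w t (k - m) := by
    simp only [symbol, Finset.sum_mul, h.coef_eq t ht, mul_assoc]
  have hzero : (0 : ℤ) ∈ Finset.Icc (-((D * M : ℕ) : ℤ)) (D * M : ℕ) :=
    Finset.mem_Icc.mpr ⟨by omega, by omega⟩
  have hpara := hC (V t) (h.decayBound ht (hw t ht)) M k hk
  simp only [hterm] at hpara
  rwa [← Finset.add_sum_erase _ _ hzero, sub_zero, ← sub_sub] at hpara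

end Flow

end Flow

section DecayGain

open MvPolynomial Filter

namespace Flow

variable {T : ℝ} [hT : Fact (0 < T)] {n r : ℕ} {q : ℤ → ℝ} {P : MvPolynomial (Fin 4) ℝ}
  {w : ℝ → ℤ → ℂ} {V : ℝ → Fin 4 → C(AddCircle T, ℂ)} {τ A : ℝ}

theorem exists_norm_nonlin_le (h : Flow q P w V τ) (hr : 2 ≤ r)
    (hw : ∀ t ∈ Set.Icc 0 τ, DecayBound (r + 3) A (w t)) :
    ∃ C, ∀ t ∈ Set.Icc 0 τ, ∀ k m : ℤ, 0 < |(k : ℝ)| → 2 * |(m : ℝ)| ≤ |(k : ℝ)| →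
      ‖coef (k - m) (aeval (V t) P)‖ ≤ C * |(k : ℝ)| ^ 3 * (|(k : ℝ)| ^ (r + 3))⁻¹ := by
  obtain ⟨B, hB⟩ := h.exists_decayBound_nonlin hr hw
  refine ⟨2 ^ r * B, fun t ht k m hk hm => ?_⟩
  calc _ ≤ 2 ^ r * B * (|(k : ℝ)| ^ r)⁻¹ :=
        le_mul_inv_of_weight_mul_le hk (half_abs_le_abs_sub hm) (norm_nonneg _)
          (hB t ht (k - m))
    _ = _ := by
        rw [pow_add]
        field_simp

theorem exists_norm_remainder_le (h : Flow q P w V τ) (hr : 6 ≤ r)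
    (hw : ∀ t ∈ Set.Icc 0 τ, DecayBound (r + 3) A (w t)) :
    ∃ (D : ℕ) (C : ℝ), ∀ t ∈ Set.Icc 0 τ, ∀ (M : ℕ) (k : ℤ), D + 2 ≤ M →
      (M : ℝ) ^ 2 ≤ |(k : ℝ)| → |(k : ℝ)| ≤ (1 + M : ℝ) ^ 2 →
        ‖coef k (aeval (V t) P) - symbol (paraCoeff P M (V t)) k 0 * w t k -
          ∑ m ∈ nearFreq (D * M), symbol (paraCoeff P M (V t)) k m * w t (k - m)‖ ≤
            C * (|(k : ℝ)| * (|(k : ℝ)| ^ (r + 3))⁻¹) := by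
  obtain ⟨D, C, hC0, hC⟩ := h.exists_norm_paralinear_remainder_le (n := 4) hr hw
  refine ⟨D, 2 ^ r * C, fun t ht M k hDM hMk hkM => ?_⟩
  have hM : (2 : ℝ) ≤ M := mod_cast (by omega : 2 ≤ M)
  have hk0 : 0 < |(k : ℝ)| := lt_of_lt_of_le (by positivity) hMk
  have hfar : ((D + 1) * M : ℝ) < |(k : ℝ)| :=
    calc ((D + 1) * M : ℝ) < M * M := by
          gcongr
          exact mod_cast hDM
      _ ≤ _ := by rwa [← sq]
  have hweight := hC t ht M k (mod_cast hfar)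
  calc _ ≤ 2 ^ r * (C / (1 + M) ^ 4) * (|(k : ℝ)| ^ r)⁻¹ :=
        le_mul_inv_of_weight_mul_le hk0 (half_le_self hk0.le) (norm_nonneg _) hweight
    _ ≤ 2 ^ r * (C / |(k : ℝ)| ^ 2) * (|(k : ℝ)| ^ r)⁻¹ := by
        gcongr
        calc _ ≤ ((1 + M : ℝ) ^ 2) ^ 2 := by gcongr
          _ = _ := by ring
    _ = _ := by
        rw [pow_add]
        field_simp

theorem eventually_paralinearMode (h : Flow q P w V τ) (hn : 5 ≤ n) (hq : Dispersive n q)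
    (hr : 6 ≤ r) (hw : ∀ t ∈ Set.Icc 0 τ, DecayBound (r + 3) A (w t)) :
    ∃ (σ c C : ℝ) (D : ℕ), 0 < σ ∧ 0 < c ∧ ∀ᶠ M : ℕ in atTop, ∀ a ∈ Set.Icc 0 τ, ∀ k : ℤ,
      (M : ℝ) ^ 2 ≤ |(k : ℝ)| → |(k : ℝ)| ≤ (1 + M : ℝ) ^ 2 →
        ParalinearMode n q w (fun t l => coef l (aeval (V t) P))
          (fun t => symbol (paraCoeff P M (V t)) k) (fun t => symbol (paraCoeff P M (V t)) k 0)
          (nearFreq (D * M)) k a τ σ c C |(k : ℝ)| (|(k : ℝ)| ^ (r + 3))⁻¹ := by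
  obtain ⟨B, hB⟩ := h.exists_norm_nonlin_le (by omega) hw
  obtain ⟨G, hG⟩ := h.exists_sum_norm_symbol_le (by omega) hw
  obtain ⟨G', hG'⟩ := h.exists_hasDerivAt_symbol hn hq (by omega) hw
  obtain ⟨σ, hσ, hparabolic⟩ := h.eventually_le_symbol_zero_re (by omega) hw
  obtain ⟨D, R, hR⟩ := h.exists_norm_remainder_le hr hw
  obtain ⟨c, hc, K, hK⟩ := hq.exists_nonresonant
  obtain ⟨C, hCA, hCB, hCG, hCG', hCR⟩ : ∃ C, 2 ^ (r + 3) * A ≤ C ∧ B ≤ C ∧ G ≤ C ∧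
      G' ≤ C ∧ R ≤ C :=
    ((eventually_ge_atTop _).and <| (eventually_ge_atTop _).and <| (eventually_ge_atTop _).and <|
      (eventually_ge_atTop _).and <| eventually_ge_atTop _).exists
  refine ⟨σ, c, C, D, hσ, hc, ?_⟩
  filter_upwards [hparabolic, eventually_ge_atTop (2 * D + 2),
    tendsto_natCast_atTop_atTop.eventually_ge_atTop K] with M hMσ hMD hMK a ha k hMk hkM
  have hM1 : (1 : ℝ) ≤ M := mod_cast (by omega : 1 ≤ M)
  have hMk' : (M : ℝ) ≤ |(k : ℝ)| := (le_self_pow₀ hM1 two_ne_zero).trans hMk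
  have hk1 : 1 ≤ |(k : ℝ)| := hM1.trans hMk'
  have hk0 : 0 < |(k : ℝ)| := zero_lt_one.trans_le hk1
  have hI : Set.Icc a τ ⊆ Set.Icc 0 τ := Set.Icc_subset_Icc_left ha.1
  have hI' : Set.Ioo a τ ⊆ Set.Ioo 0 τ := Set.Ioo_subset_Ioo_left ha.1
  have hnear (m) (hm : m ∈ nearFreq (D * M)) : 2 * |(m : ℝ)| ≤ |(k : ℝ)| :=
    two_mul_abs_le_of_mem_nearFreq (by omega) hMk hm
  have hmode {t} (ht : t ∈ Set.Icc a τ) {l : ℤ} (hl : |(k : ℝ)| / 2 ≤ |(l : ℝ)|) :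
      ‖w t l‖ ≤ C * (|(k : ℝ)| ^ (r + 3))⁻¹ :=
    (le_mul_inv_of_weight_mul_le hk0 hl (norm_nonneg _) (hw t (hI ht) l)).trans (by gcongr)
  exact
  { one_le_scale := hk1
    size_pos := by positivity
    continuousOn := fun l => (h.continuousOn l).mono hI
    continuousOn_coeff := fun m => (h.continuousOn_symbol M k m).mono hI
    hasDerivAt := fun t ht l => h.hasDerivAt t (hI' ht) l
    hasDerivAt_coeff := fun t ht => by
      obtain ⟨g', hg', hsum⟩ := hG' t (hI' ht) M k (nearFreq (D * M)) (by omega) hMk hnear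
      exact ⟨g', fun m _ => hg' m, hsum.trans (by gcongr)⟩
    nonresonant := fun m hm => hK k m (hMK.trans hMk') (Finset.ne_of_mem_erase hm) (hnear m hm)
    parabolic := fun t ht => hMσ t (hI ht) k hMk'
    norm_symbol_le := fun t ht => (show _ ≤ G * |(k : ℝ)| ^ 3 by
      simpa using hG t (hI ht) M k {0} hk1 (by simp)).trans (by gcongr)
    sum_norm_coeff_le := fun t ht => (hG t (hI ht) M k _ hk1 hnear).trans (by gcongr)
    norm_mode_le := fun t ht => hmode ht (half_le_self hk0.le)
    norm_near_mode_le := fun t ht m hm => hmode ht (half_abs_le_abs_sub (hnear m hm))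
    norm_nonlin_le := fun t ht m hm => (hB t (hI ht) k m hk0 (hnear m hm)).trans (by gcongr)
    norm_remainder_le := fun t ht =>
      (hR t (hI ht) M k (by omega) hMk hkM).trans (by gcongr) }

theorem exists_decayBound_succ (h : Flow q P w V τ) (hn : 6 ≤ n) (hq : Dispersive n q)
    {s : ℕ} (hs : 9 ≤ s) (hw : ∀ t ∈ Set.Icc 0 τ, DecayBound s A (w t)) {τ' : ℝ} (hτ : τ' < τ) :
    ∃ A', ∀ t ∈ Set.Icc 0 τ', DecayBound (s + 1) A' (w t) := by
  obtain ⟨r, rfl⟩ := Nat.exists_eq_add_of_le' (show 3 ≤ s by omega)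
  obtain ⟨σ, c, B, D, hσ, hc, hmode⟩ := h.eventually_paralinearMode (by omega) hq (by omega) hw
  obtain ⟨C, hC⟩ := ParalinearMode.exists_norm_le hn hσ hc (sub_pos.mpr hτ) B
  obtain ⟨M₀, hM₀⟩ := eventually_atTop.mp (hmode.and (eventually_ge_atTop 1))
  refine ⟨max (2 ^ (r + 4) * C) ((1 + (1 + M₀ : ℝ) ^ 2) * A), fun t ht k => ?_⟩
  have ht0 : t ∈ Set.Icc 0 τ := ⟨ht.1, ht.2.trans hτ.le⟩
  have hk : |(k : ℝ)| = k.natAbs := by rw [Nat.cast_natAbs, Int.cast_abs]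
  set M := Nat.sqrt k.natAbs
  have hMk : (M : ℝ) ^ 2 ≤ |(k : ℝ)| := by
    rw [hk]
    exact mod_cast Nat.sqrt_le' _
  have hkM : |(k : ℝ)| ≤ (1 + M : ℝ) ^ 2 := by
    rw [hk, add_comm]
    exact mod_cast (Nat.lt_succ_sqrt' _).le
  rcases le_or_gt M₀ M with hM | hM
  · refine le_max_of_le_left ?_
    obtain ⟨hmodeM, hM1⟩ := hM₀ M hM
    have hk1 : 1 ≤ |(k : ℝ)| := (one_le_pow₀ (mod_cast hM1)).trans hMk
    have hgain := hC q w _ _ _ _ k t τ _ _ (hmodeM t ht0 k hMk hkM) (by linarith [ht.2])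
    calc _ ≤ (2 * |(k : ℝ)|) ^ (r + 4) * (C * (|(k : ℝ)| ^ (r + 3))⁻¹ / |(k : ℝ)|) := by
          gcongr
          linarith
      _ = _ := by
          rw [mul_pow, pow_succ _ (r + 3)]
          field_simp
          ring
  · refine le_max_of_le_right ?_
    calc _ = (1 + |(k : ℝ)|) * ((1 + |(k : ℝ)|) ^ (r + 3) * ‖w t k‖) := by ring
      _ ≤ (1 + (1 + M₀ : ℝ) ^ 2) * A := by
          gcongr
          · exact hkM.trans (by gcongr)
          · exact hw t ht0 k

theorem exists_decayBound_add (h : Flow q P w V τ) (hn : 6 ≤ n) (hq : Dispersive n q) {s : ℕ}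
    (hs : 9 ≤ s) (hw : ∀ t ∈ Set.Icc 0 τ, DecayBound s A (w t)) {τ' : ℝ} (hτ : τ' < τ) (p : ℕ) :
    ∃ A', ∀ t ∈ Set.Icc 0 τ', DecayBound (s + p) A' (w t) := by
  induction p generalizing τ' with
  | zero => exact ⟨A, fun t ht => hw t ⟨ht.1, ht.2.trans hτ.le⟩⟩
  | succ p ih =>
    obtain ⟨τ₁, hτ₁, hτ₁'⟩ := exists_between hτ
    obtain ⟨A₁, hA₁⟩ := ih hτ₁'
    exact (h.mono hτ₁'.le).exists_decayBound_succ hn hq (by omega) hA₁ hτ₁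

end Flow

end DecayGain

section WeakDerivative

variable {a b : ℝ}

/-- Smooth functions vanishing outside `(a, b)`, the test functions for weak derivatives in time.
They need not vanish near the end points. -/
structure IsTestFunction (a b : ℝ) (η : ℝ → ℝ) : Prop where
  contDiff : ContDiff ℝ (⊤ : ℕ∞) η
  eq_zero : ∀ t ∉ Set.Ioo a b, η t = 0

theorem exists_isTestFunction_integral_eq_one (hab : a < b) :
    ∃ ρ, IsTestFunction a b ρ ∧ ∫ t in a..b, ρ t = 1 := by
  obtain ⟨m, hm⟩ := exists_between hab
  obtain ⟨f, hfs, -, hf, hf01, hfm⟩ :=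
    exists_contDiff_tsupport_subset (n := ⊤) (Ioo_mem_nhds hm.1 hm.2)
  have hpos : 0 < ∫ t in a..b, f t :=
    intervalIntegral.integral_pos hab hf.continuous.continuousOn (fun t _ => (hf01 ⟨t, rfl⟩).1)
      ⟨m, Set.Ioo_subset_Icc_self hm, hfm ▸ one_pos⟩
  refine ⟨fun t => (∫ t in a..b, f t)⁻¹ * f t, ⟨contDiff_const.mul hf, fun t ht => ?_⟩, ?_⟩
  · rw [image_eq_zero_of_notMem_tsupport fun h => ht (hfs h), mul_zero]
  · rw [intervalIntegral.integral_const_mul, inv_mul_cancel₀ hpos.ne']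

theorem IsTestFunction.hasDerivAt_primitive {ρ : ℝ → ℝ} (hρ : IsTestFunction a b ρ) (t : ℝ) :
    HasDerivAt (fun t => ∫ s in a..t, ρ s) (ρ t) t :=
  (hρ.contDiff.continuous.integral_hasStrictDerivAt a t).hasDerivAt

theorem IsTestFunction.primitive {ρ : ℝ → ℝ} (hρ : IsTestFunction a b ρ)
    (hint : ∫ t in a..b, ρ t = 0) : IsTestFunction a b fun t => ∫ s in a..t, ρ s := by
  have hii (x y : ℝ) : IntervalIntegrable ρ MeasureTheory.volume x y :=
    hρ.contDiff.continuous.intervalIntegrable x y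
  have hvanish {x y : ℝ} (h : ∀ z ∈ Set.uIoc x y, z ∉ Set.Ioo a b) : ∫ s in x..y, ρ s = 0 :=
    intervalIntegral.integral_zero_ae (.of_forall fun z hz => hρ.eq_zero z (h z hz))
  refine ⟨contDiff_infty_iff_deriv.mpr ⟨fun t => (hρ.hasDerivAt_primitive t).differentiableAt, ?_⟩,
    fun t ht => ?_⟩
  · rw [funext fun t => (hρ.hasDerivAt_primitive t).deriv]
    exact hρ.contDiff
  · rcases not_and_or.mp ht with hta | htb
    · refine hvanish fun z hz hz' => ?_
      rw [Set.uIoc_of_ge (not_lt.mp hta)] at hz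
      exact hz.2.not_gt hz'.1
    · rw [← intervalIntegral.integral_add_adjacent_intervals (hii a b) (hii b t), hint, zero_add]
      refine hvanish fun z hz hz' => ?_
      rw [Set.uIoc_of_le (not_lt.mp htb)] at hz
      exact hz.1.not_gt hz'.2

variable {E : Type*} [NormedAddCommGroup E] [NormedSpace ℝ E] {f F : ℝ → E}

theorem IsTestFunction.intervalIntegrable_smul {η : ℝ → ℝ} (hη : IsTestFunction a b η)
    (hab : a ≤ b) (hf : ContinuousOn f (Set.Icc a b)) :
    IntervalIntegrable (fun t => η t • f t) MeasureTheory.volume a b :=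
  (hη.contDiff.continuous.continuousOn.smul hf).intervalIntegrable_of_Icc hab

variable [CompleteSpace E]

theorem eqOn_zero_of_integral_smul_eq_zero (hf : ContinuousOn f (Set.Ioo a b))
    (h : ∀ η, IsTestFunction a b η → ∫ t in a..b, η t • f t = 0) :
    Set.EqOn f 0 (Set.Ioo a b) := by
  have hae : ∀ᵐ t, t ∈ Set.Ioo a b → f t = 0 := by
    refine isOpen_Ioo.ae_eq_zero_of_integral_contDiff_smul_eq_zero
      (hf.locallyIntegrableOn measurableSet_Ioo) fun η hη _ hsupp => ?_
    have hzero (t) (ht : t ∉ Set.Ioo a b) : η t = 0 :=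
      image_eq_zero_of_notMem_tsupport fun h => ht (hsupp h)
    rw [← intervalIntegral.integral_eq_integral_of_support_subset (a := a) (b := b)]
    · exact h η ⟨hη, hzero⟩
    · refine fun t ht => Set.Ioo_subset_Ioc_self (by_contra fun hnot => ht ?_)
      simp only [hzero t hnot, zero_smul]
  exact MeasureTheory.Measure.eqOn_open_of_ae_eq
    ((MeasureTheory.ae_restrict_iff' measurableSet_Ioo).mpr hae) isOpen_Ioo hf continuousOn_const

/-- The lemma of du Bois-Reymond. -/
theorem exists_eqOn_const_of_integral_smul_eq_zero (hab : a < b)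
    (hf : ContinuousOn f (Set.Icc a b))
    (h : ∀ ρ, IsTestFunction a b ρ → ∫ t in a..b, ρ t = 0 → ∫ t in a..b, ρ t • f t = 0) :
    ∃ c, Set.EqOn f (fun _ => c) (Set.Ioo a b) := by
  obtain ⟨ρ₀, hρ₀, hint₀⟩ := exists_isTestFunction_integral_eq_one hab
  set c := ∫ t in a..b, ρ₀ t • f t
  have hzero : Set.EqOn (fun t => f t - c) 0 (Set.Ioo a b) := by
    refine eqOn_zero_of_integral_smul_eq_zero
      ((hf.mono Set.Ioo_subset_Icc_self).sub continuousOn_const) fun η hη => ?_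
    set m := ∫ t in a..b, η t
    have hρ : IsTestFunction a b fun t => η t - m * ρ₀ t :=
      ⟨hη.contDiff.sub (contDiff_const.mul hρ₀.contDiff), fun t ht => by
        rw [hη.eq_zero t ht, hρ₀.eq_zero t ht, mul_zero, sub_zero]⟩
    have hmean : ∫ t in a..b, (η t - m * ρ₀ t) = 0 := by
      rw [intervalIntegral.integral_sub (hη.contDiff.continuous.intervalIntegrable _ _)
        ((hρ₀.contDiff.continuous.intervalIntegrable _ _).const_mul m),
        intervalIntegral.integral_const_mul, hint₀, mul_one, sub_self]
    have hηf := hη.intervalIntegrable_smul hab.le hf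
    have hρ₀f : IntervalIntegrable (fun t => m • ρ₀ t • f t) MeasureTheory.volume a b :=
      (hρ₀.intervalIntegrable_smul hab.le hf).smul m
    have horth := h _ hρ hmean
    simp only [sub_smul, mul_smul] at horth
    rw [intervalIntegral.integral_sub hηf hρ₀f, intervalIntegral.integral_smul] at horth
    simp only [smul_sub]
    rwa [intervalIntegral.integral_sub hηf (hη.intervalIntegrable_smul hab.le continuousOn_const),
      intervalIntegral.integral_smul_const]
  exact ⟨c, fun t ht => sub_eq_zero.mp (hzero ht)⟩

theorem hasDerivAt_of_weak (hf : ContinuousOn f (Set.Icc a b)) (hF : ContinuousOn F (Set.Icc a b))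
    (h : ∀ η, IsTestFunction a b η → ∫ t in a..b, (deriv η t • f t + η t • F t) = 0)
    {t : ℝ} (ht : t ∈ Set.Ioo a b) : HasDerivAt f (F t) t := by
  have hab : a < b := ht.1.trans ht.2
  have hFi : IntervalIntegrable F MeasureTheory.volume a b := hF.intervalIntegrable_of_Icc hab.le
  set G : ℝ → E := fun s => ∫ z in a..s, F z
  have hGd (s) (hs : s ∈ Set.Ioo a b) : HasDerivAt G (F s) s := by
    have hs' : s ∈ Set.uIcc a b := Set.Icc_subset_uIcc (Set.Ioo_subset_Icc_self hs)
    exact intervalIntegral.integral_hasDerivAt_right (hFi.mono_set (Set.uIcc_subset_uIcc_left hs'))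
      ((hF.mono Set.Ioo_subset_Icc_self).stronglyMeasurableAtFilter isOpen_Ioo s hs)
      (hF.continuousAt (Icc_mem_nhds hs.1 hs.2))
  have hGc : ContinuousOn G (Set.Icc a b) := by
    simpa only [Set.uIcc_of_le hab.le] using
      intervalIntegral.continuousOn_primitive_interval' hFi Set.left_mem_uIcc
  obtain ⟨c, hc⟩ := exists_eqOn_const_of_integral_smul_eq_zero hab (hf.sub hGc) fun ρ hρ hint => by
    have hη := hρ.primitive hint
    have hweak := h _ hη
    simp only [fun s => (hρ.hasDerivAt_primitive s).deriv] at hweak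
    have hparts := intervalIntegral.integral_deriv_smul_eq_sub_of_hasDeriv_right
      hη.contDiff.continuous.continuousOn (by rwa [Set.uIcc_of_le hab.le])
      (fun s _ => (hρ.hasDerivAt_primitive s).hasDerivWithinAt)
      (fun s hs =>
        (hGd s (by rwa [min_eq_left hab.le, max_eq_right hab.le] at hs)).hasDerivWithinAt)
      (hρ.contDiff.continuous.intervalIntegrable a b) hFi
    rw [hη.eq_zero b (by simp), hη.eq_zero a (by simp), zero_smul, zero_smul, sub_zero] at hparts
    have hηF := hη.intervalIntegrable_smul hab.le hF
    rw [intervalIntegral.integral_add (hρ.intervalIntegrable_smul hab.le hGc) hηF] at hparts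
    rw [intervalIntegral.integral_add (hρ.intervalIntegrable_smul hab.le hf) hηF] at hweak
    simp only [Pi.sub_apply, smul_sub]
    rw [intervalIntegral.integral_sub (hρ.intervalIntegrable_smul hab.le hf)
      (hρ.intervalIntegrable_smul hab.le hGc), sub_eq_zero]
    exact add_right_cancel (hweak.trans hparts.symm)
  refine ((hGd t ht).const_add c).congr_of_eventuallyEq ?_
  filter_upwards [Ioo_mem_nhds ht.1 ht.2] with s hs
  exact sub_eq_iff_eq_add.mp (hc hs)

end WeakDerivative

section DispersionRelation

open Polynomial

theorem exists_mul_abs_pow_le_abs_eval {R : ℝ[X]} (hR : R ≠ 0) :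
    ∃ c > 0, ∃ K : ℝ, ∀ x, K ≤ |x| → c * |x| ^ R.natDegree ≤ |R.eval x| := by
  obtain ⟨C, hC, hbound⟩ := (isBigO_cobounded_of_degree_le (P := X ^ R.natDegree) (Q := R)
    (by rw [degree_X_pow, degree_eq_natDegree hR])).exists_pos
  have hev := hbound.bound
  rw [← comap_norm_atTop, (Filter.atTop_basis.comap (norm : ℝ → ℝ)).eventually_iff] at hev
  obtain ⟨K, -, hK⟩ := hev
  refine ⟨C⁻¹, inv_pos.mpr hC, K, fun x hx => (inv_mul_le_iff₀ hC).mpr ?_⟩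
  simpa only [eval_pow, eval_X, norm_pow, Real.norm_eq_abs] using @hK x hx

theorem abs_eval_le (Q : ℝ[X]) (x : ℝ) :
    |Q.eval x| ≤ (∑ i ∈ Finset.range (Q.natDegree + 1), |Q.coeff i|) *
      (1 + |x|) ^ Q.natDegree := by
  rw [eval_eq_sum_range, Finset.sum_mul]
  refine (Finset.abs_sum_le_sum_abs _ _).trans (Finset.sum_le_sum fun i hi => ?_)
  rw [abs_mul, abs_pow]
  have hx := abs_nonneg x
  gcongr ?_ * ?_
  calc |x| ^ i ≤ (1 + |x|) ^ i := by gcongr; linarith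
    _ ≤ (1 + |x|) ^ Q.natDegree :=
      pow_le_pow_right₀ (by linarith) (Nat.lt_succ_iff.mp (Finset.mem_range.mp hi))

theorem exists_eval_sub_eval_eq (Q : ℝ[X]) (x y : ℝ) :
    ∃ ξ ∈ Set.uIcc x y, Q.eval y - Q.eval x = Q.derivative.eval ξ * (y - x) := by
  wlog hxy : x < y generalizing x y
  · rcases (not_lt.mp hxy).eq_or_lt with rfl | hyx
    · exact ⟨y, Set.left_mem_uIcc, by simp⟩
    · obtain ⟨ξ, hξ, h⟩ := this y x hyx
      exact ⟨ξ, Set.uIcc_comm x y ▸ hξ, by linear_combination -h⟩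
  obtain ⟨ξ, hξ, h⟩ := exists_hasDerivAt_eq_slope (Q.eval ·) (Q.derivative.eval ·) hxy
    Q.continuous.continuousOn fun z _ => Q.hasDerivAt z
  exact ⟨ξ, Set.Icc_subset_uIcc (Set.Ioo_subset_Icc_self hξ),
    by rw [h, div_mul_cancel₀ _ (sub_pos.mpr hxy).ne']⟩

theorem dispersive_eval {Q : ℝ[X]} {n : ℕ} (hQ : Q.natDegree = n + 1) :
    Dispersive n fun k => Q.eval (k : ℝ) := by
  have hdeg : Q.derivative.natDegree = n := by rw [natDegree_derivative, hQ, Nat.add_sub_cancel]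
  have hne : Q.derivative ≠ 0 := fun h => by
    have := derivative_eq_zero.mp h
    omega
  refine ⟨?_, _, fun k => hQ ▸ abs_eval_le Q k⟩
  obtain ⟨c, hc, K, hK⟩ := exists_mul_abs_pow_le_abs_eval hne
  rw [hdeg] at hK
  refine ⟨c / 2 ^ n, by positivity, 2 * K, fun k m hk hm hmk => ?_⟩
  obtain ⟨ξ, hξ, hslope⟩ := exists_eval_sub_eval_eq Q ((k - m : ℤ) : ℝ) k
  have hkm : (k : ℝ) - ((k - m : ℤ) : ℝ) = m := by push_cast; ring
  have hξk : |(k : ℝ)| ≤ 2 * |ξ| := by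
    have h₁ := Set.abs_sub_right_of_mem_uIcc hξ
    have h₂ := abs_sub_abs_le_abs_sub (k : ℝ) ξ
    rw [hkm] at h₁
    linarith
  have hm₁ : (1 : ℝ) ≤ |(m : ℝ)| := by exact_mod_cast Int.one_le_abs hm
  calc c / 2 ^ n * |(k : ℝ)| ^ n ≤ c / 2 ^ n * (2 * |ξ|) ^ n := by gcongr
    _ = c * |ξ| ^ n := by rw [mul_pow]; field_simp
    _ ≤ |Q.derivative.eval ξ| := hK ξ (by linarith)
    _ ≤ |Q.derivative.eval ξ| * |(m : ℝ)| := le_mul_of_one_le_right (abs_nonneg _) hm₁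
    _ = _ := by rw [hslope, hkm, abs_mul]

/-- The dispersion relation `q` of `L = Σ γ_i ∂_x^{2(j-i)+1}`, normalised so that
`L e^{ikx} = i q(k) e^{ikx}`. -/
noncomputable def dispersionRelation (jj : ℕ) (γ : ℕ → ℝ) : ℝ[X] :=
  ∑ i ∈ Finset.range (jj + 1), C (γ i * (-1) ^ (jj - i)) * X ^ (2 * (jj - i) + 1)

theorem eval_dispersionRelation (jj : ℕ) (γ : ℕ → ℝ) (x : ℝ) :
    (dispersionRelation jj γ).eval x =
      ∑ i ∈ Finset.range (jj + 1), γ i * (-1) ^ (jj - i) * x ^ (2 * (jj - i) + 1) := by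
  simp [dispersionRelation, eval_finsetSum]

theorem natDegree_dispersionRelation {jj : ℕ} {γ : ℕ → ℝ} (hγ : γ 0 ≠ 0) :
    (dispersionRelation jj γ).natDegree = 2 * jj + 1 := by
  refine natDegree_eq_of_le_of_coeff_ne_zero (natDegree_sum_le_of_forall_le _ _ fun i _ =>
    (natDegree_C_mul_X_pow_le _ _).trans (by omega)) ?_
  rw [dispersionRelation, finsetSum_coeff, Finset.sum_eq_single 0]
  · rw [coeff_C_mul_X_pow, if_pos (by omega)]
    exact mul_ne_zero hγ (pow_ne_zero _ (by norm_num))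
  · intro i hi hi0
    rw [coeff_C_mul_X_pow, if_neg (by have := Finset.mem_range.mp hi; omega)]
  · simp

end DispersionRelation

instance fact_two_pi_pos : Fact (0 < 2 * Real.pi) := ⟨Real.two_pi_pos⟩

section Circle

variable {f g : ℝ → ℝ}

open Classical in
/-- A continuous `2π`-periodic function as a function on the circle, and `0` for any other `f`. -/
noncomputable def toCircle (f : ℝ → ℝ) : C(AddCircle (2 * Real.pi), ℂ) :=
  if h : Continuous f ∧ Function.Periodic f (2 * Real.pi) then
    ⟨fun x => (h.2.lift x : ℂ), Complex.continuous_ofReal.comp (continuous_coinduced_dom.mpr h.1)⟩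
  else 0

theorem toCircle_coe (hf : Continuous f) (hp : Function.Periodic f (2 * Real.pi)) (x : ℝ) :
    toCircle f (x : AddCircle (2 * Real.pi)) = f x := by
  rw [toCircle, dif_pos ⟨hf, hp⟩]
  rfl

theorem star_toCircle (f : ℝ → ℝ) : star (toCircle f) = toCircle f := by
  rw [toCircle]
  split_ifs with h
  · ext x
    exact Complex.conj_ofReal _
  · exact star_zero _

theorem aeval_toCircle {σ : Type*} {f : σ → ℝ → ℝ} (hf : ∀ l, Continuous (f l))
    (hp : ∀ l, Function.Periodic (f l) (2 * Real.pi)) (P : MvPolynomial σ ℝ) :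
    MvPolynomial.aeval (fun l => toCircle (f l)) P =
      toCircle fun x => MvPolynomial.eval (fun l => f l x) P := by
  ext x
  induction x using QuotientAddGroup.induction_on with
  | H x =>
    rw [toCircle_coe (f := fun x => MvPolynomial.eval (fun l => f l x) P)
      ((MvPolynomial.continuous_eval P).comp (continuous_pi hf)) fun x => by simp only [hp _ x]]
    induction P using MvPolynomial.induction_on with
    | C c => simp
    | add p q hp hq => simp [hp, hq]
    | mul_X p i h => simp [h, toCircle_coe (hf i) (hp i)]

theorem fourier_two_pi_coe (k : ℤ) (x : ℝ) :
    fourier k (x : AddCircle (2 * Real.pi)) = Complex.exp (Complex.I * k * x) := by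
  rw [fourier_coe_apply]
  congr 1
  have : (Real.pi : ℂ) ≠ 0 := Complex.ofReal_ne_zero.mpr Real.pi_ne_zero
  push_cast
  field_simp

theorem coef_toCircle (hf : Continuous f) (hp : Function.Periodic f (2 * Real.pi)) (k : ℤ) :
    coef k (toCircle f) = fc f k := by
  rw [coef_apply, fourierCoeff_eq_intervalIntegral _ k 0, fc, zero_add, Complex.real_smul]
  congr 1
  · simp
  · refine intervalIntegral.integral_congr fun x _ => ?_
    rw [toCircle_coe hf hp, fourier_two_pi_coe, smul_eq_mul, mul_comm, Int.cast_neg, mul_neg,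
      neg_mul Complex.I]

theorem fc_sub (hf : Continuous f) (hg : Continuous g) (k : ℤ) :
    fc (fun x => f x - g x) k = fc f k - fc g k := by
  rw [fc, fc, fc, ← mul_sub, ← intervalIntegral.integral_sub]
  · simp only [Complex.ofReal_sub, sub_mul]
  · exact Continuous.intervalIntegrable (by fun_prop) _ _
  · exact Continuous.intervalIntegrable (by fun_prop) _ _

end Circle

section FourierDerivative

variable {f : ℝ → ℝ}

theorem periodic_iteratedDeriv {c : ℝ} (hp : Function.Periodic f c) (l : ℕ) :
    Function.Periodic (iteratedDeriv l f) c := fun x => by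
  rw [← congrFun (iteratedDeriv_comp_add_const l f c) x, funext hp]

theorem hasDerivAt_cexp_mul_ofReal (c : ℂ) (x : ℝ) :
    HasDerivAt (fun x : ℝ => Complex.exp (c * x)) (c * Complex.exp (c * x)) x := by
  simpa [mul_comm] using (((hasDerivAt_id (x : ℂ)).const_mul c).cexp).comp_ofReal

theorem fc_deriv (hf : ContDiff ℝ 1 f) (hp : Function.Periodic f (2 * Real.pi)) (k : ℤ) :
    fc (deriv f) k = Complex.I * k * fc f k := by
  set e : ℝ → ℂ := fun x => Complex.exp (-Complex.I * k * x)
  have hparts : ∫ x in (0 : ℝ)..(2 * Real.pi), (f x : ℂ) * (-Complex.I * k * e x) =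
      f (2 * Real.pi) * e (2 * Real.pi) - f 0 * e 0 -
        ∫ x in (0 : ℝ)..(2 * Real.pi), ((deriv f x : ℝ) : ℂ) * e x :=
    intervalIntegral.integral_mul_deriv_eq_deriv_mul
      (fun x _ => (hf.differentiable one_ne_zero x).hasDerivAt.ofReal_comp)
      (fun x _ => hasDerivAt_cexp_mul_ofReal _ x)
      (Continuous.intervalIntegrable (by fun_prop) _ _)
      (Continuous.intervalIntegrable (by fun_prop) _ _)
  have hboundary : (f (2 * Real.pi) : ℂ) * e (2 * Real.pi) = f 0 * e 0 := by
    have hf₀ : f (2 * Real.pi) = f 0 := by simpa using hp 0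
    have he : e (2 * Real.pi) = 1 := Complex.exp_eq_one_iff.mpr ⟨-k, by push_cast; ring⟩
    have he₀ : e 0 = 1 := by simp [e]
    rw [hf₀, he, he₀]
  simp only [mul_left_comm _ (-Complex.I * (k : ℂ)), intervalIntegral.integral_const_mul,
    hboundary] at hparts
  rw [fc, fc]
  linear_combination (Complex.ofReal (2 * Real.pi))⁻¹ * hparts

theorem fc_iteratedDeriv {l : ℕ} (hf : ContDiff ℝ l f) (hp : Function.Periodic f (2 * Real.pi))
    (k : ℤ) : fc (iteratedDeriv l f) k = (Complex.I * k) ^ l * fc f k := by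
  induction l with
  | zero => simp
  | succ l ih =>
    have hl : ContDiff ℝ 1 (iteratedDeriv l f) := by
      rw [iteratedDeriv_eq_iterate]
      exact ContDiff.iterate_deriv' 1 l (by rwa [add_comm])
    rw [iteratedDeriv_succ, fc_deriv hl (periodic_iteratedDeriv hp l), ih (hf.of_le (by simp)),
      pow_succ', mul_assoc (Complex.I * (k : ℂ))]

end FourierDerivative

namespace MemHs

variable {f g : ℝ → ℝ} {s : ℕ}

theorem sub (hf : MemHs s f) (hg : MemHs s g) : MemHs s fun x => f x - g x := by
  refine ⟨hf.1.sub hg.1, hf.2.1.sub hg.2.1, Summable.of_nonneg_of_le (fun k => by positivity)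
    (fun k => ?_) ((hf.2.2.add hg.2.2).mul_left 2)⟩
  rw [fc_sub hf.1 hg.1, ← mul_add, mul_left_comm]
  gcongr
  calc ‖fc f k - fc g k‖ ^ 2 ≤ (‖fc f k‖ + ‖fc g k‖) ^ 2 := by gcongr; exact norm_sub_le _ _
    _ ≤ 2 * (‖fc f k‖ ^ 2 + ‖fc g k‖ ^ 2) := add_sq_le

theorem decayBound (hf : MemHs s f) : DecayBound s (2 ^ s * hsNorm s f) (fc f) := fun k => by
  have hweight : (1 + |(k : ℝ)|) ^ 2 ≤ 2 ^ 2 * (1 + (k : ℝ) ^ 2) := by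
    nlinarith [sq_abs (k : ℝ), sq_nonneg (|(k : ℝ)| - 1), sq_nonneg (k : ℝ)]
  refine le_of_sq_le_sq ?_ (by rw [hsNorm]; positivity)
  calc ((1 + |(k : ℝ)|) ^ s * ‖fc f k‖) ^ 2
      = ((1 + |(k : ℝ)|) ^ 2) ^ s * ‖fc f k‖ ^ 2 := by rw [mul_pow, pow_right_comm]
    _ ≤ (2 ^ 2 * (1 + (k : ℝ) ^ 2)) ^ s * ‖fc f k‖ ^ 2 := by gcongr
    _ = (2 ^ s) ^ 2 * ((1 + (k : ℝ) ^ 2) ^ s * ‖fc f k‖ ^ 2) := by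
      rw [mul_pow, pow_right_comm, mul_assoc]
    _ ≤ (2 ^ s) ^ 2 * ∑' k : ℤ, (1 + (k : ℝ) ^ 2) ^ s * ‖fc f k‖ ^ 2 := by
      gcongr
      exact hf.2.2.le_tsum k fun _ _ => by positivity
    _ = (2 ^ s * hsNorm s f) ^ 2 := by
      rw [mul_pow, hsNorm, Real.sq_sqrt (tsum_nonneg fun _ => by positivity)]

end MemHs

section Jet

variable {f g : ℝ → ℝ} {s : ℕ}

/-- The derivatives `f, f', f'', f'''` of a `C³` periodic function, on the circle. -/
noncomputable def jet (f : ℝ → ℝ) (l : Fin 4) : C(AddCircle (2 * Real.pi), ℂ) :=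
  toCircle (iteratedDeriv l f)

theorem contDiff_fin (hf : ContDiff ℝ 3 f) (l : Fin 4) : ContDiff ℝ l f :=
  hf.of_le (by exact_mod_cast Nat.le_of_lt_succ l.2)

theorem continuous_iteratedDeriv_fin (hf : ContDiff ℝ 3 f) (l : Fin 4) :
    Continuous (iteratedDeriv l f) :=
  (contDiff_fin hf l).continuous_iteratedDeriv' l

theorem continuous_eval_iteratedDeriv (hf : ContDiff ℝ 3 f) (P : MvPolynomial (Fin 4) ℝ) :
    Continuous fun x => MvPolynomial.eval (fun l : Fin 4 => iteratedDeriv l f x) P :=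
  (MvPolynomial.continuous_eval P).comp (continuous_pi (continuous_iteratedDeriv_fin hf))

theorem coef_jet (hf : ContDiff ℝ 3 f) (hp : Function.Periodic f (2 * Real.pi)) (l : Fin 4)
    (k : ℤ) : coef k (jet f l) = (Complex.I * k) ^ (l : ℕ) * fc f k := by
  rw [jet, coef_toCircle (continuous_iteratedDeriv_fin hf l) (periodic_iteratedDeriv hp l),
    fc_iteratedDeriv (contDiff_fin hf l) hp]

theorem coef_aeval_jet (hf : ContDiff ℝ 3 f) (hp : Function.Periodic f (2 * Real.pi))
    (P : MvPolynomial (Fin 4) ℝ) (k : ℤ) : coef k (MvPolynomial.aeval (jet f) P) =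
      fc (fun x => MvPolynomial.eval (fun l : Fin 4 => iteratedDeriv l f x) P) k := by
  have haeval : MvPolynomial.aeval (jet f) P = toCircle fun x => MvPolynomial.eval _ P :=
    aeval_toCircle (f := fun l : Fin 4 => iteratedDeriv l f) (continuous_iteratedDeriv_fin hf)
      (fun l => periodic_iteratedDeriv hp l) P
  rw [haeval, coef_toCircle (continuous_eval_iteratedDeriv hf P)]
  exact fun x => by simp only [periodic_iteratedDeriv hp _ x]

theorem norm_jet_sub_le (hs : 5 ≤ s) (hf : ContDiff ℝ 3 f) (hg : ContDiff ℝ 3 g) (hf' : MemHs s f)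
    (hg' : MemHs s g) (l : Fin 4) :
    ‖jet f l - jet g l‖ ≤ 2 ^ s * weightSum * hsNorm s fun x => f x - g x := by
  have hdecay : DecayBound 2 (2 ^ s * hsNorm s fun x => f x - g x)
      fun k => coef k (jet f l - jet g l) := fun k => by
    refine le_trans ?_ (((hf'.sub hg').decayBound.of_le hs) k)
    beta_reduce
    rw [map_sub, coef_jet hf hf'.2.1, coef_jet hg hg'.2.1, ← mul_sub, ← fc_sub hf'.1 hg'.1,
      norm_mul, ← mul_assoc, pow_add (1 + |(k : ℝ)|) 2 3]
    gcongr
    exact norm_I_mul_pow_le (le_add_of_nonneg_right (abs_nonneg _))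
      (le_add_of_nonneg_left zero_le_one) l
  calc ‖jet f l - jet g l‖ ≤ ∑' k, ‖coef k (jet f l - jet g l)‖ :=
        norm_le_tsum_norm_coef hdecay.summable_norm
    _ ≤ _ := hdecay.tsum_norm_le
    _ = _ := mul_right_comm _ _ _

end Jet

section Nonlinearity

open MvPolynomial

variable {f : ℝ → ℝ} {j0 : ℕ} {lam : Fin j0 → ℝ} {a b c d : Fin j0 → ℕ}

/-- The polynomial `N` with `N(u) = N(∂_x³u, ∂_x²u, ∂_xu, u)`; the variable `X l` stands for
`∂_x^l u`. -/
noncomputable def nonlinearity (lam : Fin j0 → ℝ) (a b c d : Fin j0 → ℕ) :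
    MvPolynomial (Fin 4) ℝ :=
  ∑ j, C (lam j) * X 3 ^ a j * X 2 ^ b j * X 1 ^ c j * X 0 ^ d j

theorem eval_nonlinearity (f : ℝ → ℝ) (x : ℝ) :
    eval (fun l : Fin 4 => iteratedDeriv l f x) (nonlinearity lam a b c d) =
      Nfun j0 lam a b c d f x := by
  simp [nonlinearity, Nfun, iteratedDeriv_one, iteratedDeriv_zero]

theorem continuous_Nfun (hf : ContDiff ℝ 3 f) : Continuous (Nfun j0 lam a b c d f) := by
  simpa only [eval_nonlinearity] using
    continuous_eval_iteratedDeriv hf (nonlinearity lam a b c d)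

theorem coef_nonlinearity (hf : ContDiff ℝ 3 f) (hp : Function.Periodic f (2 * Real.pi)) (k : ℤ) :
    coef k (aeval (jet f) (nonlinearity lam a b c d)) = fc (Nfun j0 lam a b c d f) k := by
  simp only [coef_aeval_jet hf hp, eval_nonlinearity]

theorem eval_pderiv_two_nonlinearity (f : ℝ → ℝ) (x : ℝ) :
    eval (fun l : Fin 4 => iteratedDeriv l f x) (pderiv 2 (nonlinearity lam a b c d)) =
      ∑ j, lam j * b j * ((iteratedDeriv 3 f x) ^ a j * (iteratedDeriv 2 f x) ^ (b j - 1) *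
        (deriv f x) ^ c j * (f x) ^ d j) := by
  simp only [nonlinearity, map_sum]
  refine Finset.sum_congr rfl fun j _ => ?_
  simp only [Fin.isValue, Derivation.leibniz, Derivation.leibniz_pow, pderiv_X, ne_eq,
    Fin.reduceEq, not_false_eq_true, Pi.single_eq_of_ne, smul_eq_mul, mul_zero,
    Pi.single_eq_same, mul_one, nsmul_eq_mul, derivation_C, add_zero, zero_add, map_mul, map_pow,
    eval_X, Fin.coe_ofNat_eq_mod, Nat.zero_mod, iteratedDeriv_zero, Nat.one_mod, iteratedDeriv_one,
    eval_C, Nat.mod_succ, map_natCast, Nat.reduceMod]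
  ring

theorem re_coef_zero_pderiv_two_nonlinearity (hf : ContDiff ℝ 3 f)
    (hp : Function.Periodic f (2 * Real.pi)) :
    (coef 0 (aeval (jet f) (pderiv 2 (nonlinearity lam a b c d)))).re = PN j0 lam a b c d f := by
  have h0 : Continuous f := hf.continuous
  have h1 : Continuous (deriv f) := hf.continuous_deriv (by norm_num)
  have h2 : Continuous (iteratedDeriv 2 f) := continuous_iteratedDeriv_fin hf 2
  simp only [coef_aeval_jet hf hp, eval_pderiv_two_nonlinearity, fc, PN, Int.cast_zero, mul_zero,
    zero_mul, Complex.exp_zero, mul_one]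
  rw [intervalIntegral.integral_ofReal, ← Complex.ofReal_inv, ← Complex.ofReal_mul,
    Complex.ofReal_re, intervalIntegral.integral_finsetSum fun j _ =>
      Continuous.intervalIntegrable (by fun_prop) _ _, Finset.mul_sum]
  refine Finset.sum_congr rfl fun j _ => ?_
  rw [intervalIntegral.integral_const_mul]
  ring

end Nonlinearity

section Modes

variable {f : ℝ → ℝ}

theorem mul_cexp_eq_cos_sin (r x : ℝ) (k : ℤ) : (r : ℂ) * Complex.exp (-Complex.I * k * x) =
    (r * Real.cos (k * x) : ℝ) - (r * Real.sin (k * x) : ℝ) * Complex.I := by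
  rw [show -Complex.I * k * x = ((-(k * x) : ℝ) : ℂ) * Complex.I by push_cast; ring,
    Complex.exp_mul_I, ← Complex.ofReal_cos, ← Complex.ofReal_sin, Real.cos_neg, Real.sin_neg]
  push_cast
  ring

theorem fc_eq_cos_sin (hf : Continuous f) (k : ℤ) :
    fc f k = ((2 * Real.pi)⁻¹ * ∫ x in (0 : ℝ)..(2 * Real.pi), f x * Real.cos (k * x) : ℝ) -
      ((2 * Real.pi)⁻¹ * ∫ x in (0 : ℝ)..(2 * Real.pi), f x * Real.sin (k * x) : ℝ) *
        Complex.I := by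
  simp only [fc, mul_cexp_eq_cos_sin]
  rw [intervalIntegral.integral_sub (Continuous.intervalIntegrable (by fun_prop) _ _)
    (Continuous.intervalIntegrable (by fun_prop) _ _), intervalIntegral.integral_mul_const,
    intervalIntegral.integral_ofReal, intervalIntegral.integral_ofReal]
  push_cast
  ring

theorem fc_re (hf : Continuous f) (k : ℤ) : (fc f k).re =
    (2 * Real.pi)⁻¹ * ∫ x in (0 : ℝ)..(2 * Real.pi), f x * Real.cos (k * x) := by
  rw [fc_eq_cos_sin hf, Complex.sub_re, Complex.re_ofReal_mul, Complex.ofReal_re, Complex.I_re,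
    mul_zero, sub_zero]

theorem fc_im (hf : Continuous f) (k : ℤ) : (fc f k).im =
    -(2 * Real.pi)⁻¹ * ∫ x in (0 : ℝ)..(2 * Real.pi), f x * Real.sin (k * x) := by
  rw [fc_eq_cos_sin hf, Complex.sub_im, Complex.im_ofReal_mul, Complex.ofReal_im, Complex.I_im,
    mul_one, zero_sub, neg_mul]

theorem sum_iteratedDeriv_cos (jj : ℕ) (γ : ℕ → ℝ) (y x : ℝ) :
    ∑ i ∈ Finset.range (jj + 1),
      γ i * iteratedDeriv (2 * (jj - i) + 1) (fun x => Real.cos (y * x)) x =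
      -(dispersionRelation jj γ).eval y * Real.sin (y * x) := by
  rw [eval_dispersionRelation, ← Finset.sum_neg_distrib, Finset.sum_mul]
  refine Finset.sum_congr rfl fun i _ => ?_
  rw [iteratedDeriv_comp_const_mul Real.contDiff_cos, Real.iteratedDeriv_odd_cos]
  simp only [Pi.mul_apply, Pi.pow_apply, Pi.neg_apply, Pi.one_apply]
  ring

theorem sum_iteratedDeriv_sin (jj : ℕ) (γ : ℕ → ℝ) (y x : ℝ) :
    ∑ i ∈ Finset.range (jj + 1),
      γ i * iteratedDeriv (2 * (jj - i) + 1) (fun x => Real.sin (y * x)) x =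
      (dispersionRelation jj γ).eval y * Real.cos (y * x) := by
  rw [eval_dispersionRelation, Finset.sum_mul]
  refine Finset.sum_congr rfl fun i _ => ?_
  rw [iteratedDeriv_comp_const_mul Real.contDiff_sin, Real.iteratedDeriv_odd_sin]
  simp only [Pi.mul_apply, Pi.pow_apply, Pi.neg_apply, Pi.one_apply]
  ring

end Modes

section Equation

variable {jj j0 s : ℕ} {γ : ℕ → ℝ} {lam : Fin j0 → ℝ} {a b c d : Fin j0 → ℕ} {T : ℝ}
  {u : ℝ → ℝ → ℝ}

theorem continuousOn_jet (hs : 5 ≤ s) (hu : ∀ t ∈ Set.Icc 0 T, ContDiff ℝ 3 (u t))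
    (hm : ∀ t ∈ Set.Icc 0 T, MemHs s (u t)) (hc : ContInHs s (Set.Icc 0 T) u) :
    ContinuousOn (fun t => jet (u t)) (Set.Icc 0 T) := by
  refine continuousOn_pi.mpr fun l => Metric.continuousOn_iff.mpr fun t₀ ht₀ ε hε => ?_
  have hW : 0 < 2 ^ s * weightSum + 1 := by have := weightSum_nonneg; positivity
  obtain ⟨δ, hδ, h⟩ := hc t₀ ht₀ (ε / (2 ^ s * weightSum + 1)) (by positivity)
  refine ⟨δ, hδ, fun t ht htδ => ?_⟩
  have hnorm : 0 ≤ hsNorm s fun x => u t x - u t₀ x := Real.sqrt_nonneg _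
  calc dist (jet (u t) l) (jet (u t₀) l) = ‖jet (u t) l - jet (u t₀) l‖ := dist_eq_norm _ _
    _ ≤ 2 ^ s * weightSum * hsNorm s fun x => u t x - u t₀ x :=
      norm_jet_sub_le hs (hu t ht) (hu t₀ ht₀) (hm t ht) (hm t₀ ht₀) l
    _ ≤ (hsNorm s fun x => u t x - u t₀ x) * (2 ^ s * weightSum + 1) := by linarith
    _ < ε := (lt_div_iff₀ hW).mp (h t ht (by rwa [← Real.dist_eq]))

open MvPolynomial in
theorem continuous_coef_aeval {T : ℝ} [Fact (0 < T)] {ι : Type*} (k : ℤ) (P : MvPolynomial ι ℝ) :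
    Continuous fun v : ι → C(AddCircle T, ℂ) => coef k (aeval v P) :=
  (coef k).continuous.comp (continuous_aeval P)

namespace IsSolutionH

theorem contDiff (hu : IsSolutionH jj γ j0 lam a b c d 0 T u) {t : ℝ} (ht : t ∈ Set.Icc 0 T) :
    ContDiff ℝ 3 (u t) :=
  (hu.1 t ht).1

theorem periodic (hu : IsSolutionH jj γ j0 lam a b c d 0 T u) {t : ℝ} (ht : t ∈ Set.Icc 0 T) :
    Function.Periodic (u t) (2 * Real.pi) :=
  (hu.1 t ht).2

theorem continuousOn_fc (hu : IsSolutionH jj γ j0 lam a b c d 0 T u)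
    (hj : ContinuousOn (fun t => jet (u t)) (Set.Icc 0 T)) (k : ℤ) :
    ContinuousOn (fun t => fc (u t) k) (Set.Icc 0 T) := by
  refine ((coef k).continuous.comp_continuousOn (continuousOn_pi.mp hj 0)).congr fun t ht => ?_
  simp [coef_jet (hu.contDiff ht) (hu.periodic ht)]

theorem integral_mul_eq_zero (hu : IsSolutionH jj γ j0 lam a b c d 0 T u) (hT : 0 ≤ T)
    {χ χL η : ℝ → ℝ} (hχ : ContDiff ℝ (⊤ : ℕ∞) χ) (hχp : Function.Periodic χ (2 * Real.pi))
    (hχL : Continuous χL)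
    (hL : ∀ x, ∑ i ∈ Finset.range (jj + 1), γ i * iteratedDeriv (2 * (jj - i) + 1) χ x = χL x)
    (hη : IsTestFunction 0 T η) :
    ∫ t in (0 : ℝ)..T, (deriv η t * (∫ x in (0 : ℝ)..(2 * Real.pi), u t x * χ x) +
      η t * ((∫ x in (0 : ℝ)..(2 * Real.pi), u t x * χL x) +
        ∫ x in (0 : ℝ)..(2 * Real.pi), Nfun j0 lam a b c d (u t) x * χ x)) = 0 := by
  refine Eq.trans (intervalIntegral.integral_congr fun t ht => ?_)
    (hu.2 (fun t x => η t * χ x) ((hη.contDiff.comp contDiff_fst).mul (hχ.comp contDiff_snd))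
      (fun t x => by simp only [hχp x]) fun t ht x => by rw [hη.eq_zero t ht, zero_mul])
  rw [Set.uIcc_of_le hT] at ht
  have hut : Continuous (u t) := (hu.contDiff ht).continuous
  have hN : Continuous (Nfun j0 lam a b c d (u t)) := continuous_Nfun (hu.contDiff ht)
  have hχc : Continuous χ := hχ.continuous
  have hderiv (x : ℝ) : deriv (fun τ => η τ * χ x) t = deriv η t * χ x :=
    deriv_mul_const (hη.contDiff.differentiable (by simp) t) _
  have hlinear (x : ℝ) : ∑ i ∈ Finset.range (jj + 1),
      γ i * iteratedDeriv (2 * (jj - i) + 1) (fun x => η t * χ x) x = η t * χL x := by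
    simp only [← hL, Finset.mul_sum, iteratedDeriv_const_mul_field, mul_left_comm]
  simp only [hderiv, hlinear]
  rw [← intervalIntegral.integral_const_mul, ← intervalIntegral.integral_add
    (Continuous.intervalIntegrable (by fun_prop) _ _)
    (Continuous.intervalIntegrable (by fun_prop) _ _), ← intervalIntegral.integral_const_mul,
    ← intervalIntegral.integral_add (Continuous.intervalIntegrable (by fun_prop) _ _)
    (Continuous.intervalIntegrable (by fun_prop) _ _)]
  exact intervalIntegral.integral_congr fun x _ => by ring

theorem integral_re_eq_zero (hu : IsSolutionH jj γ j0 lam a b c d 0 T u) (hT : 0 ≤ T)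
    {η : ℝ → ℝ} (hη : IsTestFunction 0 T η) (k : ℤ) :
    ∫ t in (0 : ℝ)..T, (deriv η t * (fc (u t) k).re +
      η t * ((dispersionRelation jj γ).eval (k : ℝ) * (fc (u t) k).im +
        (fc (Nfun j0 lam a b c d (u t)) k).re)) = 0 := by
  have h := hu.integral_mul_eq_zero hT (χ := fun x => Real.cos (k * x))
    (Real.contDiff_cos.comp (contDiff_const.mul contDiff_id))
    (fun x => by simp only [mul_add, Real.cos_add_int_mul_two_pi]) (by fun_prop)
    (sum_iteratedDeriv_cos jj γ k) hη
  rw [← mul_eq_zero_iff_left (inv_ne_zero Real.two_pi_pos.ne'),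
    ← intervalIntegral.integral_const_mul] at h
  refine (intervalIntegral.integral_congr fun t ht => ?_).trans h
  rw [Set.uIcc_of_le hT] at ht
  simp only [fc_re (hu.contDiff ht).continuous, fc_im (hu.contDiff ht).continuous,
    fc_re (continuous_Nfun (hu.contDiff ht)), intervalIntegral.integral_const_mul,
    mul_left_comm _ (-(dispersionRelation jj γ).eval (k : ℝ))]
  ring

theorem integral_im_eq_zero (hu : IsSolutionH jj γ j0 lam a b c d 0 T u) (hT : 0 ≤ T)
    {η : ℝ → ℝ} (hη : IsTestFunction 0 T η) (k : ℤ) :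
    ∫ t in (0 : ℝ)..T, (deriv η t * (fc (u t) k).im +
      η t * (-(dispersionRelation jj γ).eval (k : ℝ) * (fc (u t) k).re +
        (fc (Nfun j0 lam a b c d (u t)) k).im)) = 0 := by
  have h := hu.integral_mul_eq_zero hT (χ := fun x => Real.sin (k * x))
    (Real.contDiff_sin.comp (contDiff_const.mul contDiff_id))
    (fun x => by simp only [mul_add, Real.sin_add_int_mul_two_pi]) (by fun_prop)
    (sum_iteratedDeriv_sin jj γ k) hη
  rw [← mul_eq_zero_iff_left (neg_ne_zero.mpr (inv_ne_zero Real.two_pi_pos.ne')),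
    ← intervalIntegral.integral_const_mul] at h
  refine (intervalIntegral.integral_congr fun t ht => ?_).trans h
  rw [Set.uIcc_of_le hT] at ht
  simp only [fc_re (hu.contDiff ht).continuous, fc_im (hu.contDiff ht).continuous,
    fc_im (continuous_Nfun (hu.contDiff ht)), intervalIntegral.integral_const_mul,
    mul_left_comm _ ((dispersionRelation jj γ).eval (k : ℝ))]
  ring

theorem hasDerivAt_fc (hu : IsSolutionH jj γ j0 lam a b c d 0 T u)
    (hj : ContinuousOn (fun t => jet (u t)) (Set.Icc 0 T)) {t : ℝ} (ht : t ∈ Set.Ioo 0 T) (k : ℤ) :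
    HasDerivAt (fun t => fc (u t) k)
      (-Complex.I * (dispersionRelation jj γ).eval (k : ℝ) * fc (u t) k +
        coef k (MvPolynomial.aeval (jet (u t)) (nonlinearity lam a b c d))) t := by
  have hT : 0 ≤ T := (ht.1.trans ht.2).le
  set F : ℝ → ℂ := fun t => -Complex.I * (dispersionRelation jj γ).eval (k : ℝ) * fc (u t) k +
    coef k (MvPolynomial.aeval (jet (u t)) (nonlinearity lam a b c d)) with hF
  have hw : ContinuousOn (fun t => fc (u t) k) (Set.Icc 0 T) := hu.continuousOn_fc hj k
  have hFc : ContinuousOn F (Set.Icc 0 T) :=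
    (continuousOn_const.mul hw).add ((continuous_coef_aeval k _).comp_continuousOn hj)
  have hFeq {t : ℝ} (ht : t ∈ Set.uIcc 0 T) : F t = -Complex.I *
      (dispersionRelation jj γ).eval (k : ℝ) * fc (u t) k + fc (Nfun j0 lam a b c d (u t)) k := by
    rw [Set.uIcc_of_le hT] at ht
    simp only [hF, coef_nonlinearity (hu.contDiff ht) (hu.periodic ht)]
  refine hasDerivAt_of_weak hw hFc (fun η hη => ?_) ht
  have hint : IntervalIntegrable (fun t => deriv η t • fc (u t) k + η t • F t)
      MeasureTheory.volume 0 T :=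
    (((hη.contDiff.continuous_deriv (by simp)).continuousOn.smul hw).add
      (hη.contDiff.continuous.continuousOn.smul hFc)).intervalIntegrable_of_Icc hT
  apply Complex.ext
  · rw [← Complex.reCLM_apply, ← Complex.reCLM.intervalIntegral_comp_comm hint]
    refine (intervalIntegral.integral_congr fun t ht => ?_).trans (hu.integral_re_eq_zero hT hη k)
    simp [hFeq ht, mul_add]
  · rw [← Complex.imCLM_apply, ← Complex.imCLM.intervalIntegral_comp_comm hint]
    refine (intervalIntegral.integral_congr fun t ht => ?_).trans (hu.integral_im_eq_zero hT hη k)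
    simp [hFeq ht, mul_add]

end IsSolutionH

end Equation

section InitialRegularity

open Filter Topology

theorem ContInHs.exists_eventually_decayBound {s : ℕ} {A : Set ℝ} {u : ℝ → ℝ → ℝ}
    (hc : ContInHs s A u) (hm : ∀ t ∈ A, MemHs s (u t)) {t₀ : ℝ} (ht₀ : t₀ ∈ A) :
    ∃ B, ∀ᶠ t in 𝓝[A] t₀, DecayBound s B (fc (u t)) := by
  obtain ⟨δ, hδ, h⟩ := hc t₀ ht₀ 1 one_pos
  refine ⟨2 ^ s * 1 + 2 ^ s * hsNorm s (u t₀), ?_⟩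
  filter_upwards [self_mem_nhdsWithin, mem_nhdsWithin_of_mem_nhds (Metric.ball_mem_nhds t₀ hδ)]
    with t ht htδ k
  have hdiff : (1 + |(k : ℝ)|) ^ s * ‖fc (u t) k - fc (u t₀) k‖ ≤ 2 ^ s * 1 := by
    rw [← fc_sub (hm t ht).1 (hm t₀ ht₀).1]
    exact (((hm t ht).sub (hm t₀ ht₀)).decayBound k).trans
      (by gcongr; exact (h t ht (by rwa [← Real.dist_eq])).le)
  calc (1 + |(k : ℝ)|) ^ s * ‖fc (u t) k‖
      ≤ (1 + |(k : ℝ)|) ^ s * (‖fc (u t) k - fc (u t₀) k‖ + ‖fc (u t₀) k‖) := by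
        gcongr
        exact norm_le_norm_sub_add _ _
    _ ≤ 2 ^ s * 1 + 2 ^ s * hsNorm s (u t₀) := by
        rw [mul_add]
        exact add_le_add hdiff ((hm t₀ ht₀).decayBound k)

theorem exists_eventually_forall_dist_lt_le_neg {X Y : Type*} [TopologicalSpace Y]
    [PseudoMetricSpace X] {F : X → ℝ} {V : Y → X} {S : Set Y} {y₀ : Y} (hF : ContinuousAt F (V y₀))
    (hV : ContinuousWithinAt V S y₀) (hneg : F (V y₀) < 0) :
    ∃ ε > 0, ∃ c > 0, ∀ᶠ y in 𝓝[S] y₀, ∀ x, dist x (V y) < ε → F x ≤ -c := by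
  obtain ⟨c, hc, hc₀⟩ := exists_between hneg
  obtain ⟨ε, hε, hball⟩ := Metric.eventually_nhds_iff.mp (hF.eventually_lt continuousAt_const hc)
  refine ⟨ε / 2, half_pos hε, -c, neg_pos.mpr hc₀, ?_⟩
  filter_upwards [hV (Metric.ball_mem_nhds _ (half_pos hε))] with y hy x hx
  have hyd : dist (V y) (V y₀) < ε / 2 := hy
  rw [neg_neg]
  exact (hball (by linarith [dist_triangle x (V y) (V y₀)])).le

variable {jj j0 s : ℕ} {γ : ℕ → ℝ} {lam : Fin j0 → ℝ} {a b c d : Fin j0 → ℕ} {T : ℝ}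
  {u : ℝ → ℝ → ℝ}

namespace IsSolutionH

theorem exists_flow (hu : IsSolutionH jj γ j0 lam a b c d 0 T u) (hT : 0 < T) (hs : 5 ≤ s)
    (hm : ∀ t ∈ Set.Icc 0 T, MemHs s (u t)) (hc : ContInHs s (Set.Icc 0 T) u)
    (hP : PN j0 lam a b c d (u 0) < 0) :
    ∃ τ > 0, Flow (fun k => (dispersionRelation jj γ).eval (k : ℝ)) (nonlinearity lam a b c d)
      (fun t => fc (u t)) (fun t => jet (u t)) τ ∧
      ∃ B, ∀ t ∈ Set.Icc 0 τ, DecayBound s B (fc (u t)) := by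
  have h0 : (0 : ℝ) ∈ Set.Icc 0 T := ⟨le_rfl, hT.le⟩
  have hj := continuousOn_jet hs (fun t => hu.contDiff) hm hc
  obtain ⟨B, hB⟩ := hc.exists_eventually_decayBound hm h0
  obtain ⟨ε, hε, c₀, hc₀, hpar⟩ := exists_eventually_forall_dist_lt_le_neg
    (Complex.continuous_re.comp (continuous_coef_aeval 0 (MvPolynomial.pderiv 2
      (nonlinearity lam a b c d)))).continuousAt (hj 0 h0)
    ((re_coef_zero_pderiv_two_nonlinearity (hu.contDiff h0) (hu.periodic h0)).trans_lt hP)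
  have hev := eventually_mem_nhdsWithin.and (hB.and hpar)
  rw [nhdsWithin_Icc_eq_nhdsGE hT] at hev
  obtain ⟨τ, hτ, hI⟩ := mem_nhdsGE_iff_exists_Icc_subset.mp hev
  have hIT : Set.Icc 0 τ ⊆ Set.Icc 0 T := fun t ht => (hI ht).1
  have hτT : τ ≤ T := (hIT ⟨hτ.le, le_rfl⟩).2
  exact ⟨τ, hτ,
    { coef_eq := fun t ht => coef_jet (hu.contDiff (hIT ht)) (hu.periodic (hIT ht))
      star_eq := fun t _ l => star_toCircle _
      continuousOn := fun k => (hu.continuousOn_fc hj k).mono hIT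
      hasDerivAt := fun t ht => hu.hasDerivAt_fc hj ⟨ht.1, ht.2.trans_le hτT⟩
      parabolic := ⟨ε, hε, c₀, hc₀, fun t ht v hv => (hI ht).2.2 v
        ((dist_pi_lt_iff hε).mpr fun l => (dist_eq_norm _ _).trans_lt (hv l))⟩ },
    B, fun t ht => (hI ht).2.1⟩

theorem exists_decayBound_initial (hu : IsSolutionH jj γ j0 lam a b c d 0 T u) (hT : 0 < T)
    (hjj : 3 ≤ jj) (hγ : γ 0 ≠ 0) (hs : 9 ≤ s) (hm : ∀ t ∈ Set.Icc 0 T, MemHs s (u t))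
    (hc : ContInHs s (Set.Icc 0 T) u) (hP : PN j0 lam a b c d (u 0) < 0) (r : ℕ) :
    ∃ B, DecayBound r B (fc (u 0)) := by
  obtain ⟨τ, hτ, hflow, A, hA⟩ := hu.exists_flow hT (by omega) hm hc hP
  obtain ⟨B, hB⟩ := hflow.exists_decayBound_add (by omega : 6 ≤ 2 * jj)
    (dispersive_eval (natDegree_dispersionRelation hγ)) hs hA hτ r
  exact ⟨B, (hB 0 (Set.left_mem_Icc.mpr le_rfl)).of_le (Nat.le_add_left r s)⟩

end IsSolutionH

end InitialRegularity

section Smoothness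

theorem iteratedDeriv_const_mul_cexp_mul_ofReal (z c : ℂ) (n : ℕ) :
    iteratedDeriv n (fun x : ℝ => z * Complex.exp (c * x)) =
      fun x : ℝ => c ^ n * (z * Complex.exp (c * x)) := by
  induction n with
  | zero => simp
  | succ n ih =>
    rw [iteratedDeriv_succ, ih]
    funext x
    rw [(((hasDerivAt_cexp_mul_ofReal c x).const_mul z).const_mul (c ^ n)).deriv]
    ring

theorem contDiff_tsum_mul_cexp {w : ℤ → ℂ} (hw : ∀ n, ∃ A, DecayBound n A w) :
    ContDiff ℝ (⊤ : ℕ∞) fun x : ℝ => ∑' k : ℤ, w k * Complex.exp (Complex.I * k * x) := by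
  have hsum (n : ℕ) : Summable fun k : ℤ => ‖(k : ℂ) ^ n * w k‖ := by
    obtain ⟨A, hA⟩ := hw (2 + n)
    refine DecayBound.summable_norm (A := A) fun k => le_trans ?_ (hA k)
    rw [norm_mul, norm_pow, Complex.norm_intCast, pow_add, mul_assoc]
    gcongr
    exact le_add_of_nonneg_left zero_le_one
  refine contDiff_tsum (N := ⊤) (v := fun n (k : ℤ) => ‖(k : ℂ) ^ n * w k‖)
    (fun k => contDiff_const.mul
      (Complex.contDiff_exp.comp (contDiff_const.mul Complex.ofRealCLM.contDiff)))
    (fun n _ => hsum n) fun n k x _ => le_of_eq ?_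
  have hphase : Complex.I * k * x = ((k * x : ℝ) : ℂ) * Complex.I := by push_cast; ring
  rw [norm_iteratedFDeriv_eq_norm_iteratedDeriv, iteratedDeriv_const_mul_cexp_mul_ofReal]
  beta_reduce
  rw [hphase, ← mul_assoc, norm_mul, Complex.norm_exp_ofReal_mul_I, mul_one, mul_pow, mul_assoc,
    norm_mul, norm_pow, Complex.norm_I, one_pow, one_mul]

variable {f : ℝ → ℝ}

theorem hasSum_fc_mul_cexp (hf : Continuous f) (hp : Function.Periodic f (2 * Real.pi))
    (hs : Summable fun k => ‖fc f k‖) (x : ℝ) :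
    HasSum (fun k : ℤ => fc f k * Complex.exp (Complex.I * k * x)) (f x) := by
  have h := has_pointwise_sum_fourier_series_of_summable (f := toCircle f)
    (Summable.of_norm (by simpa only [← coef_apply, coef_toCircle hf hp] using hs)) x
  simpa only [← coef_apply, coef_toCircle hf hp, fourier_two_pi_coe, smul_eq_mul,
    toCircle_coe hf hp] using h

theorem contDiff_of_decayBound (hf : Continuous f) (hp : Function.Periodic f (2 * Real.pi))
    (h : ∀ n, ∃ A, DecayBound n A (fc f)) : ContDiff ℝ (⊤ : ℕ∞) f := by
  obtain ⟨A, hA⟩ := h 2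
  have hseries : f = fun x : ℝ => (∑' k : ℤ, fc f k * Complex.exp (Complex.I * k * x)).re := by
    funext x
    rw [(hasSum_fc_mul_cexp hf hp hA.summable_norm x).tsum_eq, Complex.ofReal_re]
  rw [hseries]
  exact Complex.reCLM.contDiff.comp (contDiff_tsum_mul_cexp h)

end Smoothness

theorem nonexistence_parabolic_higher_order_general
    (jj : ℕ) (hjj : 3 ≤ jj) (γ : ℕ → ℝ) (hγ0 : γ 0 ≠ 0) (s : ℕ) (hs : 9 ≤ s)
    (j0 : ℕ) (lam : Fin j0 → ℝ) (a b c d : Fin j0 → ℕ)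
    (φ : ℝ → ℝ) (hφns : ¬ ContDiff ℝ (⊤ : ℕ∞) φ) (hPNφ : PN j0 lam a b c d φ < 0) :
    ∀ T : ℝ, 0 < T →
      ¬ ∃ u : ℝ → ℝ → ℝ,
          u 0 = φ ∧
          IsSolutionH jj γ j0 lam a b c d 0 T u ∧
          (∀ t ∈ Set.Icc (0:ℝ) T, MemHs s (u t)) ∧
          ContInHs s (Set.Icc (0:ℝ) T) u := by
  rintro T hT ⟨u, rfl, hu, hm, hc⟩
  have h0 : MemHs s (u 0) := hm 0 (Set.left_mem_Icc.mpr hT.le)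
  exact hφns (contDiff_of_decayBound h0.1 h0.2.1
    (hu.exists_decayBound_initial hT hjj hγ0 hs hm hc hPNφ))

/-- **Non-existence for parabolic resonance type, `(2j+1)`-st order equations.**
Let `j ≥ 3`, `γ₀,…,γ_j ∈ ℝ` with `γ₀ ≠ 0`. If `φ ∈ H^{13}(𝕋)` is real-valued, not `C^∞`,
and `P_N(φ) < 0`, then for every `T > 0` there is no solution `u ∈ C([0,T];H^{13}(𝕋))`
of the `(2j+1)`-st order equation with `u(0) = φ`. -/
theorem nonexistence_parabolic_higher_order
    (jj : ℕ) (hjj : 3 ≤ jj) (γ : ℕ → ℝ) (hγ0 : γ 0 ≠ 0)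
    (j0 : ℕ) (lam : Fin j0 → ℝ) (a b c d : Fin j0 → ℕ)
    (hp : ∀ j : Fin j0, 2 ≤ a j + b j + c j + d j)
    (φ : ℝ → ℝ) (hφ : MemHs 13 φ)
    (hφns : ¬ ContDiff ℝ (⊤ : ℕ∞) φ)
    (hPNφ : PN j0 lam a b c d φ < 0) :
    ∀ T : ℝ, 0 < T →
      ¬ ∃ u : ℝ → ℝ → ℝ,
          u 0 = φ ∧
          IsSolutionH jj γ j0 lam a b c d 0 T u ∧
          (∀ t ∈ Set.Icc (0:ℝ) T, MemHs 13 (u t)) ∧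
          ContInHs 13 (Set.Icc (0:ℝ) T) u := by
  exact nonexistence_parabolic_higher_order_general jj hjj γ hγ0 13 (by norm_num) j0 lam a b c d φ
    hφns hPNφ

end FifthOrderStmt5
end

section
/- (Gagliardo–Nirenberg inequality for periodic functions.) Let l, m be integers with 0 ≤ l ≤ m−1 and m ≥ 1, let 2 ≤ p ≤ ∞, and set α := (l + 1/2 − 1/p)/m (with the convention 1/p = 0 when p = ∞). Then there exists a constant C > 0, depending only on l, m, p, such that for every m-times continuously differentiable function f : 𝕋 → ℂ: if 1 ≤ l ≤ m−1 then ‖∂_x^l f‖_{L^p} ≤ C ‖f‖_{L²}^{1−α} ‖∂_x^m f‖_{L²}^{α}, and if l = 0 then ‖f‖_{L^p} ≤ C (‖f‖_{L²}^{1−α} ‖∂_x^m f‖_{L²}^{α} + ‖f‖_{L²}). -/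
/- Gagliardo–Nirenberg inequality for 2π-periodic functions. -/

namespace FifthOrderStmt9

/-- `L^p` norm on the circle with respect to the normalized measure `dx/2π`
(`sup` norm for `p = ∞`). -/
noncomputable def lpNorm (p : ENNReal) (f : ℝ → ℂ) : ℝ :=
  if p = ⊤ then ⨆ x : ℝ, ‖f x‖
  else ((2 * Real.pi)⁻¹ * ∫ x in (0:ℝ)..(2 * Real.pi), ‖f x‖ ^ p.toReal) ^ (1 / p.toReal)

/-
Give `𝕋` the normalized measure. Integrating by parts over a period,
`‖g'‖₂² = -∫ ⟪g, g''⟫ ≤ ‖g‖₂ ‖g''‖₂`, so `k ↦ ‖f⁽ᵏ⁾‖₂` is log-convex and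
`‖f⁽ᵏ⁾‖₂ ≤ ‖f‖₂ ^ (1 - k/m) ‖f⁽ᵐ⁾‖₂ ^ (k/m)` for `k ≤ m`. Comparing `‖g x‖²` with its mean gives
Agmon's inequality `‖g‖_∞² ≤ ‖g‖₂ (‖g‖₂ + c ‖g'‖₂)`; if `g` is the derivative of a periodic
function, the first summand is absorbed by the Poincaré inequality `‖g‖₂ ≤ c ‖g'‖₂`. Interpolating
`L^p` between `L²` and `L^∞` then bounds `‖f⁽ˡ⁾‖_p` by a multiple of
`‖f⁽ˡ⁾‖₂ ^ (1/2 + 1/p) ‖f⁽ˡ⁺¹⁾‖₂ ^ (1/2 - 1/p)`, plus `‖f‖₂` if `l = 0`, and log-convexity turns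
this product into `‖f‖₂ ^ (1 - α) ‖f⁽ᵐ⁾‖₂ ^ α`.
-/

open MeasureTheory ProbabilityTheory Set
open scoped ENNReal

section LogConvex

variable {R : Type*} [CommSemiring R] [LinearOrder R] [IsStrictOrderedRing R]

lemma pow_succ_le_mul_pow_of_sq_le_mul {A : ℕ → R} (hA : ∀ k, 0 ≤ A k) {m : ℕ}
    (h : ∀ k, k + 2 ≤ m → A (k + 1) ^ 2 ≤ A k * A (k + 2)) {k : ℕ} (hk : k + 1 ≤ m) :
    A k ^ (k + 1) ≤ A 0 * A (k + 1) ^ k := by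
  induction k with
  | zero => simp
  | succ k ih =>
    rcases (hA (k + 1)).eq_or_lt with hz | hpos
    · rw [← hz, zero_pow (by lia)]
      exact mul_nonneg (hA _) (pow_nonneg (hA _) _)
    · refine le_of_mul_le_mul_right ?_ (pow_pos hpos k)
      calc A (k + 1) ^ (k + 1 + 1) * A (k + 1) ^ k = (A (k + 1) ^ 2) ^ (k + 1) := by ring
        _ ≤ (A k * A (k + 2)) ^ (k + 1) := pow_le_pow_left₀ (pow_nonneg (hA _) _) (h k hk) _
        _ = A k ^ (k + 1) * A (k + 2) ^ (k + 1) := by ring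
        _ ≤ (A 0 * A (k + 1) ^ k) * A (k + 2) ^ (k + 1) :=
          mul_le_mul_of_nonneg_right (ih (by lia)) (pow_nonneg (hA _) _)
        _ = A 0 * A (k + 1 + 1) ^ (k + 1) * A (k + 1) ^ k := by ring

lemma pow_add_le_pow_mul_pow_of_sq_le_mul {A : ℕ → R} (hA : ∀ k, 0 ≤ A k) {m : ℕ}
    (h : ∀ k, k + 2 ≤ m → A (k + 1) ^ 2 ≤ A k * A (k + 2)) (k : ℕ) {d : ℕ} (hkd : k + d ≤ m) :
    A k ^ (k + d) ≤ A 0 ^ d * A (k + d) ^ k := by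
  induction d with
  | zero => simp
  | succ d ih =>
    rcases Nat.eq_zero_or_pos (k + d) with hz | hpos
    · obtain ⟨rfl, rfl⟩ : k = 0 ∧ d = 0 := by lia
      simp
    have hA₀ := hA 0
    have hA₁ := hA (k + d)
    have hA₂ := hA (k + d + 1)
    have hA₃ := hA k
    refine le_of_pow_le_pow_left₀ hpos.ne' (by positivity) ?_
    calc (A k ^ (k + (d + 1))) ^ (k + d) = (A k ^ (k + d)) ^ (k + d + 1) := by ring
      _ ≤ (A 0 ^ d * A (k + d) ^ k) ^ (k + d + 1) := by gcongr; exact ih (by lia)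
      _ = (A 0 ^ d) ^ (k + d + 1) * (A (k + d) ^ (k + d + 1)) ^ k := by ring
      _ ≤ (A 0 ^ d) ^ (k + d + 1) * (A 0 * A (k + d + 1) ^ (k + d)) ^ k := by
        gcongr
        exact pow_succ_le_mul_pow_of_sq_le_mul hA h (by lia)
      _ = (A 0 ^ (d + 1) * A (k + (d + 1)) ^ k) ^ (k + d) := by rw [← add_assoc]; ring

lemma le_rpow_mul_rpow_of_sq_le_mul {A : ℕ → ℝ} (hA : ∀ k, 0 ≤ A k) {m : ℕ} (hm : m ≠ 0)
    (h : ∀ k, k + 2 ≤ m → A (k + 1) ^ 2 ≤ A k * A (k + 2)) {k : ℕ} (hk : k ≤ m) :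
    A k ≤ A 0 ^ (1 - (k : ℝ) / m) * A m ^ ((k : ℝ) / m) := by
  obtain ⟨d, rfl⟩ := Nat.exists_eq_add_of_le hk
  have hkd : ((k + d : ℕ) : ℝ) ≠ 0 := by exact_mod_cast hm
  have hA₀ := hA 0
  have hA₁ := hA (k + d)
  refine le_of_pow_le_pow_left₀ hm (by positivity) ?_
  calc A k ^ (k + d) ≤ A 0 ^ d * A (k + d) ^ k := pow_add_le_pow_mul_pow_of_sq_le_mul hA h k le_rfl
    _ = (A 0 ^ (1 - (k : ℝ) / (k + d : ℕ)) * A (k + d) ^ ((k : ℝ) / (k + d : ℕ))) ^ (k + d) := by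
      rw [mul_pow, ← Real.rpow_mul_natCast hA₀, ← Real.rpow_mul_natCast hA₁, sub_mul,
        div_mul_cancel₀ _ hkd, one_mul, Real.rpow_natCast,
        show ((k + d : ℕ) : ℝ) - k = d by push_cast; ring, Real.rpow_natCast]

end LogConvex

section LpNorm

variable {α E F : Type*} {mα : MeasurableSpace α} {μ : Measure α}
  [NormedAddCommGroup E] [NormedAddCommGroup F]

lemma lpNorm_two_sq_eq_integral {f : α → E} (hf : AEStronglyMeasurable f μ) :
    MeasureTheory.lpNorm f 2 μ ^ 2 = ∫ x, ‖f x‖ ^ 2 ∂μ := by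
  rw [lpNorm_eq_integral_norm_rpow_toReal two_ne_zero ENNReal.ofNat_ne_top hf,
    ENNReal.toReal_ofNat, ← Real.rpow_mul_natCast (integral_nonneg fun _ ↦ by positivity)]
  simp

lemma lpNorm_top_le_of_ae_bound {f : α → E} {M : ℝ} (hM : 0 ≤ M) (h : ∀ᵐ x ∂μ, ‖f x‖ ≤ M) :
    MeasureTheory.lpNorm f ∞ μ ≤ M := by
  by_cases hf : AEStronglyMeasurable f μ
  · rw [← toReal_eLpNorm hf]
    exact ENNReal.toReal_le_of_le_ofReal hM (eLpNormEssSup_le_of_ae_bound h)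
  · rwa [lpNorm_of_not_aestronglyMeasurable hf]

lemma lpNorm_mono_exponent [IsProbabilityMeasure μ] {f : α → E} {p q : ℝ≥0∞} (hpq : p ≤ q)
    (hf : MemLp f q μ) : MeasureTheory.lpNorm f p μ ≤ MeasureTheory.lpNorm f q μ := by
  rw [← toReal_eLpNorm hf.aestronglyMeasurable, ← toReal_eLpNorm hf.aestronglyMeasurable]
  exact ENNReal.toReal_mono hf.eLpNorm_ne_top
    (eLpNorm_le_eLpNorm_of_exponent_le hpq hf.aestronglyMeasurable)

lemma integral_norm_mul_norm_le_lpNorm_mul_lpNorm {p q : ℝ≥0∞} [p.HolderConjugate q]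
    {f : α → E} {g : α → F} (hf : MemLp f p μ) (hg : MemLp g q μ) :
    ∫ x, ‖f x‖ * ‖g x‖ ∂μ ≤ MeasureTheory.lpNorm f p μ * MeasureTheory.lpNorm g q μ := by
  have hfg : MemLp (fun x ↦ ‖f x‖ * ‖g x‖) 1 μ := hg.norm.mul' hf.norm
  calc ∫ x, ‖f x‖ * ‖g x‖ ∂μ = (eLpNorm (fun x ↦ ‖f x‖ * ‖g x‖) 1 μ).toReal := by
        rw [toReal_eLpNorm hfg.aestronglyMeasurable,
          lpNorm_one_eq_integral_norm hfg.aestronglyMeasurable]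
        simp
    _ ≤ (eLpNorm f p μ * eLpNorm g q μ).toReal := by
      refine ENNReal.toReal_mono (ENNReal.mul_ne_top hf.eLpNorm_ne_top hg.eLpNorm_ne_top) ?_
      simpa using! eLpNorm_smul_le_mul_eLpNorm (r := 1) hg.norm.aestronglyMeasurable
        hf.norm.aestronglyMeasurable
    _ = MeasureTheory.lpNorm f p μ * MeasureTheory.lpNorm g q μ := by
      rw [ENNReal.toReal_mul, toReal_eLpNorm hf.aestronglyMeasurable,
        toReal_eLpNorm hg.aestronglyMeasurable]

lemma eLpNorm_le_eLpNorm_top_rpow_mul_eLpNorm_rpow {f : α → E} (hf : AEStronglyMeasurable f μ)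
    {p q : ℝ≥0∞} (hq : q ≠ 0) (hq' : q ≠ ∞) (hqp : q ≤ p) :
    eLpNorm f p μ ≤ eLpNorm f ∞ μ ^ (1 - (q / p).toReal) * eLpNorm f q μ ^ (q / p).toReal := by
  rcases eq_or_ne p ∞ with rfl | hp'
  · simp
  have hp : p ≠ 0 := (hq.bot_lt.trans_le hqp).ne'
  have hp₀ : 0 < p.toReal := ENNReal.toReal_pos hp hp'
  have hq₀ : 0 < q.toReal := ENNReal.toReal_pos hq hq'
  have hqp₀ : 0 ≤ p.toReal - q.toReal := sub_nonneg.2 (ENNReal.toReal_mono hp' hqp)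
  set M := eLpNorm f ∞ μ with hM
  have hint : ∫⁻ x, ‖f x‖ₑ ^ p.toReal ∂μ
      ≤ M ^ (p.toReal - q.toReal) * ∫⁻ x, ‖f x‖ₑ ^ q.toReal ∂μ := by
    rw [← lintegral_const_mul'' _ (hf.enorm.pow_const _)]
    refine lintegral_mono_ae ((enorm_ae_le_eLpNormEssSup f μ).mono fun x hx ↦ ?_)
    calc ‖f x‖ₑ ^ p.toReal = ‖f x‖ₑ ^ (p.toReal - q.toReal) * ‖f x‖ₑ ^ q.toReal := by
          rw [← ENNReal.rpow_add_of_nonneg _ _ hqp₀ hq₀.le, sub_add_cancel]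
      _ ≤ M ^ (p.toReal - q.toReal) * ‖f x‖ₑ ^ q.toReal := by
        gcongr
        simpa [hM] using hx
  rw [eLpNorm_eq_lintegral_rpow_enorm_toReal hp hp', eLpNorm_eq_lintegral_rpow_enorm_toReal hq hq']
  calc (∫⁻ x, ‖f x‖ₑ ^ p.toReal ∂μ) ^ (1 / p.toReal)
      ≤ (M ^ (p.toReal - q.toReal) * ∫⁻ x, ‖f x‖ₑ ^ q.toReal ∂μ) ^ (1 / p.toReal) := by gcongr
    _ = _ := by
      rw [ENNReal.mul_rpow_of_nonneg _ _ (by positivity), ← ENNReal.rpow_mul, ← ENNReal.rpow_mul,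
        ENNReal.toReal_div]
      congr 2 <;> field_simp

lemma lpNorm_le_lpNorm_top_rpow_mul_lpNorm_rpow {f : α → E} {p q : ℝ≥0∞} (hq : q ≠ 0)
    (hq' : q ≠ ∞) (hqp : q ≤ p) (hf : MemLp f ∞ μ) (hfq : MemLp f q μ) :
    MeasureTheory.lpNorm f p μ ≤ MeasureTheory.lpNorm f ∞ μ ^ (1 - (q / p).toReal)
      * MeasureTheory.lpNorm f q μ ^ (q / p).toReal := by
  have hθ : (q / p).toReal ≤ 1 :=
    ENNReal.toReal_mono ENNReal.one_ne_top (ENNReal.div_le_of_le_mul (by simpa))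
  simp only [← toReal_eLpNorm hf.aestronglyMeasurable, ENNReal.toReal_rpow, ← ENNReal.toReal_mul]
  refine ENNReal.toReal_mono (ENNReal.mul_ne_top ?_ ?_)
    (eLpNorm_le_eLpNorm_top_rpow_mul_eLpNorm_rpow hf.aestronglyMeasurable hq hq' hqp)
  · exact ENNReal.rpow_ne_top_of_nonneg (sub_nonneg.2 hθ) hf.eLpNorm_ne_top
  · exact ENNReal.rpow_ne_top_of_nonneg ENNReal.toReal_nonneg hfq.eLpNorm_ne_top

end LpNorm

lemma toReal_inv_le_half {p : ℝ≥0∞} (hp : 2 ≤ p) : (p⁻¹).toReal ≤ 1 / 2 := by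
  simpa using ENNReal.toReal_mono (by simp) (ENNReal.inv_le_inv.2 hp)

lemma rpow_le_max_one_self {K s : ℝ} (hK : 0 ≤ K) (hs : 0 ≤ s) (hs' : s ≤ 1) : K ^ s ≤ max 1 K :=
  (Real.rpow_le_rpow hK (le_max_right _ _) hs).trans
    (Real.rpow_le_self_of_one_le (le_max_left _ _) hs')

lemma rpow_mul_rpow_le_of_le_rpow_mul_rpow {A B X Y u v s t : ℝ} (hA : 0 ≤ A) (hB : 0 ≤ B)
    (hX : 0 ≤ X) (hY : 0 ≤ Y) (hu : 0 ≤ u) (hu' : u ≤ 1) (hv : 0 ≤ v) (hv' : v ≤ 1)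
    (hs : 0 ≤ s) (ht : 0 ≤ t) (hst : s + t = 1)
    (hAXY : A ≤ X ^ (1 - u) * Y ^ u) (hBXY : B ≤ X ^ (1 - v) * Y ^ v) :
    A ^ s * B ^ t ≤ X ^ (1 - (s * u + t * v)) * Y ^ (s * u + t * v) := by
  calc A ^ s * B ^ t ≤ (X ^ (1 - u) * Y ^ u) ^ s * (X ^ (1 - v) * Y ^ v) ^ t := by gcongr
    _ = X ^ (s * (1 - u)) * X ^ (t * (1 - v)) * (Y ^ (s * u) * Y ^ (t * v)) := by
      simp only [Real.mul_rpow (Real.rpow_nonneg hX _) (Real.rpow_nonneg hY _),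
        ← Real.rpow_mul hX, ← Real.rpow_mul hY, mul_comm _ s, mul_comm _ t]
      ring
    _ = X ^ (1 - (s * u + t * v)) * Y ^ (s * u + t * v) := by
      rw [← Real.rpow_add_of_nonneg hX (mul_nonneg hs (sub_nonneg.2 hu'))
          (mul_nonneg ht (sub_nonneg.2 hv')),
        ← Real.rpow_add_of_nonneg hY (by positivity) (by positivity)]
      congr 2
      linear_combination hst

lemma eq_of_periodic_sub {α β : Type*} [AddCommGroup α] {f : α → β} {a b : α}
    (hf : Function.Periodic f (b - a)) : f a = f b := by
  simpa using (hf a).symm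

section IteratedDeriv

variable {𝕜 E : Type*} [NontriviallyNormedField 𝕜] [NormedAddCommGroup E] [NormedSpace 𝕜 E]
  {f : 𝕜 → E}

lemma periodic_iteratedDeriv {c : 𝕜} (hf : Function.Periodic f c) (n : ℕ) :
    Function.Periodic (iteratedDeriv n f) c := fun x ↦ by
  rw [← congrFun (iteratedDeriv_comp_add_const n f c) x, hf.funext]

lemma contDiff_iteratedDeriv {k m n : ℕ} (hkm : k + n ≤ m) (hf : ContDiff 𝕜 m f) :
    ContDiff 𝕜 n (iteratedDeriv k f) := by
  rw [iteratedDeriv_eq_iterate]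
  exact (hf.of_le (by rw [add_comm] at hkm; exact_mod_cast hkm)).iterate_deriv' n k

end IteratedDeriv

section Interval

variable {a b : ℝ}

/-- The `L^p` norm on `(a, b]` with respect to the normalized measure `dx / (b - a)`, which is
Lebesgue measure conditioned on `(a, b]`. -/
local notation "‖" f "‖_[" p "]" => MeasureTheory.lpNorm f p volume[|Ioc a b]

section NormedSpace

variable {E : Type*} [NormedAddCommGroup E]

lemma isProbabilityMeasure_cond_Ioc (hab : a < b) : IsProbabilityMeasure volume[|Ioc a b] :=
  cond_isProbabilityMeasure_of_finite (by simpa) (by simp)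

lemma integral_cond_Ioc [NormedSpace ℝ E] (hab : a ≤ b) (f : ℝ → E) :
    ∫ x, f x ∂volume[|Ioc a b] = (b - a)⁻¹ • ∫ x in a..b, f x := by
  rw [ProbabilityTheory.cond, integral_smul_measure, Real.volume_Ioc,
    intervalIntegral.integral_of_le hab, ENNReal.toReal_inv,
    ENNReal.toReal_ofReal (sub_nonneg.2 hab)]

lemma memLp_cond_Ioc_of_continuous {f : ℝ → E} (hf : Continuous f) (p : ℝ≥0∞) :
    MemLp f p volume[|Ioc a b] := by
  obtain ⟨C, hC⟩ := isCompact_Icc.exists_bound_of_continuousOn (hf.continuousOn (s := Icc a b))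
  exact .of_bound hf.aestronglyMeasurable C
    (ae_cond_of_forall_mem measurableSet_Ioc fun x hx ↦ hC x (Ioc_subset_Icc_self hx))

lemma integrable_cond_Ioc_of_continuous {f : ℝ → E} (hf : Continuous f) :
    Integrable f volume[|Ioc a b] :=
  memLp_one_iff_integrable.1 (memLp_cond_Ioc_of_continuous hf 1)

lemma norm_le_lpNorm_top_cond_Ioc {f : ℝ → E} (hf : Continuous f) {x : ℝ} (hx : x ∈ Ioc a b) :
    ‖f x‖ ≤ ‖f‖_[∞] := by
  have hae : ∀ᵐ y ∂volume.restrict (Ioc a b), ‖f y‖ ≤ ‖f‖_[∞] :=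
    (Measure.ae_ennreal_smul_measure_iff (by simp)).1
      (ae_le_lpNorm_exponent_top (memLp_cond_Ioc_of_continuous hf ∞))
  -- A continuous function almost everywhere equal to a constant equals it everywhere.
  have hmax : EqOn (fun y ↦ max ‖f y‖ ‖f‖_[∞]) (fun _ ↦ ‖f‖_[∞]) (Ioc a b) :=
    Measure.eqOn_Ioc_of_ae_eq _ (hae.mono fun y hy ↦ max_eq_right hy) (by fun_prop) (by fun_prop)
  exact max_eq_right_iff.1 (hmax hx)

variable [NormedSpace ℝ E]

lemma norm_sub_le_mul_lpNorm_one_deriv {f : ℝ → E} (hf : ContDiff ℝ 1 f) {x y : ℝ}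
    (hx : x ∈ Icc a b) (hy : y ∈ Icc a b) : ‖f x - f y‖ ≤ (b - a) * ‖deriv f‖_[1] := by
  wlog hyx : y ≤ x generalizing x y
  · rw [norm_sub_rev]
    exact this hy hx (le_of_not_ge hyx)
  have hf' : Continuous (deriv f) := hf.continuous_deriv_one
  have hab : a ≤ b := hx.1.trans hx.2
  rcases hab.eq_or_lt with rfl | hlt
  · simp [le_antisymm hx.2 hx.1, le_antisymm hy.2 hy.1]
  calc ‖f x - f y‖ ≤ ∫ t in y..x, ‖deriv f t‖ :=
        norm_sub_le_integral_of_norm_deriv_le_of_le hyx hf.continuous.continuousOn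
          (hf.differentiable one_ne_zero).differentiableOn (.of_forall fun _ _ ↦ le_rfl)
          (hf'.norm.intervalIntegrable _ _)
    _ ≤ ∫ t in a..b, ‖deriv f t‖ :=
      intervalIntegral.integral_mono_interval hy.1 hyx hx.2 (.of_forall fun _ ↦ norm_nonneg _)
        (hf'.norm.intervalIntegrable _ _)
    _ = (b - a) * ‖deriv f‖_[1] := by
      rw [lpNorm_one_eq_integral_norm hf'.aestronglyMeasurable, integral_cond_Ioc hab, smul_eq_mul,
        mul_inv_cancel_left₀ (sub_pos.2 hlt).ne']

lemma lpNorm_sub_const_le_mul_lpNorm_one_deriv (hab : a < b) {f : ℝ → E} (hf : ContDiff ℝ 1 f)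
    {c : ℝ} (hc : c ∈ Icc a b) (p : ℝ≥0∞) :
    ‖fun x ↦ f x - f c‖_[p] ≤ (b - a) * ‖deriv f‖_[1] := by
  have := isProbabilityMeasure_cond_Ioc hab
  have hcont : Continuous fun x ↦ f x - f c := hf.continuous.sub continuous_const
  calc ‖fun x ↦ f x - f c‖_[p] ≤ ‖fun x ↦ f x - f c‖_[∞] :=
        lpNorm_mono_exponent le_top (memLp_cond_Ioc_of_continuous hcont ∞)
    _ ≤ (b - a) * ‖deriv f‖_[1] :=
      lpNorm_top_le_of_ae_bound (mul_nonneg (sub_nonneg.2 hab.le) lpNorm_nonneg) <|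
        ae_cond_of_forall_mem measurableSet_Ioc fun x hx ↦
          norm_sub_le_mul_lpNorm_one_deriv hf (Ioc_subset_Icc_self hx) hc

lemma norm_le_lpNorm_one_add_mul_lpNorm_one_deriv {f : ℝ → E} (hab : a < b)
    (hf : ContDiff ℝ 1 f) {x : ℝ} (hx : x ∈ Icc a b) :
    ‖f x‖ ≤ ‖f‖_[1] + (b - a) * ‖deriv f‖_[1] := by
  have := isProbabilityMeasure_cond_Ioc hab
  have hint : Integrable (fun y ↦ ‖f y‖) volume[|Ioc a b] :=
    integrable_cond_Ioc_of_continuous hf.continuous.norm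
  calc ‖f x‖ = ∫ _y, ‖f x‖ ∂volume[|Ioc a b] := by simp
    _ ≤ ∫ y, (‖f y‖ + (b - a) * ‖deriv f‖_[1]) ∂volume[|Ioc a b] := by
      refine integral_mono_ae (integrable_const _) (hint.add (integrable_const _))
        (ae_cond_of_forall_mem measurableSet_Ioc fun y hy ↦ ?_)
      beta_reduce
      grw [norm_le_norm_add_norm_sub (f y) (f x), norm_sub_rev,
        norm_sub_le_mul_lpNorm_one_deriv hf hx (Ioc_subset_Icc_self hy)]
    _ = ‖f‖_[1] + (b - a) * ‖deriv f‖_[1] := by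
      rw [integral_add hint (integrable_const _), integral_const, probReal_univ, one_smul,
        lpNorm_one_eq_integral_norm hf.continuous.aestronglyMeasurable]

end NormedSpace

section InnerProductSpace

variable {E : Type*} [NormedAddCommGroup E] [InnerProductSpace ℝ E] {g : ℝ → E}

lemma lpNorm_one_deriv_norm_sq_le (hg : ContDiff ℝ 1 g) :
    ‖deriv fun x ↦ ‖g x‖ ^ 2‖_[1] ≤ 2 * (‖g‖_[2] * ‖deriv g‖_[2]) := by
  have hg' : Continuous (deriv g) := hg.continuous_deriv_one
  have hderiv : (deriv fun x ↦ ‖g x‖ ^ 2) = fun x ↦ 2 * inner ℝ (g x) (deriv g x) :=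
    funext fun x ↦ (hg.differentiable one_ne_zero x).hasDerivAt.norm_sq.deriv
  have hcont : Continuous fun x ↦ 2 * inner ℝ (g x) (deriv g x) := by fun_prop
  rw [hderiv, lpNorm_one_eq_integral_norm hcont.aestronglyMeasurable]
  calc ∫ x, ‖2 * inner ℝ (g x) (deriv g x)‖ ∂volume[|Ioc a b]
      ≤ ∫ x, 2 * (‖g x‖ * ‖deriv g x‖) ∂volume[|Ioc a b] := by
        refine integral_mono (integrable_cond_Ioc_of_continuous hcont.norm)
          (integrable_cond_Ioc_of_continuous (by fun_prop)) fun x ↦ ?_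
        rw [norm_mul, Real.norm_two]
        gcongr
        exact abs_real_inner_le_norm _ _
    _ ≤ 2 * (‖g‖_[2] * ‖deriv g‖_[2]) := by
      rw [integral_const_mul]
      gcongr
      exact integral_norm_mul_norm_le_lpNorm_mul_lpNorm
        (memLp_cond_Ioc_of_continuous hg.continuous 2) (memLp_cond_Ioc_of_continuous hg' 2)

lemma sq_lpNorm_top_le_mul_add_deriv (hab : a < b) (hg : ContDiff ℝ 1 g) :
    ‖g‖_[∞] ^ 2 ≤ ‖g‖_[2] * (‖g‖_[2] + 2 * (b - a) * ‖deriv g‖_[2]) := by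
  have hcont : Continuous fun x ↦ ‖g x‖ ^ 2 := hg.continuous.norm.pow 2
  have hsq : ‖fun x ↦ ‖g x‖ ^ 2‖_[1] = ‖g‖_[2] ^ 2 := by
    rw [lpNorm_two_sq_eq_integral hg.continuous.aestronglyMeasurable,
      lpNorm_one_eq_integral_norm hcont.aestronglyMeasurable]
    simp
  have hpt : ∀ x ∈ Ioc a b,
      ‖g x‖ ^ 2 ≤ ‖g‖_[2] * (‖g‖_[2] + 2 * (b - a) * ‖deriv g‖_[2]) := fun x hx ↦ by
    calc ‖g x‖ ^ 2 = ‖‖g x‖ ^ 2‖ := by simp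
      _ ≤ ‖fun x ↦ ‖g x‖ ^ 2‖_[1] + (b - a) * ‖deriv fun x ↦ ‖g x‖ ^ 2‖_[1] :=
        norm_le_lpNorm_one_add_mul_lpNorm_one_deriv hab (hg.norm_sq ℝ) (Ioc_subset_Icc_self hx)
      _ ≤ ‖g‖_[2] ^ 2 + (b - a) * (2 * (‖g‖_[2] * ‖deriv g‖_[2])) := by
        rw [hsq]
        exact add_le_add_right
          (mul_le_mul_of_nonneg_left (lpNorm_one_deriv_norm_sq_le hg) (sub_nonneg.2 hab.le)) _
      _ = ‖g‖_[2] * (‖g‖_[2] + 2 * (b - a) * ‖deriv g‖_[2]) := by ring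
  have hsqrt : ‖g‖_[∞] ≤ √(‖g‖_[2] * (‖g‖_[2] + 2 * (b - a) * ‖deriv g‖_[2])) :=
    lpNorm_top_le_of_ae_bound (Real.sqrt_nonneg _) <|
      ae_cond_of_forall_mem measurableSet_Ioc fun x hx ↦ Real.le_sqrt_of_sq_le (hpt x hx)
  calc ‖g‖_[∞] ^ 2 ≤ √(‖g‖_[2] * (‖g‖_[2] + 2 * (b - a) * ‖deriv g‖_[2])) ^ 2 :=
        pow_le_pow_left₀ lpNorm_nonneg hsqrt 2
    _ = ‖g‖_[2] * (‖g‖_[2] + 2 * (b - a) * ‖deriv g‖_[2]) := Real.sq_sqrt <|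
      mul_nonneg lpNorm_nonneg (add_nonneg lpNorm_nonneg <|
        mul_nonneg (mul_nonneg zero_le_two (sub_nonneg.2 hab.le)) lpNorm_nonneg)

lemma sq_lpNorm_two_deriv_le (hab : a ≤ b) (hg : ContDiff ℝ 2 g)
    (hbd : inner ℝ (g a) (deriv g a) = inner ℝ (g b) (deriv g b)) :
    ‖deriv g‖_[2] ^ 2 ≤ ‖g‖_[2] * ‖deriv (deriv g)‖_[2] := by
  have hg' : ContDiff ℝ 1 (deriv g) := hg.deriv' (n := 1)
  have hg'' : Continuous (deriv (deriv g)) := hg'.continuous_deriv_one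
  have hcg : Continuous g := hg.continuous
  have hcg' : Continuous (deriv g) := hg'.continuous
  have hparts : ∫ x, inner ℝ (g x) (deriv (deriv g) x) ∂volume[|Ioc a b]
      + ∫ x, ‖deriv g x‖ ^ 2 ∂volume[|Ioc a b] = 0 := by
    have hderiv (x : ℝ) : HasDerivAt (fun y ↦ inner ℝ (g y) (deriv g y))
        (inner ℝ (g x) (deriv (deriv g) x) + ‖deriv g x‖ ^ 2) x := by
      simpa using (hg.differentiable two_ne_zero x).hasDerivAt.inner ℝ
        (hg'.differentiable one_ne_zero x).hasDerivAt
    rw [← integral_add (integrable_cond_Ioc_of_continuous (by fun_prop))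
      (integrable_cond_Ioc_of_continuous (by fun_prop)), integral_cond_Ioc hab,
      intervalIntegral.integral_eq_sub_of_hasDerivAt (fun x _ ↦ hderiv x)
        (Continuous.intervalIntegrable (by fun_prop) _ _), hbd, sub_self, smul_zero]
  calc ‖deriv g‖_[2] ^ 2 = -∫ x, inner ℝ (g x) (deriv (deriv g) x) ∂volume[|Ioc a b] := by
        rw [lpNorm_two_sq_eq_integral hcg'.aestronglyMeasurable]
        exact eq_neg_of_add_eq_zero_right hparts
    _ ≤ ∫ x, ‖g x‖ * ‖deriv (deriv g) x‖ ∂volume[|Ioc a b] := by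
      rw [← integral_neg]
      exact integral_mono (integrable_cond_Ioc_of_continuous (by fun_prop))
        (integrable_cond_Ioc_of_continuous (by fun_prop)) fun x ↦
          (neg_le_abs _).trans (abs_real_inner_le_norm _ _)
    _ ≤ ‖g‖_[2] * ‖deriv (deriv g)‖_[2] :=
      integral_norm_mul_norm_le_lpNorm_mul_lpNorm (memLp_cond_Ioc_of_continuous hcg 2)
        (memLp_cond_Ioc_of_continuous hg'' 2)

lemma lpNorm_two_deriv_le_mul_deriv_deriv (hab : a < b) (hg : ContDiff ℝ 2 g)
    (hend : g a = g b) : ‖deriv g‖_[2] ≤ (b - a) * ‖deriv (deriv g)‖_[2] := by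
  have := isProbabilityMeasure_cond_Ioc hab
  have hba : 0 ≤ b - a := sub_nonneg.2 hab.le
  have hcg' : Continuous (deriv g) := hg.continuous_deriv one_le_two
  -- Subtracting `g a` changes no derivative and makes the boundary terms vanish.
  set h : ℝ → E := fun x ↦ g x - g a with hh
  have hch : ContDiff ℝ 2 h := hg.sub contDiff_const
  have hderiv : deriv h = deriv g := by simp [hh]
  have hsq : ‖deriv g‖_[2] ^ 2 ≤ ‖h‖_[2] * ‖deriv (deriv g)‖_[2] := by
    simpa only [hderiv] using sq_lpNorm_two_deriv_le hab.le hch (by simp [hh, hend])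
  have hosc : ‖h‖_[2] ≤ (b - a) * ‖deriv g‖_[2] :=
    calc ‖h‖_[2] ≤ (b - a) * ‖deriv g‖_[1] :=
          lpNorm_sub_const_le_mul_lpNorm_one_deriv hab (hg.of_le one_le_two)
            (left_mem_Icc.2 hab.le) 2
      _ ≤ (b - a) * ‖deriv g‖_[2] := by
        gcongr
        exact lpNorm_mono_exponent one_le_two (memLp_cond_Ioc_of_continuous hcg' 2)
  rcases (lpNorm_nonneg : 0 ≤ ‖deriv g‖_[2]).eq_or_lt with hzero | hpos
  · exact hzero ▸ mul_nonneg hba lpNorm_nonneg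
  · refine le_of_mul_le_mul_right ?_ hpos
    calc ‖deriv g‖_[2] * ‖deriv g‖_[2] = ‖deriv g‖_[2] ^ 2 := (sq _).symm
      _ ≤ ‖h‖_[2] * ‖deriv (deriv g)‖_[2] := hsq
      _ ≤ (b - a) * ‖deriv g‖_[2] * ‖deriv (deriv g)‖_[2] :=
        mul_le_mul_of_nonneg_right hosc lpNorm_nonneg
      _ = (b - a) * ‖deriv (deriv g)‖_[2] * ‖deriv g‖_[2] := by ring

lemma lpNorm_le_rpow_mul_add_deriv_rpow (hab : a < b) (hg : ContDiff ℝ 1 g) {p : ℝ≥0∞}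
    (hp : 2 ≤ p) :
    ‖g‖_[p] ≤ ‖g‖_[2] ^ (1 / 2 + (p⁻¹).toReal)
      * (‖g‖_[2] + 2 * (b - a) * ‖deriv g‖_[2]) ^ (1 / 2 - (p⁻¹).toReal) := by
  have ht : (2 / p).toReal = 2 * (p⁻¹).toReal := by simp [div_eq_mul_inv]
  have ht' : (p⁻¹).toReal ≤ 1 / 2 := toReal_inv_le_half hp
  set t := (p⁻¹).toReal
  have ht₀ : 0 ≤ t := ENNReal.toReal_nonneg
  have hN : 0 ≤ ‖g‖_[2] + 2 * (b - a) * ‖deriv g‖_[2] :=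
    add_nonneg lpNorm_nonneg <|
      mul_nonneg (mul_nonneg zero_le_two (sub_nonneg.2 hab.le)) lpNorm_nonneg
  calc ‖g‖_[p] ≤ ‖g‖_[∞] ^ (1 - 2 * t) * ‖g‖_[2] ^ (2 * t) := by
        simpa only [ht] using lpNorm_le_lpNorm_top_rpow_mul_lpNorm_rpow two_ne_zero
          ENNReal.ofNat_ne_top hp (memLp_cond_Ioc_of_continuous hg.continuous ∞)
          (memLp_cond_Ioc_of_continuous hg.continuous 2)
    _ = (‖g‖_[∞] ^ 2) ^ (1 / 2 - t) * ‖g‖_[2] ^ (2 * t) := by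
      rw [← Real.rpow_natCast_mul lpNorm_nonneg]
      ring_nf
    _ ≤ (‖g‖_[2] * (‖g‖_[2] + 2 * (b - a) * ‖deriv g‖_[2])) ^ (1 / 2 - t) * ‖g‖_[2] ^ (2 * t) := by
      gcongr
      · exact Real.rpow_nonneg lpNorm_nonneg _
      · exact sq_lpNorm_top_le_mul_add_deriv hab hg
    _ = _ := by
      rw [Real.mul_rpow lpNorm_nonneg hN, mul_right_comm,
        ← Real.rpow_add_of_nonneg lpNorm_nonneg (by linarith) (mul_nonneg zero_le_two ht₀)]
      ring_nf

lemma lpNorm_le_add_mul_rpow_mul_deriv_rpow (hab : a < b) (hg : ContDiff ℝ 1 g) {p : ℝ≥0∞}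
    (hp : 2 ≤ p) :
    ‖g‖_[p] ≤ ‖g‖_[2] + max 1 (2 * (b - a))
      * (‖g‖_[2] ^ (1 / 2 + (p⁻¹).toReal) * ‖deriv g‖_[2] ^ (1 / 2 - (p⁻¹).toReal)) := by
  have hba : 0 ≤ 2 * (b - a) := mul_nonneg zero_le_two (sub_nonneg.2 hab.le)
  have ht₀ : 0 ≤ (p⁻¹).toReal := ENNReal.toReal_nonneg
  have ht : (p⁻¹).toReal ≤ 1 / 2 := toReal_inv_le_half hp
  set t := (p⁻¹).toReal
  calc ‖g‖_[p] ≤ ‖g‖_[2] ^ (1 / 2 + t) * (‖g‖_[2] + 2 * (b - a) * ‖deriv g‖_[2]) ^ (1 / 2 - t) :=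
        lpNorm_le_rpow_mul_add_deriv_rpow hab hg hp
    _ ≤ ‖g‖_[2] ^ (1 / 2 + t)
        * (‖g‖_[2] ^ (1 / 2 - t) + (2 * (b - a) * ‖deriv g‖_[2]) ^ (1 / 2 - t)) :=
      mul_le_mul_of_nonneg_left (Real.rpow_add_le_add_rpow lpNorm_nonneg
        (mul_nonneg hba lpNorm_nonneg) (by linarith) (by linarith))
        (Real.rpow_nonneg lpNorm_nonneg _)
    _ = ‖g‖_[2] + (2 * (b - a)) ^ (1 / 2 - t)
        * (‖g‖_[2] ^ (1 / 2 + t) * ‖deriv g‖_[2] ^ (1 / 2 - t)) := by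
      rw [mul_add, ← Real.rpow_add_of_nonneg lpNorm_nonneg (by linarith) (by linarith),
        Real.mul_rpow hba lpNorm_nonneg, show 1 / 2 + t + (1 / 2 - t) = 1 by ring, Real.rpow_one]
      ring
    _ ≤ _ := by
      gcongr
      · exact mul_nonneg (Real.rpow_nonneg lpNorm_nonneg _) (Real.rpow_nonneg lpNorm_nonneg _)
      · exact rpow_le_max_one_self hba (by linarith) (by linarith)

lemma lpNorm_deriv_le_mul_rpow_mul_deriv_rpow (hab : a < b) (hg : ContDiff ℝ 2 g) (hend : g a = g b)
    {p : ℝ≥0∞} (hp : 2 ≤ p) :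
    ‖deriv g‖_[p] ≤ max 1 (3 * (b - a))
      * (‖deriv g‖_[2] ^ (1 / 2 + (p⁻¹).toReal)
        * ‖deriv (deriv g)‖_[2] ^ (1 / 2 - (p⁻¹).toReal)) := by
  have hba : 0 ≤ b - a := sub_nonneg.2 hab.le
  have ht₀ : 0 ≤ (p⁻¹).toReal := ENNReal.toReal_nonneg
  have ht : (p⁻¹).toReal ≤ 1 / 2 := toReal_inv_le_half hp
  set t := (p⁻¹).toReal
  calc ‖deriv g‖_[p] ≤ ‖deriv g‖_[2] ^ (1 / 2 + t)
        * (‖deriv g‖_[2] + 2 * (b - a) * ‖deriv (deriv g)‖_[2]) ^ (1 / 2 - t) :=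
        lpNorm_le_rpow_mul_add_deriv_rpow hab (hg.deriv' (n := 1)) hp
    _ ≤ ‖deriv g‖_[2] ^ (1 / 2 + t) * (3 * (b - a) * ‖deriv (deriv g)‖_[2]) ^ (1 / 2 - t) := by
      gcongr
      · exact Real.rpow_nonneg lpNorm_nonneg _
      · exact add_nonneg lpNorm_nonneg (mul_nonneg (mul_nonneg zero_le_two hba) lpNorm_nonneg)
      · linarith [lpNorm_two_deriv_le_mul_deriv_deriv hab hg hend]
    _ = (3 * (b - a)) ^ (1 / 2 - t)
        * (‖deriv g‖_[2] ^ (1 / 2 + t) * ‖deriv (deriv g)‖_[2] ^ (1 / 2 - t)) := by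
      rw [Real.mul_rpow (by positivity) lpNorm_nonneg]
      ring
    _ ≤ _ := by
      gcongr
      · exact mul_nonneg (Real.rpow_nonneg lpNorm_nonneg _) (Real.rpow_nonneg lpNorm_nonneg _)
      · exact rpow_le_max_one_self (by positivity) (by linarith) (by linarith)

lemma lpNorm_two_iteratedDeriv_le (hab : a ≤ b) {f : ℝ → E} (hper : Function.Periodic f (b - a))
    {m : ℕ} (hm : m ≠ 0) (hf : ContDiff ℝ m f) {k : ℕ} (hk : k ≤ m) :
    ‖iteratedDeriv k f‖_[2]
      ≤ ‖f‖_[2] ^ (1 - (k : ℝ) / m) * ‖iteratedDeriv m f‖_[2] ^ ((k : ℝ) / m) := by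
  refine le_rpow_mul_rpow_of_sq_le_mul (A := fun j ↦ ‖iteratedDeriv j f‖_[2])
    (fun _ ↦ lpNorm_nonneg) hm (fun j hj ↦ ?_) hk
  have hends (i : ℕ) : iteratedDeriv i f a = iteratedDeriv i f b :=
    eq_of_periodic_sub (periodic_iteratedDeriv hper i)
  simp only [iteratedDeriv_succ]
  refine sq_lpNorm_two_deriv_le hab (contDiff_iteratedDeriv (by exact_mod_cast hj) hf) ?_
  rw [← iteratedDeriv_succ, hends, hends]

lemma lpNorm_two_iteratedDeriv_rpow_mul_rpow_le (hab : a ≤ b) {f : ℝ → E}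
    (hper : Function.Periodic f (b - a)) {l m : ℕ} (hlm : l < m) (hf : ContDiff ℝ m f) {t : ℝ}
    (ht₀ : 0 ≤ t) (ht : t ≤ 1 / 2) :
    ‖iteratedDeriv l f‖_[2] ^ (1 / 2 + t) * ‖iteratedDeriv (l + 1) f‖_[2] ^ (1 / 2 - t)
      ≤ ‖f‖_[2] ^ (1 - ((l : ℝ) + 1 / 2 - t) / m)
        * ‖iteratedDeriv m f‖_[2] ^ (((l : ℝ) + 1 / 2 - t) / m) := by
  have hm : m ≠ 0 := by lia
  have hα : (1 / 2 + t) * ((l : ℝ) / m) + (1 / 2 - t) * (((l + 1 : ℕ) : ℝ) / m)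
      = ((l : ℝ) + 1 / 2 - t) / m := by
    push_cast
    ring
  rw [← hα]
  exact rpow_mul_rpow_le_of_le_rpow_mul_rpow lpNorm_nonneg lpNorm_nonneg lpNorm_nonneg
    lpNorm_nonneg (by positivity) (div_le_one_of_le₀ (by exact_mod_cast hlm.le) (by positivity))
    (by positivity) (div_le_one_of_le₀ (by exact_mod_cast hlm) (by positivity))
    (by linarith) (by linarith) (by ring)
    (lpNorm_two_iteratedDeriv_le hab hper hm hf hlm.le)
    (lpNorm_two_iteratedDeriv_le hab hper hm hf hlm)

theorem gagliardo_nirenberg_periodic_general (hab : a < b) {l m : ℕ} (hlm : l < m) {p : ℝ≥0∞}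
    (hp : 2 ≤ p) {f : ℝ → E} (hper : Function.Periodic f (b - a)) (hf : ContDiff ℝ m f) :
    (1 ≤ l → ‖iteratedDeriv l f‖_[p]
        ≤ max 1 (3 * (b - a)) * ‖f‖_[2] ^ (1 - ((l : ℝ) + 1 / 2 - (p⁻¹).toReal) / m)
          * ‖iteratedDeriv m f‖_[2] ^ (((l : ℝ) + 1 / 2 - (p⁻¹).toReal) / m)) ∧
    (l = 0 → ‖f‖_[p]
        ≤ max 1 (3 * (b - a)) * (‖f‖_[2] ^ (1 - ((l : ℝ) + 1 / 2 - (p⁻¹).toReal) / m)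
          * ‖iteratedDeriv m f‖_[2] ^ (((l : ℝ) + 1 / 2 - (p⁻¹).toReal) / m) + ‖f‖_[2])) := by
  have hinterp := lpNorm_two_iteratedDeriv_rpow_mul_rpow_le hab.le hper hlm hf
    ENNReal.toReal_nonneg (toReal_inv_le_half hp)
  refine ⟨fun hl ↦ ?_, ?_⟩
  · obtain ⟨k, rfl⟩ := Nat.exists_eq_add_of_le' hl
    rw [mul_assoc]
    grw [← hinterp]
    simpa only [iteratedDeriv_succ] using lpNorm_deriv_le_mul_rpow_mul_deriv_rpow hab
      (contDiff_iteratedDeriv hlm hf) (eq_of_periodic_sub (periodic_iteratedDeriv hper k)) hp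
  · rintro rfl
    rw [iteratedDeriv_zero, zero_add, iteratedDeriv_one] at hinterp
    rw [mul_add, add_comm]
    refine (lpNorm_le_add_mul_rpow_mul_deriv_rpow hab (hf.of_le (by exact_mod_cast hlm)) hp).trans
      (add_le_add (le_mul_of_one_le_left lpNorm_nonneg (le_max_left _ _)) ?_)
    exact mul_le_mul (max_le_max_left 1 (by linarith)) hinterp
      (mul_nonneg (Real.rpow_nonneg lpNorm_nonneg _) (Real.rpow_nonneg lpNorm_nonneg _))
      (by positivity)

end InnerProductSpace

end Interval

lemma lpNorm_eq_lpNorm_cond_Ioc {p : ℝ≥0∞} (hp : p ≠ 0) {f : ℝ → ℂ} (hf : Continuous f)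
    (hper : Function.Periodic f (2 * Real.pi)) :
    lpNorm p f = MeasureTheory.lpNorm f p volume[|Ioc 0 (2 * Real.pi)] := by
  unfold lpNorm
  split_ifs with hp'
  · obtain ⟨M, hM⟩ := (hper.isBounded_of_continuous Real.two_pi_pos.ne' hf).exists_norm_le
    have hbdd : BddAbove (range fun x ↦ ‖f x‖) := ⟨M, by simpa [mem_upperBounds] using hM⟩
    rw [hp']
    refine le_antisymm (ciSup_le fun x ↦ ?_) ?_
    · obtain ⟨y, hy, hxy⟩ := hper.exists_mem_Ioc Real.two_pi_pos x 0
      exact hxy ▸ norm_le_lpNorm_top_cond_Ioc hf (by simpa using hy)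
    · exact lpNorm_top_le_of_ae_bound (Real.iSup_nonneg fun x ↦ norm_nonneg _)
        (.of_forall fun x ↦ le_ciSup hbdd x)
  · rw [lpNorm_eq_integral_norm_rpow_toReal hp hp' hf.aestronglyMeasurable,
      integral_cond_Ioc Real.two_pi_pos.le, sub_zero, smul_eq_mul, one_div]

/-- **Gagliardo–Nirenberg inequality for periodic functions.** Let `0 ≤ l ≤ m-1`, `m ≥ 1`,
`2 ≤ p ≤ ∞`, and `α = (l + 1/2 − 1/p)/m`. There is `C > 0` (depending only on `l, m, p`)
such that for every `2π`-periodic `C^m` function `f : ℝ → ℂ`: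
if `1 ≤ l` then `‖∂_x^l f‖_{L^p} ≤ C ‖f‖_{L²}^{1-α} ‖∂_x^m f‖_{L²}^α`, and if `l = 0` then
`‖f‖_{L^p} ≤ C (‖f‖_{L²}^{1-α} ‖∂_x^m f‖_{L²}^α + ‖f‖_{L²})`. -/
theorem gagliardo_nirenberg_periodic (l m : ℕ) (hm : 1 ≤ m) (hl : l ≤ m - 1)
    (p : ENNReal) (hp : 2 ≤ p) :
    ∃ C : ℝ, 0 < C ∧ ∀ f : ℝ → ℂ,
      Function.Periodic f (2 * Real.pi) → ContDiff ℝ (m : ℕ∞) f →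
      ((1 ≤ l →
        lpNorm p (iteratedDeriv l f)
          ≤ C * lpNorm 2 f ^ (1 - ((l : ℝ) + 1/2 - (p⁻¹).toReal) / (m : ℝ))
              * lpNorm 2 (iteratedDeriv m f) ^ (((l : ℝ) + 1/2 - (p⁻¹).toReal) / (m : ℝ))) ∧
       (l = 0 →
        lpNorm p f
          ≤ C * (lpNorm 2 f ^ (1 - ((l : ℝ) + 1/2 - (p⁻¹).toReal) / (m : ℝ))
              * lpNorm 2 (iteratedDeriv m f) ^ (((l : ℝ) + 1/2 - (p⁻¹).toReal) / (m : ℝ))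
              + lpNorm 2 f))) := by
  refine ⟨max 1 (3 * (2 * Real.pi - 0)), by positivity, fun f hper hf ↦ ?_⟩
  have hlm : l < m := by lia
  have hp₀ : p ≠ 0 := (two_pos.trans_le hp).ne'
  have hcont {k : ℕ} (hk : k ≤ m) : Continuous (iteratedDeriv k f) :=
    hf.continuous_iteratedDeriv k (by exact_mod_cast hk)
  rw [lpNorm_eq_lpNorm_cond_Ioc hp₀ (hcont hlm.le) (periodic_iteratedDeriv hper l),
    lpNorm_eq_lpNorm_cond_Ioc two_ne_zero (hcont le_rfl) (periodic_iteratedDeriv hper m),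
    lpNorm_eq_lpNorm_cond_Ioc hp₀ hf.continuous hper,
    lpNorm_eq_lpNorm_cond_Ioc two_ne_zero hf.continuous hper]
  exact gagliardo_nirenberg_periodic_general Real.two_pi_pos hlm hp (by rwa [sub_zero]) hf

end FifthOrderStmt9
end
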